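/- arXiv:math/0109115 — 3 statements merged into one kernel-verified Lean document; each statement's English description precedes it below -/
import Mathlib

section
/- Under Assumptions A1–A5 on the random dynamical system Φ with binding maps ψ_{x,y}, there exist constants γ > 0 and C > 0 such that for every pair (x,y) ∈ X × X and every integer n > 0, the n-step transition probabilities satisfy ‖Pⁿ_x − Pⁿ_y‖_L ≤ C (1 + V(x) + V(y)) e^{−γ n}, where ‖·‖_L is the dual Lipschitz norm. -/
open MeasureTheory
open scoped ENNReal NNReal

noncomputable section

/-- Trajectory of the random dynamical system `Φ` started at `x` and driven by `ω`. -/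
def traj {X Ω : Type*} (Φ : X × Ω → X) (x : X) (ω : ℕ → Ω) : ℕ → X
  | 0 => x
  | n + 1 => Φ (traj Φ x ω n, ω n)

/-- Coupled pair of trajectories given by the binding construction: the second
trajectory is driven by the noise modified by the binding maps `ψ`. -/
def traj2 {X Ω : Type*} (Φ : X × Ω → X) (ψ : X → X → Ω → Ω) (x y : X) (ω : ℕ → Ω) :
    ℕ → X × X
  | 0 => (x, y)
  | n + 1 =>
    (Φ ((traj2 Φ ψ x y ω n).1, ω n),
     Φ ((traj2 Φ ψ x y ω n).2, ψ (traj2 Φ ψ x y ω n).1 (traj2 Φ ψ x y ω n).2 (ω n)))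

/-- The map `Ξ^∞_{x,y}` transporting the binding maps along the coupled trajectories. -/
def XiInf {X Ω : Type*} (Φ : X × Ω → X) (ψ : X → X → Ω → Ω) (x y : X) (ω : ℕ → Ω) :
    ℕ → Ω :=
  fun n => ψ (traj2 Φ ψ x y ω n).1 (traj2 Φ ψ x y ω n).2 (ω n)

/-- Extension of a finite noise word to an infinite one (by junk). -/
def extSeq {Ω : Type*} [Nonempty Ω] {n : ℕ} (f : Fin n → Ω) : ℕ → Ω :=
  fun m => if h : m < n then f ⟨m, h⟩ else Classical.arbitrary Ω

/-- The finite-level map `Ξⁿ_{x,y} : Ωⁿ → Ωⁿ`. -/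
def XiFin {X Ω : Type*} [Nonempty Ω] (Φ : X × Ω → X) (ψ : X → X → Ω → Ω) (n : ℕ)
    (x y : X) (f : Fin n → Ω) : Fin n → Ω :=
  fun i => XiInf Φ ψ x y (extSeq f) i

/-- The density `Dⁿ_{x,y}` of `(Ξⁿ_{x,y})_*Pⁿ` with respect to `Pⁿ`. -/
def Dfin {X Ω : Type*} [Nonempty Ω] [MeasurableSpace Ω] (P : Measure Ω)
    (Φ : X × Ω → X) (ψ : X → X → Ω → Ω) (n : ℕ) (x y : X) : (Fin n → Ω) → ℝ≥0∞ :=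
  ((Measure.pi fun _ : Fin n => P).map (XiFin Φ ψ n x y)).rnDeriv
    (Measure.pi fun _ : Fin n => P)

/-- The (sub-probability) measure `Q^∞_{x,y}` on pairs of paths: the image of
`P^∞ ⊓ (Ξ^∞_{x,y})_*P^∞` under the coupled-trajectory map. -/
def QInf {X Ω : Type*} [MeasurableSpace X] [MeasurableSpace Ω]
    (Pinf : Measure (ℕ → Ω)) (Φ : X × Ω → X) (ψ : X → X → Ω → Ω) (x y : X) :
    Measure ((ℕ → X) × (ℕ → X)) :=
  (Pinf ⊓ Pinf.map (fun ω => XiInf Φ ψ x y ω)).map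
    (fun ω => (fun n => (traj2 Φ ψ x y ω n).1, fun n => (traj2 Φ ψ x y ω n).2))

/-- The (sub-probability) measure `Qⁿ_{x,y}` on `Xⁿ × Xⁿ`: the image of
`Pⁿ ⊓ (Ξⁿ_{x,y})_*Pⁿ` under `(ω₀,…,ω_{n−1}) ↦ ((x₁,…,xₙ),(y₁,…,yₙ))`. -/
def QFin {X Ω : Type*} [MeasurableSpace X] [MeasurableSpace Ω] [Nonempty Ω]
    (P : Measure Ω) (Φ : X × Ω → X) (ψ : X → X → Ω → Ω) (n : ℕ) (x y : X) :
    Measure ((Fin n → X) × (Fin n → X)) :=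
  ((Measure.pi fun _ : Fin n => P) ⊓
      (Measure.pi fun _ : Fin n => P).map (XiFin Φ ψ n x y)).map
    (fun f => (fun i : Fin n => (traj2 Φ ψ x y (extSeq f) ((i : ℕ) + 1)).1,
               fun i : Fin n => (traj2 Φ ψ x y (extSeq f) ((i : ℕ) + 1)).2))

/-- The sets `Qⁿ_K(x₀,y₀)` of possible endpoints of coupled trajectories of length `n`
along which the coupled Lyapunov function stays below `K`. -/
def QSetIter {X Ω : Type*} (Φ : X × Ω → X) (ψ : X → X → Ω → Ω) (W : X → Ω → ℝ≥0∞)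
    (K : ℝ≥0∞) (x₀ y₀ : X) : ℕ → Set (X × X)
  | 0 => {(x₀, y₀)}
  | n + 1 =>
    ⋃ p ∈ QSetIter Φ ψ W K x₀ y₀ n,
      {q | ∃ ω : Ω, W p.1 ω + W p.2 (ψ p.1 p.2 ω) ≤ K ∧
        q = (Φ (p.1, ω), Φ (p.2, ψ p.1 p.2 ω))}

/-!
The chains started at `x` and `y` are coupled step by step. One step is coupled along the graph of
the binding map `ψ x y`: the largest submeasure of `P` which both `id` and `ψ x y` push below `P`
fails to be a probability measure only by an amount controlled by the density of `(ψ x y)_* P`. By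
A5 this amount is exponentially small in `i` once `i` coupled steps of moderate cost have been
made, so that such good pairs stay coupled forever with overwhelming probability, and then A3
brings the `n`-step means of test functions together. By A4 a block of `N` steps started in a
sublevel set of the Lyapunov function `V` produces a good pair with probability at least `p > 0`,
and by A1 the chains keep returning to such a sublevel set.

To combine these facts, the oscillation of the `n`-step means is measured in the distance
`1 + β (√(V x) + √(V y))`. Outside a sublevel set the drift of `√V` makes this weight decrease;
inside, the coupled block decreases it provided that `β` is small. The square root leaves room for
the factor `V`, at which the coupling failures of A5 are charged: by Cauchy-Schwarz a failure of
probability `O(V h⁴ⁱ)` costs only `O(V h²ⁱ)` in `√V`-weighted mass.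
-/

open ProbabilityTheory

/-! ### Noise sequences -/

section Noise

variable {Ω : Type*} [MeasurableSpace Ω]

/-- The law `P^∞` of a sequence of independent noise variables with common law `P`. -/
abbrev noiseLaw (P : Measure Ω) [IsProbabilityMeasure P] : Measure (ℕ → Ω) :=
  Measure.infinitePi fun _ => P

/-- The noise sequence with first entry `w` and tail `ω`; conditioning on the first noise variable
turns statements about `n + 1` steps into statements about `n` steps. -/
def consSeq (w : Ω) (ω : ℕ → Ω) : ℕ → Ω
  | 0 => w
  | n + 1 => ω n

lemma measurable_consSeq : Measurable fun p : Ω × (ℕ → Ω) => consSeq p.1 p.2 := by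
  refine measurable_pi_lambda _ fun n => ?_
  cases n with
  | zero => exact measurable_fst
  | succ n => exact (measurable_pi_apply n).comp measurable_snd

variable (P : Measure Ω) [IsProbabilityMeasure P]

lemma map_consSeq_prod_noiseLaw :
    (P.prod (noiseLaw P)).map (fun p => consSeq p.1 p.2) = noiseLaw P := by
  classical
  refine Measure.eq_infinitePi _ fun s t ht => ?_
  set s' := s.preimage Nat.succ Nat.succ_injective.injOn
  have hbox : (fun p : Ω × (ℕ → Ω) => consSeq p.1 p.2) ⁻¹' Set.pi s t =
      (if 0 ∈ s then t 0 else Set.univ) ×ˢ Set.pi s' fun i => t (i + 1) := by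
    ext ⟨w, ω⟩
    simp only [Set.mem_preimage, Set.mem_pi, Finset.mem_coe, Set.mem_prod, Finset.mem_preimage, s']
    refine ⟨fun h => ⟨?_, fun i hi => h (i + 1) hi⟩, fun h i hi => ?_⟩
    · split_ifs with h0
      exacts [h 0 h0, trivial]
    · cases i with
      | zero => simpa [hi, consSeq] using h.1
      | succ i => exact h.2 i hi
  have hsucc : ∏ i ∈ s', P (t (i + 1)) = ∏ i ∈ s.erase 0, P (t i) := by
    refine Finset.prod_bij (fun i _ => i + 1) (fun i hi => ?_) (fun i _ j _ => Nat.succ.inj)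
      (fun i hi => ?_) fun _ _ => rfl
    · simpa [s'] using hi
    · obtain ⟨j, rfl⟩ := Nat.exists_eq_succ_of_ne_zero (Finset.ne_of_mem_erase hi)
      exact ⟨j, by simpa [s'] using hi, rfl⟩
  rw [Measure.map_apply measurable_consSeq (.pi s.countable_toSet fun i _ => ht i), hbox,
    Measure.prod_prod, Measure.infinitePi_pi _ fun i _ => ht _, hsucc]
  by_cases h0 : 0 ∈ s
  · rw [if_pos h0, Finset.mul_prod_erase s (fun i => P (t i)) h0]
  · rw [if_neg h0, Finset.erase_eq_of_notMem h0, measure_univ, one_mul]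

lemma lintegral_noiseLaw {F : (ℕ → Ω) → ℝ≥0∞} (hF : Measurable F) :
    ∫⁻ ω, F ω ∂noiseLaw P = ∫⁻ w, ∫⁻ ω, F (consSeq w ω) ∂noiseLaw P ∂P := by
  conv_lhs => rw [← map_consSeq_prod_noiseLaw]
  rw [lintegral_map hF measurable_consSeq,
    lintegral_prod (fun p : Ω × (ℕ → Ω) => F (consSeq p.1 p.2))
      (hF.comp measurable_consSeq).aemeasurable]

lemma map_finRestrict_noiseLaw (n : ℕ) :
    (noiseLaw P).map (fun ω : ℕ → Ω => fun i : Fin n => ω i) = Measure.pi fun _ : Fin n => P := by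
  rw [Measure.map_infinitePi_infinitePi_of_inj Fin.val_injective, Measure.infinitePi_eq_pi]

end Noise

/-! ### Trajectories -/

section Trajectories

variable {X Ω : Type*}

lemma traj_consSeq (Φ : X × Ω → X) (x : X) (w : Ω) (ω : ℕ → Ω) (n : ℕ) :
    traj Φ x (consSeq w ω) (n + 1) = traj Φ (Φ (x, w)) ω n := by
  induction n with
  | zero => rfl
  | succ n ih => rw [traj, ih]; rfl

lemma traj_congr (Φ : X × Ω → X) (x : X) {ω ω' : ℕ → Ω} (n : ℕ)
    (h : ∀ j < n, ω j = ω' j) : traj Φ x ω n = traj Φ x ω' n := by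
  induction n with
  | zero => rfl
  | succ n ih => rw [traj, traj, ih fun j hj => h j (by lia), h n n.lt_add_one]

lemma traj2_fst (Φ : X × Ω → X) (ψ : X → X → Ω → Ω) (x y : X) (ω : ℕ → Ω) (n : ℕ) :
    (traj2 Φ ψ x y ω n).1 = traj Φ x ω n := by
  induction n with
  | zero => rfl
  | succ n ih => rw [traj2, traj, ← ih]

lemma traj2_snd (Φ : X × Ω → X) (ψ : X → X → Ω → Ω) (x y : X) (ω : ℕ → Ω) (n : ℕ) :
    (traj2 Φ ψ x y ω n).2 = traj Φ y (XiInf Φ ψ x y ω) n := by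
  induction n with
  | zero => rfl
  | succ n ih => rw [traj2, traj, ← ih]; rfl

lemma traj2_consSeq (Φ : X × Ω → X) (ψ : X → X → Ω → Ω) (x y : X) (w : Ω) (ω : ℕ → Ω)
    (n : ℕ) : traj2 Φ ψ x y (consSeq w ω) (n + 1) =
      traj2 Φ ψ (Φ (x, w)) (Φ (y, ψ x y w)) ω n := by
  induction n with
  | zero => rfl
  | succ n ih => rw [traj2, ih]; rfl

lemma XiInf_consSeq (Φ : X × Ω → X) (ψ : X → X → Ω → Ω) (x y : X) (w : Ω) (ω : ℕ → Ω) :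
    XiInf Φ ψ x y (consSeq w ω) =
      consSeq (ψ x y w) (XiInf Φ ψ (Φ (x, w)) (Φ (y, ψ x y w)) ω) := by
  funext n
  cases n with
  | zero => rfl
  | succ n => simp only [XiInf, traj2_consSeq]; rfl

lemma extSeq_of_lt [Nonempty Ω] {n : ℕ} (f : Fin n → Ω) {j : ℕ} (hj : j < n) :
    extSeq f j = f ⟨j, hj⟩ := dif_pos hj

variable [MeasurableSpace X] [MeasurableSpace Ω]

lemma measurable_traj {Φ : X × Ω → X} (hΦ : Measurable Φ) (x : X) (n : ℕ) :
    Measurable fun ω : ℕ → Ω => traj Φ x ω n := by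
  induction n with
  | zero => exact measurable_const
  | succ n ih => exact hΦ.comp (ih.prodMk (measurable_pi_apply n))

lemma measurable_traj2 {Φ : X × Ω → X} (hΦ : Measurable Φ) {ψ : X → X → Ω → Ω}
    (hψ : Measurable fun p : (X × X) × Ω => ψ p.1.1 p.1.2 p.2) (x y : X) (n : ℕ) :
    Measurable fun ω : ℕ → Ω => traj2 Φ ψ x y ω n := by
  induction n with
  | zero => exact measurable_const
  | succ n ih =>
    exact (hΦ.comp (ih.fst.prodMk (measurable_pi_apply n))).prodMk
      (hΦ.comp (ih.snd.prodMk (hψ.comp (ih.prodMk (measurable_pi_apply n)))))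

lemma measurable_traj2_paths {Φ : X × Ω → X} (hΦ : Measurable Φ) {ψ : X → X → Ω → Ω}
    (hψ : Measurable fun p : (X × X) × Ω => ψ p.1.1 p.1.2 p.2) (x y : X) :
    Measurable fun ω : ℕ → Ω =>
      (fun n => (traj2 Φ ψ x y ω n).1, fun n => (traj2 Φ ψ x y ω n).2) :=
  (measurable_pi_lambda _ fun n => (measurable_traj2 hΦ hψ x y n).fst).prodMk
    (measurable_pi_lambda _ fun n => (measurable_traj2 hΦ hψ x y n).snd)

lemma measurable_XiInf {Φ : X × Ω → X} (hΦ : Measurable Φ) {ψ : X → X → Ω → Ω}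
    (hψ : Measurable fun p : (X × X) × Ω => ψ p.1.1 p.1.2 p.2) (x y : X) :
    Measurable fun ω : ℕ → Ω => XiInf Φ ψ x y ω :=
  measurable_pi_lambda _ fun n =>
    hψ.comp ((measurable_traj2 hΦ hψ x y n).prodMk (measurable_pi_apply n))

lemma measurable_extSeq [Nonempty Ω] (n : ℕ) : Measurable fun f : Fin n → Ω => extSeq f := by
  refine measurable_pi_lambda _ fun m => ?_
  by_cases h : m < n
  · simpa only [extSeq, h, dite_true] using measurable_pi_apply _
  · simpa only [extSeq, h, dite_false] using measurable_const

lemma measurable_XiFin [Nonempty Ω] {Φ : X × Ω → X} (hΦ : Measurable Φ) {ψ : X → X → Ω → Ω}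
    (hψ : Measurable fun p : (X × X) × Ω => ψ p.1.1 p.1.2 p.2) (n : ℕ) (x y : X) :
    Measurable (XiFin Φ ψ n x y) :=
  measurable_pi_lambda _ fun i =>
    (measurable_pi_apply (i : ℕ)).comp ((measurable_XiInf hΦ hψ x y).comp (measurable_extSeq n))

end Trajectories

/-! ### Powers of a Markov kernel -/

section KernelPowers

variable {X : Type*} [MeasurableSpace X]

lemma isMarkovKernel_pow (κ : Kernel X X) [IsMarkovKernel κ] (n : ℕ) :
    IsMarkovKernel (κ ^ n) := by
  induction n with
  | zero => exact inferInstanceAs (IsMarkovKernel Kernel.id)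
  | succ n ih => exact inferInstanceAs (IsMarkovKernel ((κ ^ n) ∘ₖ κ))

lemma pow_zero_apply (κ : Kernel X X) (x : X) : (κ ^ 0) x = Measure.dirac x := Kernel.id_apply x

/-- A Lyapunov (drift) inequality for the kernel `κ`. -/
def HasDrift (κ : Kernel X X) (V : X → ℝ≥0∞) (a b : ℝ≥0∞) : Prop :=
  ∀ x, ∫⁻ z, V z ∂κ x ≤ a * V x + b

/-- The expectation of `g` after `n` steps of `κ`, as a function of the starting point. -/
def iterMean (κ : Kernel X X) (g : X → ℝ) (n : ℕ) (x : X) : ℝ := ∫ z, g z ∂(κ ^ n) x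

section Markov

variable {κ : Kernel X X} [IsMarkovKernel κ] {g : X → ℝ}

lemma measurable_iterMean (hg : Measurable g) (n : ℕ) : Measurable (iterMean κ g n) :=
  have := isMarkovKernel_pow κ n
  (StronglyMeasurable.integral_kernel (κ := κ ^ n) hg.stronglyMeasurable).measurable

lemma abs_iterMean_le (hb : ∀ z, |g z| ≤ 1) (n : ℕ) (x : X) : |iterMean κ g n x| ≤ 1 := by
  have := isMarkovKernel_pow κ n
  simpa only [iterMean, probReal_univ, mul_one, Real.norm_eq_abs] using
    norm_integral_le_of_norm_le_const (μ := (κ ^ n) x) (f := g) (C := 1) (ae_of_all _ hb)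

lemma iterMean_add (hg : Measurable g) (hb : ∀ z, |g z| ≤ 1) (m n : ℕ) (x : X) :
    iterMean κ g (m + n) x = ∫ z, iterMean κ g n z ∂(κ ^ m) x := by
  have hm := isMarkovKernel_pow κ m
  have hn := isMarkovKernel_pow κ n
  have hint : Integrable g (((κ ^ n) ∘ₖ (κ ^ m)) x) :=
    .of_bound hg.aestronglyMeasurable 1 (ae_of_all _ hb)
  rw [iterMean, add_comm, Kernel.pow_add, Kernel.integral_comp hint]
  rfl

lemma iterMean_succ (hg : Measurable g) (hb : ∀ z, |g z| ≤ 1) (n : ℕ) (x : X) :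
    iterMean κ g (n + 1) x = ∫ z, iterMean κ g n z ∂κ x := by
  rw [add_comm, iterMean_add hg hb, pow_one]

end Markov

lemma lintegral_pow_succ {κ : Kernel X X} {F : X → ℝ≥0∞} (hF : Measurable F) (n : ℕ) (x : X) :
    ∫⁻ z, F z ∂(κ ^ (n + 1)) x = ∫⁻ z, ∫⁻ z', F z' ∂(κ ^ n) z ∂κ x := by
  rw [pow_succ]
  exact Kernel.lintegral_comp _ _ _ hF

namespace HasDrift

variable {κ : Kernel X X} [IsMarkovKernel κ] {V : X → ℝ≥0∞} {a b : ℝ≥0∞}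

lemma lintegral_pow_le_geom_sum (h : HasDrift κ V a b) (hV : Measurable V) (n : ℕ) (x : X) :
    ∫⁻ z, V z ∂(κ ^ n) x ≤ a ^ n * V x + b * ∑ j ∈ Finset.range n, a ^ j := by
  induction n generalizing x with
  | zero =>
    rw [pow_zero_apply, lintegral_dirac' _ hV]
    simp
  | succ n ih =>
    calc ∫⁻ z, V z ∂(κ ^ (n + 1)) x
        ≤ ∫⁻ z, (a ^ n * V z + b * ∑ j ∈ Finset.range n, a ^ j) ∂κ x := by
          rw [lintegral_pow_succ hV]
          exact lintegral_mono fun z => ih z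
      _ = a ^ n * ∫⁻ z, V z ∂κ x + b * ∑ j ∈ Finset.range n, a ^ j := by
          rw [lintegral_add_right _ measurable_const, lintegral_const_mul _ hV, lintegral_const,
            measure_univ, mul_one]
      _ ≤ a ^ n * (a * V x + b) + b * ∑ j ∈ Finset.range n, a ^ j := by gcongr; exact h x
      _ = a ^ (n + 1) * V x + b * ∑ j ∈ Finset.range (n + 1), a ^ j := by
          rw [Finset.sum_range_succ]; ring

lemma lintegral_pow_le (h : HasDrift κ V a b) (hV : Measurable V) (ha : a ≤ 1) (n : ℕ) (x : X) :
    ∫⁻ z, V z ∂(κ ^ n) x ≤ V x + b * (1 - a)⁻¹ := by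
  refine (h.lintegral_pow_le_geom_sum hV n x).trans ?_
  gcongr
  · exact mul_le_of_le_one_left' (pow_le_one' ha n)
  · exact (ENNReal.sum_le_tsum _).trans_eq (ENNReal.tsum_geometric a)

end HasDrift

end KernelPowers

/-! ### The transition kernel of the random dynamical system -/

section StepKernel

variable {X Ω : Type*} [MeasurableSpace X] [MeasurableSpace Ω]

/-- The one-step transition kernel of `Φ`: the law of `Φ (x, ω)` for `ω` of law `P`. -/
def stepKernel (P : Measure Ω) (Φ : X × Ω → X) : Kernel X X :=
  (Kernel.id ×ₖ Kernel.const X P).map Φ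

variable {P : Measure Ω} [IsProbabilityMeasure P] {Φ : X × Ω → X}

lemma stepKernel_apply (hΦ : Measurable Φ) (x : X) :
    stepKernel P Φ x = P.map fun w => Φ (x, w) := by
  rw [stepKernel, Kernel.map_apply _ hΦ, Kernel.prod_apply, Kernel.id_apply, Kernel.const_apply,
    Measure.dirac_prod, Measure.map_map hΦ measurable_prodMk_left]
  rfl

lemma isMarkovKernel_stepKernel (hΦ : Measurable Φ) : IsMarkovKernel (stepKernel P Φ) :=
  Kernel.IsMarkovKernel.map _ hΦ

lemma lintegral_stepKernel (hΦ : Measurable Φ) {F : X → ℝ≥0∞} (hF : Measurable F) (x : X) :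
    ∫⁻ z, F z ∂stepKernel P Φ x = ∫⁻ w, F (Φ (x, w)) ∂P := by
  rw [stepKernel_apply hΦ, lintegral_map hF (by fun_prop)]

lemma map_traj_noiseLaw (hΦ : Measurable Φ) (n : ℕ) (x : X) :
    (noiseLaw P).map (fun ω => traj Φ x ω n) = (stepKernel P Φ ^ n) x := by
  refine Measure.ext_of_lintegral _ fun F hF => ?_
  induction n generalizing x with
  | zero =>
    rw [lintegral_map hF (measurable_traj hΦ x 0), pow_zero_apply, lintegral_dirac' _ hF]
    simp [traj]
  | succ n ih =>
    rw [lintegral_map hF (measurable_traj hΦ x (n + 1)),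
      lintegral_noiseLaw P (F := fun ω => F (traj Φ x ω (n + 1)))
        (hF.comp (measurable_traj hΦ x (n + 1))), lintegral_pow_succ hF,
      lintegral_stepKernel hΦ hF.lintegral_kernel]
    refine lintegral_congr fun w => ?_
    rw [← ih, lintegral_map hF (measurable_traj hΦ _ n)]
    simp only [traj_consSeq]

lemma lintegral_noise_along_traj_le (hΦ : Measurable Φ) {V : X → ℝ≥0∞} (hV : Measurable V)
    {W : X → Ω → ℝ≥0∞} (hW : Measurable fun p : X × Ω => W p.1 p.2) {c : ℝ≥0∞}
    (hWV : ∀ x, ∫⁻ w, W x w ∂P ≤ c * V x) (n : ℕ) (x : X) :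
    ∫⁻ ω, W (traj Φ x ω n) (ω n) ∂noiseLaw P ≤ c * ∫⁻ z, V z ∂(stepKernel P Φ ^ n) x := by
  have hm : ∀ x n, Measurable fun ω : ℕ → Ω => W (traj Φ x ω n) (ω n) := fun x n =>
    hW.comp ((measurable_traj hΦ x n).prodMk (measurable_pi_apply n))
  induction n generalizing x with
  | zero =>
    rw [lintegral_noiseLaw _ (hm x 0), pow_zero_apply, lintegral_dirac' _ hV]
    simpa [traj, consSeq] using hWV x
  | succ n ih =>
    rw [lintegral_noiseLaw _ (hm x (n + 1)), lintegral_pow_succ hV,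
      lintegral_stepKernel hΦ hV.lintegral_kernel]
    simp only [traj_consSeq]
    refine (lintegral_mono fun w => ih (Φ (x, w))).trans_eq (lintegral_const_mul c ?_)
    exact hV.lintegral_kernel.comp (hΦ.comp measurable_prodMk_left)

end StepKernel

/-! ### Comparison of measures -/

section MeasureComparison

variable {A : Type*} [MeasurableSpace A] {μ ν σ : Measure A} {d : ℝ≥0∞}

lemma sub_univ_le [IsFiniteMeasure σ] (hσ : σ ≤ μ) (hd : μ Set.univ ≤ σ Set.univ + d) :
    (μ - σ) Set.univ ≤ d := by
  rw [Measure.sub_apply .univ hσ]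
  exact tsub_le_iff_left.2 hd

lemma lintegral_eq_lintegral_sub_add [IsFiniteMeasure σ] (hσ : σ ≤ μ) (F : A → ℝ≥0∞) :
    ∫⁻ z, F z ∂μ = ∫⁻ z, F z ∂(μ - σ) + ∫⁻ z, F z ∂σ := by
  rw [← lintegral_add_measure, Measure.sub_add_cancel_of_le hσ]

lemma lintegral_le_add_of_le_one [IsFiniteMeasure σ] (hσ : σ ≤ μ)
    (hd : μ Set.univ ≤ σ Set.univ + d) {F : A → ℝ≥0∞} (hF : ∀ z, F z ≤ 1) :
    ∫⁻ z, F z ∂μ ≤ ∫⁻ z, F z ∂σ + d := by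
  rw [lintegral_eq_lintegral_sub_add hσ, add_comm]
  gcongr
  calc ∫⁻ z, F z ∂(μ - σ) ≤ ∫⁻ _, 1 ∂(μ - σ) := lintegral_mono hF
    _ = (μ - σ) Set.univ := lintegral_one
    _ ≤ d := sub_univ_le hσ hd

lemma integral_eq_integral_sub_add {f : A → ℝ} (hf : Integrable f μ) [IsFiniteMeasure σ]
    (hσ : σ ≤ μ) : ∫ z, f z ∂μ = ∫ z, f z ∂(μ - σ) + ∫ z, f z ∂σ := by
  rw [← integral_add_measure (hf.mono_measure Measure.sub_le) (hf.mono_measure hσ),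
    Measure.sub_add_cancel_of_le hσ]

lemma enorm_integral_sub_integral_le_of_le [IsFiniteMeasure μ] (hσ : σ ≤ μ)
    (hd : μ Set.univ ≤ σ Set.univ + d) {f : A → ℝ} (hfm : Measurable f) (hf : ∀ z, |f z| ≤ 1) :
    ‖∫ z, f z ∂μ - ∫ z, f z ∂σ‖ₑ ≤ d := by
  have : IsFiniteMeasure σ := isFiniteMeasure_of_le μ hσ
  have hint : Integrable f μ := .of_bound hfm.aestronglyMeasurable 1 (ae_of_all _ hf)
  rw [integral_eq_integral_sub_add hint hσ, add_sub_cancel_right]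
  calc ‖∫ z, f z ∂(μ - σ)‖ₑ ≤ ∫⁻ z, ‖f z‖ₑ ∂(μ - σ) := enorm_integral_le_lintegral_enorm _
    _ ≤ ∫⁻ _, 1 ∂(μ - σ) := lintegral_mono fun z => by
        rw [← ofReal_norm]
        exact ENNReal.ofReal_le_one.2 (hf z)
    _ = (μ - σ) Set.univ := lintegral_one
    _ ≤ d := sub_univ_le hσ hd

lemma univ_le_inf_univ_add (h : ∀ E, MeasurableSet E → μ E ≤ ν E + d) :
    μ Set.univ ≤ (μ ⊓ ν) Set.univ + d := by
  rw [← tsub_le_iff_right, Measure.inf_apply .univ]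
  refine le_sInf ?_
  rintro m ⟨t, rfl⟩
  simp only [Set.inter_univ]
  rw [tsub_le_iff_right]
  set E := toMeasurable μ t
  have hE : MeasurableSet E := measurableSet_toMeasurable _ _
  calc μ Set.univ = μ E + μ Eᶜ := (measure_add_measure_compl hE).symm
    _ ≤ μ E + (ν Eᶜ + d) := by gcongr; exact h _ hE.compl
    _ = μ t + (ν Eᶜ + d) := by rw [measure_toMeasurable]
    _ ≤ μ t + (ν tᶜ + d) := by
      gcongr
      exact subset_toMeasurable _ _
    _ = μ t + ν tᶜ + d := by ring

lemma measure_le_add_of_isSetRing {A : Type*} {m : MeasurableSpace A} {μ ν : Measure A}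
    [IsFiniteMeasure μ] [IsFiniteMeasure ν] {d : ℝ≥0∞} {C : Set (Set A)} (hC : IsSetRing C)
    (huniv : Set.univ ∈ C) (hm : m = MeasurableSpace.generateFrom C)
    (h : ∀ t ∈ C, μ t ≤ ν t + d) {E : Set A} (hE : MeasurableSet E) : μ E ≤ ν E + d := by
  refine ENNReal.le_of_forall_pos_le_add fun ε hε _ => ?_
  obtain ⟨t, ht, hlt⟩ := exists_measure_symmDiff_lt_of_generateFrom_isSetRing (μ := μ + ν) hC
    ⟨{Set.univ}, Set.countable_singleton _, by simpa using huniv, by simp⟩ hm hE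
    (show (0 : ℝ≥0∞) < ε by exact_mod_cast hε)
  have hsub (s t : Set A) : s ⊆ t ∪ symmDiff s t := fun z hz => by
    by_cases hzt : z ∈ t
    exacts [Or.inl hzt, Or.inr (Or.inl ⟨hz, hzt⟩)]
  calc μ E ≤ μ t + μ (symmDiff t E) := by
        rw [symmDiff_comm]
        exact (measure_mono (hsub E t)).trans (measure_union_le _ _)
    _ ≤ (ν E + ν (symmDiff t E) + d) + μ (symmDiff t E) := by
      gcongr
      refine (h t ht).trans ?_
      gcongr
      exact (measure_mono (hsub t E)).trans (measure_union_le _ _)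
    _ = ν E + d + (μ + ν) (symmDiff t E) := by rw [Measure.add_apply]; ring
    _ ≤ ν E + d + ε := by gcongr

lemma exists_withDensity_eq_withDensity_min_one_rnDeriv (μ ν : Measure A)
    [SigmaFinite μ] [SigmaFinite ν] :
    ∃ k : A → ℝ≥0∞, Measurable k ∧ (∀ z, k z ≤ 1) ∧
      μ.withDensity k = ν.withDensity fun z => min 1 (μ.rnDeriv ν z) := by
  set D := μ.rnDeriv ν
  have hD : Measurable D := Measure.measurable_rnDeriv _ _
  obtain ⟨t, ht, hsing, hν⟩ := Measure.mutuallySingular_singularPart μ ν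
  set k : A → ℝ≥0∞ := t.indicator fun z => min 1 (D z)⁻¹ with hk
  have hkm : Measurable k := (measurable_const.min hD.inv).indicator ht
  refine ⟨k, hkm, Set.indicator_le' (fun _ _ => min_le_left _ _) fun _ _ => zero_le_one, ?_⟩
  have hk_sing : k =ᵐ[μ.singularPart ν] 0 := by
    filter_upwards [measure_eq_zero_iff_ae_notMem.1 hsing] with z hz
    exact Set.indicator_of_notMem hz _
  have hk_ac : D * k =ᵐ[ν] fun z => min 1 (D z) := by
    filter_upwards [measure_eq_zero_iff_ae_notMem.1 hν, Measure.rnDeriv_lt_top μ ν] with z hz hfin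
    rw [Set.notMem_compl_iff] at hz
    rw [Pi.mul_apply, hk, Set.indicator_of_mem hz, mul_min, mul_one, min_comm]
    rcases eq_or_ne (D z) 0 with h0 | h0
    · simp [h0]
    · rw [ENNReal.mul_inv_cancel h0 hfin.ne]
  conv_lhs => rw [Measure.haveLebesgueDecomposition_add μ ν]
  rw [withDensity_add_measure, withDensity_congr_ae hk_sing, withDensity_zero, zero_add,
    ← withDensity_mul _ hD hkm, withDensity_congr_ae hk_ac]

lemma map_withDensity_comp {B : Type*} [MeasurableSpace B] {T : A → B} (hT : Measurable T)
    {k : B → ℝ≥0∞} (hk : Measurable k) :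
    (μ.withDensity (k ∘ T)).map T = (μ.map T).withDensity k := by
  ext E hE
  rw [Measure.map_apply hT hE, withDensity_apply _ (hT hE), withDensity_apply _ hE,
    setLIntegral_map hE hk hT]
  rfl

end MeasureComparison

/-! ### Subcouplings -/

section Subcoupling

variable {A S₁ S₂ : Type*} [MeasurableSpace A] [MeasurableSpace S₁] [MeasurableSpace S₂]

/-- The random variables `ξ` and `η`, defined under the (usually not normalised) measure `ρ`, form
a partial coupling of `μ` and `ν`: their laws are dominated by `μ` and `ν`. Random variables are
used instead of a measure on `S₁ × S₂` because the coupled pairs have to stay in sets which need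
not be measurable. -/
structure IsSubcoupling (ρ : Measure A) (ξ : A → S₁) (η : A → S₂) (μ : Measure S₁)
    (ν : Measure S₂) : Prop where
  measurable_left : Measurable ξ
  measurable_right : Measurable η
  map_left_le : ρ.map ξ ≤ μ
  map_right_le : ρ.map η ≤ ν

namespace IsSubcoupling

variable {ρ : Measure A} {ξ : A → S₁} {η : A → S₂} {μ : Measure S₁} {ν : Measure S₂}

lemma univ_le (h : IsSubcoupling ρ ξ η μ ν) : ρ Set.univ ≤ μ Set.univ := by
  simpa only [Measure.map_apply h.measurable_left .univ, Set.preimage_univ] using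
    h.map_left_le Set.univ

lemma isFiniteMeasure [IsFiniteMeasure μ] (h : IsSubcoupling ρ ξ η μ ν) : IsFiniteMeasure ρ :=
  ⟨h.univ_le.trans_lt (measure_lt_top μ _)⟩

lemma mono (h : IsSubcoupling ρ ξ η μ ν) {ρ' : Measure A} (hρ : ρ' ≤ ρ) :
    IsSubcoupling ρ' ξ η μ ν where
  measurable_left := h.measurable_left
  measurable_right := h.measurable_right
  map_left_le := (Measure.map_mono hρ h.measurable_left).trans h.map_left_le
  map_right_le := (Measure.map_mono hρ h.measurable_right).trans h.map_right_le

lemma comp (h : IsSubcoupling ρ ξ η μ ν) {R R' : Type*} [MeasurableSpace R] [MeasurableSpace R']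
    {f : S₁ → R} {f' : S₂ → R'} (hf : Measurable f) (hf' : Measurable f') :
    IsSubcoupling ρ (fun a => f (ξ a)) (fun a => f' (η a)) (μ.map f) (ν.map f') where
  measurable_left := hf.comp h.measurable_left
  measurable_right := hf'.comp h.measurable_right
  map_left_le :=
    (Measure.map_map hf h.measurable_left).symm.trans_le (Measure.map_mono h.map_left_le hf)
  map_right_le :=
    (Measure.map_map hf' h.measurable_right).symm.trans_le (Measure.map_mono h.map_right_le hf')

lemma lintegral_left_le (h : IsSubcoupling ρ ξ η μ ν) {F : S₁ → ℝ≥0∞} (hF : Measurable F) :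
    ∫⁻ a, F (ξ a) ∂ρ ≤ ∫⁻ z, F z ∂μ := by
  rw [← lintegral_map hF h.measurable_left]
  exact lintegral_mono' h.map_left_le le_rfl

lemma lintegral_right_le (h : IsSubcoupling ρ ξ η μ ν) {F : S₂ → ℝ≥0∞} (hF : Measurable F) :
    ∫⁻ a, F (η a) ∂ρ ≤ ∫⁻ z, F z ∂ν := by
  rw [← lintegral_map hF h.measurable_right]
  exact lintegral_mono' h.map_right_le le_rfl

lemma enorm_integral_sub_integral_le {η : A → S₁} {μ ν : Measure S₁} [IsProbabilityMeasure μ]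
    [IsProbabilityMeasure ν] (h : IsSubcoupling ρ ξ η μ ν) {f : S₁ → ℝ} (hμ : Integrable f μ)
    (hν : Integrable f ν) {c : ℝ} {w : S₁ → ℝ≥0∞} (hw : ∀ z, ‖f z - c‖ₑ ≤ w z) :
    ‖∫ z, f z ∂μ - ∫ z, f z ∂ν‖ₑ ≤ ∫⁻ a, ‖f (ξ a) - f (η a)‖ₑ ∂ρ +
      (∫⁻ z, w z ∂(μ - ρ.map ξ) + ∫⁻ z, w z ∂(ν - ρ.map η)) := by
  have := h.isFiniteMeasure
  have hμc : Integrable (fun z => f z - c) μ := hμ.sub (integrable_const c)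
  have hνc : Integrable (fun z => f z - c) ν := hν.sub (integrable_const c)
  have hξ := hμc.mono_measure h.map_left_le
  have hη := hνc.mono_measure h.map_right_le
  have hcenter (σ : Measure S₁) [IsProbabilityMeasure σ] (hσ : Integrable f σ) :
      ∫ z, f z ∂σ = ∫ z, (f z - c) ∂σ + c := by
    rw [integral_sub hσ (integrable_const c)]; simp
  have hρ : ∫ z, (f z - c) ∂(ρ.map ξ) - ∫ z, (f z - c) ∂(ρ.map η) =
      ∫ a, (f (ξ a) - f (η a)) ∂ρ := by
    have hsub := integral_sub (hξ.comp_measurable h.measurable_left)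
      (hη.comp_measurable h.measurable_right)
    simp only [Function.comp_apply, sub_sub_sub_cancel_right] at hsub
    rw [integral_map h.measurable_left.aemeasurable hξ.aestronglyMeasurable,
      integral_map h.measurable_right.aemeasurable hη.aestronglyMeasurable, hsub]
  have hsplit : ∫ z, f z ∂μ - ∫ z, f z ∂ν = ∫ a, (f (ξ a) - f (η a)) ∂ρ +
      (∫ z, (f z - c) ∂(μ - ρ.map ξ) - ∫ z, (f z - c) ∂(ν - ρ.map η)) := by
    rw [hcenter μ hμ, hcenter ν hν, integral_eq_integral_sub_add hμc h.map_left_le,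
      integral_eq_integral_sub_add hνc h.map_right_le, ← hρ]
    ring
  have hres (σ : Measure S₁) : ‖∫ z, (f z - c) ∂σ‖ₑ ≤ ∫⁻ z, w z ∂σ :=
    (enorm_integral_le_lintegral_enorm _).trans (lintegral_mono hw)
  rw [hsplit]
  exact (enorm_add_le _ _).trans (add_le_add (enorm_integral_le_lintegral_enorm _)
    (enorm_sub_le.trans (add_le_add (hres _) (hres _))))

end IsSubcoupling

lemma isSubcoupling_zero {ξ : A → S₁} {η : A → S₂} (hξ : Measurable ξ) (hη : Measurable η)
    (μ : Measure S₁) (ν : Measure S₂) : IsSubcoupling 0 ξ η μ ν where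
  measurable_left := hξ
  measurable_right := hη
  map_left_le := Measure.map_zero ξ ▸ Measure.zero_le μ
  map_right_le := Measure.map_zero η ▸ Measure.zero_le ν

lemma exists_isSubcoupling_graph (μ : Measure S₁) (ν : Measure S₂) [IsFiniteMeasure μ]
    [SigmaFinite ν] {T : S₁ → S₂} (hT : Measurable T) :
    ∃ ρ, IsSubcoupling ρ id T μ ν ∧
      ρ.map T = ν.withDensity fun z => min 1 ((μ.map T).rnDeriv ν z) := by
  obtain ⟨k, hkm, hk1, hk⟩ := exists_withDensity_eq_withDensity_min_one_rnDeriv (μ.map T) ν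
  have hρT : (μ.withDensity (k ∘ T)).map T = _ := (map_withDensity_comp hT hkm).trans hk
  refine ⟨μ.withDensity (k ∘ T), ⟨measurable_id, hT, ?_, ?_⟩, hρT⟩
  · rw [Measure.map_id]
    exact (withDensity_mono (ae_of_all _ fun z => hk1 (T z))).trans_eq withDensity_one
  · rw [hρT]
    exact (withDensity_mono (ae_of_all _ fun z => min_le_left _ _)).trans_eq withDensity_one

end Subcoupling

lemma exists_forall_enorm_sub_le {S : Type*} (f : S → ℝ) (w : S → ℝ≥0∞)
    (h : ∀ x y, ‖f x - f y‖ₑ ≤ w x + w y) : ∃ c : ℝ, ∀ x, ‖f x - c‖ₑ ≤ w x := by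
  by_cases hne : ∃ x, w x ≠ ⊤
  swap
  · push Not at hne
    exact ⟨0, fun x => (hne x).symm ▸ le_top⟩
  have hreal (x y : S) (hx : w x ≠ ⊤) (hy : w y ≠ ⊤) :
      |f x - f y| ≤ (w x).toReal + (w y).toReal := by
    have := ENNReal.toReal_mono (ENNReal.add_ne_top.2 ⟨hx, hy⟩) (h x y)
    rwa [ENNReal.toReal_add hx hy, toReal_enorm, Real.norm_eq_abs] at this
  obtain ⟨x₀, hx₀⟩ := hne
  have : Nonempty {x // w x ≠ ⊤} := ⟨⟨x₀, hx₀⟩⟩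
  have hbdd : BddAbove (Set.range fun x : {x // w x ≠ ⊤} => f x - (w x).toReal) := by
    refine ⟨f x₀ + (w x₀).toReal, ?_⟩
    rintro _ ⟨x, rfl⟩
    linarith [(abs_le.1 (hreal x x₀ x.2 hx₀)).2]
  refine ⟨⨆ x : {x // w x ≠ ⊤}, (f x - (w x).toReal), fun x => ?_⟩
  by_cases hx : w x = ⊤
  · exact hx.symm ▸ le_top
  rw [← ofReal_norm, Real.norm_eq_abs]
  refine ENNReal.ofReal_le_of_le_toReal (abs_le.2 ⟨?_, ?_⟩)
  · have : (⨆ x : {x // w x ≠ ⊤}, (f x - (w x).toReal)) ≤ f x + (w x).toReal :=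
      ciSup_le fun y => by linarith [(abs_le.1 (hreal y x y.2 hx)).2]
    linarith
  · linarith [le_ciSup hbdd ⟨x, hx⟩]

/-! ### Inequalities in `ℝ≥0∞` -/

section Inequalities

variable {A : Type*} [MeasurableSpace A] {μ : Measure A}

lemma le_add_inv_mul_sq {t : ℝ≥0∞} (ht0 : t ≠ 0) (ht : t ≠ ⊤) (u : ℝ≥0∞) :
    u ≤ t + t⁻¹ * u ^ 2 := by
  rcases le_total u t with h | h
  · exact le_add_right h
  · calc u = t⁻¹ * (t * u) := by rw [← mul_assoc, ENNReal.inv_mul_cancel ht0 ht, one_mul]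
      _ ≤ t⁻¹ * (u * u) := by gcongr
      _ ≤ t + t⁻¹ * u ^ 2 := by rw [sq]; exact le_add_self

lemma sqrt_sq (v : ℝ≥0∞) : (v ^ (1 / 2 : ℝ)) ^ 2 = v := by
  rw [← ENNReal.rpow_mul_natCast]
  norm_num

lemma sqrt_le_inv_add_mul {t : ℝ≥0∞} (ht0 : t ≠ 0) (ht : t ≠ ⊤) (v : ℝ≥0∞) :
    v ^ (1 / 2 : ℝ) ≤ t⁻¹ + t * v := by
  have h := le_add_inv_mul_sq (ENNReal.inv_ne_zero.2 ht) (ENNReal.inv_ne_top.2 ht0)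
    (v ^ (1 / 2 : ℝ))
  rwa [inv_inv, sqrt_sq] at h

lemma lintegral_sqrt_le [IsProbabilityMeasure μ] {F : A → ℝ≥0∞} (hF : Measurable F) :
    ∫⁻ z, F z ^ (1 / 2 : ℝ) ∂μ ≤ (∫⁻ z, F z ∂μ) ^ (1 / 2 : ℝ) := by
  simpa [sqrt_sq, -one_div] using
    ENNReal.lintegral_mul_le_Lp_mul_Lq μ Real.HolderConjugate.two_two
      (f := fun z => F z ^ (1 / 2 : ℝ)) (g := fun _ => 1) (hF.pow_const _).aemeasurable
      aemeasurable_const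

lemma sqrt_mul_add_le (a b v : ℝ≥0∞) :
    (a * v + b) ^ (1 / 2 : ℝ) ≤ a ^ (1 / 2 : ℝ) * v ^ (1 / 2 : ℝ) + b ^ (1 / 2 : ℝ) := by
  rw [← ENNReal.mul_rpow_of_nonneg _ _ (by norm_num)]
  exact ENNReal.rpow_add_le_add_rpow _ _ (by norm_num) (by norm_num)

lemma measure_le_lintegral_of_le_mul_rpow {F : A → ℝ≥0∞} (hF : Measurable F) {C κ : ℝ≥0∞}
    (hκ0 : κ ≠ 0) (hκ : κ ≠ ⊤) {δ : ℝ} (hδ : 0 < δ) {E : Set A}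
    (hE : ∀ z ∈ E, κ ≤ C * F z ^ δ) : μ E ≤ (C / κ) ^ (1 / δ) * ∫⁻ z, F z ∂μ := by
  have hsub : E ⊆ {z | 1 ≤ (C / κ) ^ (1 / δ) * F z} := fun z hz => by
    have h1 : 1 ≤ C / κ * F z ^ δ := by
      rw [div_eq_mul_inv, mul_right_comm, ← div_eq_mul_inv,
        ENNReal.le_div_iff_mul_le (Or.inl hκ0) (Or.inl hκ), one_mul]
      exact hE z hz
    calc (1 : ℝ≥0∞) = 1 ^ (1 / δ) := (ENNReal.one_rpow _).symm
      _ ≤ (C / κ * F z ^ δ) ^ (1 / δ) := by gcongr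
      _ = (C / κ) ^ (1 / δ) * F z := by
        rw [ENNReal.mul_rpow_of_nonneg _ _ (by positivity), ← ENNReal.rpow_mul,
          mul_one_div_cancel hδ.ne', ENNReal.rpow_one]
  calc μ E ≤ 1 * μ {z | 1 ≤ (C / κ) ^ (1 / δ) * F z} := by rw [one_mul]; exact measure_mono hsub
    _ ≤ ∫⁻ z, (C / κ) ^ (1 / δ) * F z ∂μ :=
      mul_meas_ge_le_lintegral (hF.const_mul _) 1
    _ = (C / κ) ^ (1 / δ) * ∫⁻ z, F z ∂μ := lintegral_const_mul _ hF

lemma one_le_min_one_add {t : ℝ≥0∞} (ht0 : t ≠ 0) (ht : t ≠ ⊤) (D : ℝ≥0∞) :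
    1 ≤ min 1 D + (t + t⁻¹ * ENNReal.ofReal ((1 - D.toReal) ^ 2)) := by
  rcases le_total 1 D with h | h
  · exact le_add_right (le_min le_rfl h)
  · have hD : D ≠ ⊤ := ne_top_of_le_ne_top ENNReal.one_ne_top h
    have h1 : 1 - D = ENNReal.ofReal (1 - D.toReal) := by
      rw [ENNReal.ofReal_sub _ ENNReal.toReal_nonneg, ENNReal.ofReal_one, ENNReal.ofReal_toReal hD]
    rw [min_eq_right h, ← tsub_le_iff_left, ENNReal.ofReal_pow, ← h1]
    · exact le_add_inv_mul_sq ht0 ht _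
    · exact sub_nonneg.2 (ENNReal.toReal_le_of_le_ofReal zero_le_one (by simpa using h))

lemma measure_le_setLIntegral_min_one_add [IsProbabilityMeasure μ] {D : A → ℝ≥0∞}
    (hD : Measurable D) {E : Set A} {t R : ℝ≥0∞} (ht0 : t ≠ 0) (ht : t ≠ ⊤)
    (h : ∫⁻ z in E, ENNReal.ofReal ((1 - (D z).toReal) ^ 2) ∂μ ≤ R * t ^ 2) :
    μ E ≤ ∫⁻ z in E, min 1 (D z) ∂μ + (1 + R) * t := by
  calc μ E = ∫⁻ _ in E, 1 ∂μ := (setLIntegral_one E).symm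
    _ ≤ ∫⁻ z in E, (min 1 (D z) +
        (t + t⁻¹ * ENNReal.ofReal ((1 - (D z).toReal) ^ 2))) ∂μ :=
      lintegral_mono fun z => one_le_min_one_add ht0 ht (D z)
    _ = ∫⁻ z in E, min 1 (D z) ∂μ +
        (t * μ E + t⁻¹ * ∫⁻ z in E, ENNReal.ofReal ((1 - (D z).toReal) ^ 2) ∂μ) := by
      rw [lintegral_add_left (measurable_const.min hD), lintegral_add_left measurable_const,
        lintegral_const_mul _ (by fun_prop), setLIntegral_const]
    _ ≤ ∫⁻ z in E, min 1 (D z) ∂μ + (t * 1 + t⁻¹ * (R * t ^ 2)) := by gcongr; exact prob_le_one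
    _ = ∫⁻ z in E, min 1 (D z) ∂μ + (1 + R) * t := by
      rw [sq, mul_comm R, ← mul_assoc, ← mul_assoc, ENNReal.inv_mul_cancel ht0 ht]; ring

lemma inv_min_one_le (D : ℝ≥0∞) : (min 1 D)⁻¹ ≤ 1 + D⁻¹ ^ 2 := by
  rcases le_total 1 D with h | h
  · simp [min_eq_left h]
  · rw [min_eq_right h]
    exact le_add_left (le_self_pow₀ (ENNReal.one_le_inv.2 h) two_ne_zero)

lemma le_lintegral_min_one_of_lintegral_inv_sq_le [IsProbabilityMeasure μ] {D : A → ℝ≥0∞}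
    (hD : Measurable D) {s : Set A} {c₁ c₂ : ℝ≥0∞} (hc₁ : c₁ ≠ 0) (hc₂ : c₂ ≠ ⊤)
    (hs : c₁ ≤ μ s) (h : ∫⁻ z in s, (D z)⁻¹ ^ 2 ∂μ ≤ c₂) :
    c₁ / 2 * (1 + c₂)⁻¹ * (c₁ / 2) ≤ ∫⁻ z, min 1 (D z) ∂μ := by
  have hc₁' : c₁ ≠ ⊤ := ne_top_of_le_ne_top ENNReal.one_ne_top (hs.trans prob_le_one)
  have hB0 : 1 + c₂ ≠ 0 := by simp
  have hB : 1 + c₂ ≠ ⊤ := by simp [hc₂]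
  set t := c₁ / 2 * (1 + c₂)⁻¹ with ht
  have ht0 : t ≠ 0 := by simp [ht, hc₁, hc₂]
  have httop : t ≠ ⊤ := ENNReal.mul_ne_top (ENNReal.div_ne_top hc₁' two_ne_zero) (by simp)
  have hpt (z : A) : 1 ≤ t⁻¹ * min 1 (D z) + t * (1 + (D z)⁻¹ ^ 2) := by
    rcases le_total t (min 1 (D z)) with hm | hm
    · exact le_add_right ((ENNReal.inv_mul_cancel ht0 httop).symm.trans_le (by gcongr))
    · refine le_add_left ((ENNReal.mul_inv_cancel ht0 httop).symm.trans_le ?_)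
      gcongr
      exact (ENNReal.inv_le_inv.2 hm).trans (inv_min_one_le _)
  have hsum : c₁ ≤ t⁻¹ * ∫⁻ z, min 1 (D z) ∂μ + c₁ / 2 := by
    calc c₁ ≤ ∫⁻ _ in s, 1 ∂μ := hs.trans_eq (setLIntegral_one s).symm
      _ ≤ ∫⁻ z in s, (t⁻¹ * min 1 (D z) + t * (1 + (D z)⁻¹ ^ 2)) ∂μ := lintegral_mono hpt
      _ = t⁻¹ * ∫⁻ z in s, min 1 (D z) ∂μ + t * (μ s + ∫⁻ z in s, (D z)⁻¹ ^ 2 ∂μ) := by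
        rw [lintegral_add_left (by fun_prop), lintegral_const_mul _ (by fun_prop),
          lintegral_const_mul _ (by fun_prop), lintegral_add_left measurable_const,
          setLIntegral_one]
      _ ≤ t⁻¹ * ∫⁻ z, min 1 (D z) ∂μ + t * (1 + c₂) := by
        gcongr
        exacts [Measure.restrict_le_self, prob_le_one]
      _ = t⁻¹ * ∫⁻ z, min 1 (D z) ∂μ + c₁ / 2 := by
        rw [ht, mul_assoc, ENNReal.inv_mul_cancel hB0 hB, mul_one]
  have hhalf : c₁ / 2 ≤ t⁻¹ * ∫⁻ z, min 1 (D z) ∂μ := by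
    rw [← ENNReal.sub_half hc₁']
    exact tsub_le_iff_right.2 hsum
  calc t * (c₁ / 2) ≤ t * (t⁻¹ * ∫⁻ z, min 1 (D z) ∂μ) := by gcongr
    _ = ∫⁻ z, min 1 (D z) ∂μ := by
      rw [← mul_assoc, ENNReal.mul_inv_cancel ht0 httop, one_mul]

end Inequalities

/-! ### The binding assumptions -/

section Assumptions

variable {X Ω : Type*} [MeasurableSpace X] [MeasurableSpace Ω]

/-- The measurable data of a binding construction: the random dynamical system `Φ`, the binding
maps `ψ x y` and the maps `ψinv x y` undoing them. -/
structure IsBinding (Φ : X × Ω → X) (ψ ψinv : X → X → Ω → Ω) : Prop where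
  measurable_rds : Measurable Φ
  measurable_bind : Measurable fun p : (X × X) × Ω => ψ p.1.1 p.1.2 p.2
  measurable_unbind : Measurable fun p : (X × X) × Ω => ψinv p.1.1 p.1.2 p.2
  leftInverse : ∀ x y, Function.LeftInverse (ψinv x y) (ψ x y)

/-- Assumption A2: `W` is a noise-dependent version of `V` which is integrable against the noise
and whose growth under the binding maps and under their inverses is polynomial. -/
structure IsNoiseCost (P : Measure Ω) (ψ ψinv : X → X → Ω → Ω) (V : X → ℝ≥0∞)
    (W : X → Ω → ℝ≥0∞) (c C : ℝ≥0∞) (δ : ℝ) : Prop where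
  measurable : Measurable fun p : X × Ω => W p.1 p.2
  lintegral_le : ∀ x, ∫⁻ ω, W x ω ∂P ≤ c * V x
  bind_le : ∀ x y ω, W x ω + W y (ψ x y ω) ≤ C * (1 + V y + W x ω) ^ δ
  unbind_le : ∀ x y ω, W x (ψinv x y ω) + W y ω ≤ C * (1 + V x + W y ω) ^ δ
  integral_const_ne_top : c ≠ ⊤
  growth_const_ne_top : C ≠ ⊤
  exponent_pos : 0 < δ

/-- Assumption A3 for the test functions in `𝒢`: the two marginals of `Q^∞_{x,y}` approach each
other at the exponential rate `γ`, uniformly on sublevel sets of `V x + V y`. -/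
def BindsExponentially (P : Measure Ω) [IsProbabilityMeasure P] (Φ : X × Ω → X)
    (ψ : X → X → Ω → Ω) (V : X → ℝ≥0∞) (𝒢 : Set (X → ℝ)) (γ : ℝ) : Prop :=
  ∀ K : ℝ, 0 < K → ∃ CK : ℝ, ∀ x y, V x + V y ≤ ENNReal.ofReal K → ∀ n : ℕ, ∀ g ∈ 𝒢,
    |∫ z, g z ∂((QInf (noiseLaw P) Φ ψ x y).map fun q => q.1 n) -
      ∫ z, g z ∂((QInf (noiseLaw P) Φ ψ x y).map fun q => q.2 n)| ≤ CK * Real.exp (-γ * n)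

/-- Assumption A4: on a set of noises of probability bounded below, the inverse densities of the
`n`-step binding maps have bounded second moments, uniformly in `n` and on sublevel sets of
`V x + V y`. -/
def HasInverseDensityBound [Nonempty Ω] (P : Measure Ω) [IsProbabilityMeasure P] (Φ : X × Ω → X)
    (ψ : X → X → Ω → Ω) (V : X → ℝ≥0∞) : Prop :=
  ∀ K : ℝ, 0 < K → ∃ c₁ c₂ : ℝ≥0∞, c₁ ≠ 0 ∧ c₂ ≠ ⊤ ∧ ∀ x y, V x + V y ≤ ENNReal.ofReal K →
    ∃ Γ : Set (ℕ → Ω), c₁ ≤ noiseLaw P Γ ∧ ∀ n : ℕ,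
      ∫⁻ f in (fun (ω : ℕ → Ω) (i : Fin n) => ω i) '' Γ, (Dfin P Φ ψ n x y f)⁻¹ ^ 2
        ∂(Measure.pi fun _ : Fin n => P) ≤ c₂

/-- Assumption A5: the binding maps distort the noise less and less along coupled trajectories of
bounded cost. -/
def StaysBound (P : Measure Ω) (Φ : X × Ω → X) (ψ ψinv : X → X → Ω → Ω) (V : X → ℝ≥0∞)
    (W : X → Ω → ℝ≥0∞) (C γ ζ : ℝ) : Prop :=
  ∀ K : ℝ, 0 < K → ∀ x₀ y₀, V x₀ + V y₀ ≤ ENNReal.ofReal K →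
    ∀ (n : ℕ) (x y : X), (x, y) ∈ QSetIter Φ ψ W (ENNReal.ofReal K) x₀ y₀ n →
      ζ * Real.log (1 + K) / γ < n →
      ∫⁻ ω in {ω | W x (ψinv x y ω) + W y ω ≤ ENNReal.ofReal K},
          ENNReal.ofReal ((1 - ((P.map (ψ x y)).rnDeriv P ω).toReal) ^ 2) ∂P ≤
        ENNReal.ofReal (C * Real.exp (-γ * n) * (1 + K) ^ ζ)

variable {Φ : X × Ω → X} {ψ ψinv : X → X → Ω → Ω} {P : Measure Ω} {V : X → ℝ≥0∞}
  {W : X → Ω → ℝ≥0∞} {c C : ℝ≥0∞} {δ : ℝ}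

lemma IsBinding.measurable_bind_apply (h : IsBinding Φ ψ ψinv) (x y : X) : Measurable (ψ x y) :=
  h.measurable_bind.comp (measurable_prodMk_left (x := (x, y)))

lemma IsBinding.measurable_unbind_apply (h : IsBinding Φ ψ ψinv) (x y : X) :
    Measurable (ψinv x y) :=
  h.measurable_unbind.comp (measurable_prodMk_left (x := (x, y)))

lemma IsNoiseCost.measurable_apply (h : IsNoiseCost P ψ ψinv V W c C δ) (x : X) :
    Measurable (W x) :=
  h.measurable.comp measurable_prodMk_left

end Assumptions

/-! ### One coupled step -/

section OneStep

variable {X Ω : Type*}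

lemma mem_QSetIter_succ {Φ : X × Ω → X} {ψ : X → X → Ω → Ω} {W : X → Ω → ℝ≥0∞} {K : ℝ≥0∞}
    {x₀ y₀ x y : X} {n : ℕ} (h : (x, y) ∈ QSetIter Φ ψ W K x₀ y₀ n) {ω : Ω}
    (hω : W x ω + W y (ψ x y ω) ≤ K) :
    (Φ (x, ω), Φ (y, ψ x y ω)) ∈ QSetIter Φ ψ W K x₀ y₀ (n + 1) := by
  simp only [QSetIter, Set.mem_iUnion]
  exact ⟨(x, y), h, ω, hω, rfl⟩

lemma QSetIter_mono {Φ : X × Ω → X} {ψ : X → X → Ω → Ω} {W : X → Ω → ℝ≥0∞} {K K' : ℝ≥0∞}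
    (hK : K ≤ K') (x₀ y₀ : X) (n : ℕ) :
    QSetIter Φ ψ W K x₀ y₀ n ⊆ QSetIter Φ ψ W K' x₀ y₀ n := by
  induction n with
  | zero => exact subset_rfl
  | succ n ih =>
    exact Set.biUnion_mono ih fun p _ q ⟨ω, hω, hq⟩ => ⟨ω, hω.trans hK, hq⟩

/-- `(x, y)` is reached after `i ≥ N` coupled steps from a pair with `V x₀ + V y₀ ≤ K`, the cost
staying below `K e^{ε i}`. The level grows with `i` so that the probability of exceeding it is
summable; `ε` is taken small compared with the rate in Assumption A5. -/
def GoodPair (Φ : X × Ω → X) (ψ : X → X → Ω → Ω) (V : X → ℝ≥0∞) (W : X → Ω → ℝ≥0∞)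
    (K ε : ℝ) (N i : ℕ) (x y : X) : Prop :=
  N ≤ i ∧ ∃ x₀ y₀, V x₀ + V y₀ ≤ ENNReal.ofReal K ∧
    (x, y) ∈ QSetIter Φ ψ W (ENNReal.ofReal (K * Real.exp (ε * i))) x₀ y₀ i

lemma GoodPair.succ {Φ : X × Ω → X} {ψ : X → X → Ω → Ω} {V : X → ℝ≥0∞} {W : X → Ω → ℝ≥0∞}
    {K ε : ℝ} (hK : 0 ≤ K) (hε : 0 ≤ ε) {N i : ℕ} {x y : X} (h : GoodPair Φ ψ V W K ε N i x y)
    {ω : Ω} (hω : W x ω + W y (ψ x y ω) ≤ ENNReal.ofReal (K * Real.exp (ε * i))) :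
    GoodPair Φ ψ V W K ε N (i + 1) (Φ (x, ω)) (Φ (y, ψ x y ω)) := by
  obtain ⟨hN, x₀, y₀, hxy₀, hmem⟩ := h
  have hle : ENNReal.ofReal (K * Real.exp (ε * i)) ≤
      ENNReal.ofReal (K * Real.exp (ε * (i + 1 : ℕ))) := by
    gcongr
    exact i.le_succ
  exact ⟨hN.trans i.le_succ, x₀, y₀, hxy₀, QSetIter_mono hle _ _ _ (mem_QSetIter_succ hmem hω)⟩

lemma one_add_mul_exp_rpow_le {K ε ζ : ℝ} (hK : 0 ≤ K) (hε : 0 ≤ ε) (hζ : 0 ≤ ζ) (i : ℕ) :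
    (1 + K * Real.exp (ε * i)) ^ ζ ≤ (1 + K) ^ ζ * Real.exp (ζ * ε) ^ i := by
  have he : 1 ≤ Real.exp (ε * i) := Real.one_le_exp (by positivity)
  calc (1 + K * Real.exp (ε * i)) ^ ζ ≤ ((1 + K) * Real.exp (ε * i)) ^ ζ := by
        gcongr
        linarith
    _ = (1 + K) ^ ζ * Real.exp (ζ * ε) ^ i := by
      rw [Real.mul_rpow (by positivity) (by positivity), ← Real.exp_mul, ← Real.exp_nat_mul]
      ring_nf

lemma StaysBound.setLIntegral_le_of_goodPair [MeasurableSpace Ω] {P : Measure Ω}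
    {Φ : X × Ω → X} {ψ ψinv : X → X → Ω → Ω} {V : X → ℝ≥0∞} {W : X → Ω → ℝ≥0∞} {C₂ γ ζ : ℝ}
    (h : StaysBound P Φ ψ ψinv V W C₂ γ ζ) (hC₂ : 0 ≤ C₂) (hγ : 0 < γ) (hζ : 0 < ζ) {K : ℝ}
    (hK : 0 < K) {N i : ℕ} {x y : X}
    (hN : ∀ i : ℕ, N ≤ i → ζ * Real.log (1 + K * Real.exp (γ / (2 * ζ) * i)) / γ < i)
    (hG : GoodPair Φ ψ V W K (γ / (2 * ζ)) N i x y) :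
    ∫⁻ ω in {ω | W x (ψinv x y ω) + W y ω ≤ ENNReal.ofReal (K * Real.exp (γ / (2 * ζ) * i))},
        ENNReal.ofReal ((1 - ((P.map (ψ x y)).rnDeriv P ω).toReal) ^ 2) ∂P ≤
      ENNReal.ofReal (C₂ * (1 + K) ^ ζ) * (ENNReal.ofReal (Real.exp (-γ / 4)) ^ i) ^ 2 := by
  obtain ⟨hNi, x₀, y₀, hxy₀, hmem⟩ := hG
  have hκ : K ≤ K * Real.exp (γ / (2 * ζ) * i) :=
    le_mul_of_one_le_right hK.le (Real.one_le_exp (by positivity))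
  refine (h _ (by positivity) x₀ y₀ (hxy₀.trans (ENNReal.ofReal_le_ofReal hκ)) i x y hmem
    (hN i hNi)).trans ?_
  rw [← ENNReal.ofReal_pow (by positivity), ← ENNReal.ofReal_pow (by positivity),
    ← ENNReal.ofReal_mul (by positivity)]
  refine ENNReal.ofReal_le_ofReal ?_
  calc C₂ * Real.exp (-γ * i) * (1 + K * Real.exp (γ / (2 * ζ) * i)) ^ ζ
      ≤ C₂ * Real.exp (-γ * i) * ((1 + K) ^ ζ * Real.exp (ζ * (γ / (2 * ζ))) ^ i) := by
        gcongr
        exact one_add_mul_exp_rpow_le hK.le (by positivity) hζ.le i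
    _ = C₂ * (1 + K) ^ ζ * (Real.exp (-γ / 4) ^ i) ^ 2 := by
      have hexp : Real.exp (-γ * i) * Real.exp (ζ * (γ / (2 * ζ))) ^ i =
          (Real.exp (-γ / 4) ^ i) ^ 2 := by
        rw [← Real.exp_nat_mul, ← Real.exp_nat_mul, ← Real.exp_nat_mul, ← Real.exp_add]
        field_simp
        ring_nf
      rw [← hexp]
      ring

variable [MeasurableSpace X] [MeasurableSpace Ω] {P : Measure Ω} [IsProbabilityMeasure P]
  {Φ : X × Ω → X} {ψ ψinv : X → X → Ω → Ω} {V : X → ℝ≥0∞} {W : X → Ω → ℝ≥0∞}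
  {c C : ℝ≥0∞} {δ : ℝ}

lemma IsNoiseCost.measure_lt_unbind_le (hW : IsNoiseCost P ψ ψinv V W c C δ) {κ : ℝ≥0∞}
    (hκ0 : κ ≠ 0) (hκ : κ ≠ ⊤) (x y : X) :
    P {ω | κ < W x (ψinv x y ω) + W y ω} ≤ (C / κ) ^ (1 / δ) * (1 + V x + c * V y) := by
  refine (measure_le_lintegral_of_le_mul_rpow (F := fun ω => 1 + V x + W y ω)
    ((hW.measurable_apply y).const_add _) hκ0 hκ hW.exponent_pos
    fun ω hω => (le_of_lt hω).trans (hW.unbind_le x y ω)).trans ?_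
  rw [lintegral_add_left measurable_const, lintegral_const, measure_univ, mul_one]
  gcongr
  exact hW.lintegral_le y

lemma IsNoiseCost.exists_isSubcoupling_bind (hW : IsNoiseCost P ψ ψinv V W c C δ)
    (hB : IsBinding Φ ψ ψinv) {κ t R : ℝ≥0∞} (hκ0 : κ ≠ 0) (hκ : κ ≠ ⊤) (ht0 : t ≠ 0)
    (ht : t ≠ ⊤) {x y : X}
    (h : ∫⁻ ω in {ω | W x (ψinv x y ω) + W y ω ≤ κ},
      ENNReal.ofReal ((1 - ((P.map (ψ x y)).rnDeriv P ω).toReal) ^ 2) ∂P ≤ R * t ^ 2) :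
    ∃ ρ, IsSubcoupling ρ id (ψ x y) P P ∧ (∀ᵐ ω ∂ρ, W x ω + W y (ψ x y ω) ≤ κ) ∧
      1 ≤ ρ Set.univ + ((1 + R) * t + (C / κ) ^ (1 / δ) * (1 + V x + c * V y)) := by
  have hT := hB.measurable_bind_apply x y
  set E : Set Ω := {ω | W x (ψinv x y ω) + W y ω ≤ κ} with hE
  have hEm : MeasurableSet E := measurableSet_le
    (((hW.measurable_apply x).comp (hB.measurable_unbind_apply x y)).add (hW.measurable_apply y))
    measurable_const
  obtain ⟨ρ, hρ, hρT⟩ := exists_isSubcoupling_graph P P hT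
  refine ⟨ρ.restrict (ψ x y ⁻¹' E), hρ.mono Measure.restrict_le_self, ?_, ?_⟩
  · filter_upwards [ae_restrict_mem (hT hEm)] with ω hω
    rwa [Set.mem_preimage, hE, Set.mem_ofPred_eq, hB.leftInverse x y ω] at hω
  have hmass : ρ.restrict (ψ x y ⁻¹' E) Set.univ =
      ∫⁻ ω in E, min 1 ((P.map (ψ x y)).rnDeriv P ω) ∂P := by
    rw [Measure.restrict_apply_univ, ← Measure.map_apply hT hEm, hρT, withDensity_apply _ hEm]
  have hcompl : Eᶜ = {ω | κ < W x (ψinv x y ω) + W y ω} := by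
    ext ω
    exact not_le (a := W x (ψinv x y ω) + W y ω)
  calc 1 = P E + P Eᶜ := by rw [measure_add_measure_compl hEm, measure_univ]
    _ ≤ (ρ.restrict (ψ x y ⁻¹' E) Set.univ + (1 + R) * t) +
        (C / κ) ^ (1 / δ) * (1 + V x + c * V y) := by
      refine add_le_add ?_ (hcompl ▸ hW.measure_lt_unbind_le hκ0 hκ x y)
      exact hmass ▸ measure_le_setLIntegral_min_one_add (Measure.measurable_rnDeriv _ _) ht0 ht h
    _ = _ := add_assoc _ _ _

lemma div_mul_exp_rpow (C : ℝ≥0∞) {K ε δ : ℝ} (hK : 0 < K) (hδ : 0 < δ) (i : ℕ) :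
    (C / ENNReal.ofReal (K * Real.exp (ε * i))) ^ (1 / δ) =
      (C / ENNReal.ofReal K) ^ (1 / δ) * ENNReal.ofReal (Real.exp (-ε / δ)) ^ i := by
  rw [ENNReal.ofReal_mul hK.le, div_eq_mul_inv, div_eq_mul_inv,
    ENNReal.mul_inv (Or.inl (by simpa using hK)) (Or.inl ENNReal.ofReal_ne_top), ← mul_assoc,
    ENNReal.mul_rpow_of_nonneg _ _ (by positivity), ← ENNReal.ofReal_inv_of_pos (Real.exp_pos _),
    ← Real.exp_neg, ENNReal.ofReal_rpow_of_pos (Real.exp_pos _), ← Real.exp_mul,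
    ← ENNReal.ofReal_pow (Real.exp_pos _).le, ← Real.exp_nat_mul]
  congr 3
  ring

lemma exists_isSubcoupling_of_goodPair (hB : IsBinding Φ ψ ψinv)
    (hW : IsNoiseCost P ψ ψinv V W c C δ) {C₂ γ ζ : ℝ} (hA5 : StaysBound P Φ ψ ψinv V W C₂ γ ζ)
    (hC₂ : 0 ≤ C₂) (hγ : 0 < γ) (hζ : 0 < ζ) {K : ℝ} (hK : 0 < K) {h : ℝ≥0∞}
    (hh₁ : ENNReal.ofReal (Real.exp (-(γ / (2 * ζ)) / δ)) ≤ h)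
    (hh₂ : ENNReal.ofReal (Real.exp (-γ / 4)) ≤ h) {N : ℕ}
    (hN : ∀ i : ℕ, N ≤ i → ζ * Real.log (1 + K * Real.exp (γ / (2 * ζ) * i)) / γ < i)
    {i : ℕ} {x y : X} (hG : GoodPair Φ ψ V W K (γ / (2 * ζ)) N i x y) :
    ∃ ρ, IsSubcoupling ρ id (ψ x y) P P ∧
      (∀ᵐ ω ∂ρ, GoodPair Φ ψ V W K (γ / (2 * ζ)) N (i + 1) (Φ (x, ω)) (Φ (y, ψ x y ω))) ∧
      1 ≤ ρ Set.univ + (1 + ENNReal.ofReal (C₂ * (1 + K) ^ ζ) +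
        (C / ENNReal.ofReal K) ^ (1 / δ) * (1 + c)) * (1 + V x + V y) * h ^ i := by
  have ht0 : ENNReal.ofReal (Real.exp (-γ / 4)) ≠ 0 := by simpa using Real.exp_pos _
  obtain ⟨ρ, hρ, hcost, hmass⟩ := hW.exists_isSubcoupling_bind hB
    (κ := ENNReal.ofReal (K * Real.exp (γ / (2 * ζ) * i)))
    (by simpa using mul_pos hK (Real.exp_pos _)) ENNReal.ofReal_ne_top (pow_ne_zero i ht0)
    (ENNReal.pow_ne_top ENNReal.ofReal_ne_top) (hA5.setLIntegral_le_of_goodPair hC₂ hγ hζ hK hN hG)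
  refine ⟨ρ, hρ, hcost.mono fun ω hω => hG.succ hK.le (by positivity) hω, hmass.trans ?_⟩
  rw [div_mul_exp_rpow C hK hW.exponent_pos]
  set R := ENNReal.ofReal (C₂ * (1 + K) ^ ζ)
  set A := (C / ENNReal.ofReal K) ^ (1 / δ)
  have hV : 1 ≤ 1 + V x + V y := by rw [add_assoc]; exact le_self_add
  have hVc : 1 + V x + c * V y ≤ (1 + c) * (1 + V x + V y) :=
    calc 1 + V x + c * V y ≤ (1 + V x + c * V y) + (V y + c * (1 + V x)) := le_self_add
      _ = (1 + c) * (1 + V x + V y) := by ring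
  gcongr
  calc (1 + R) * ENNReal.ofReal (Real.exp (-γ / 4)) ^ i +
        A * ENNReal.ofReal (Real.exp (-(γ / (2 * ζ)) / δ)) ^ i * (1 + V x + c * V y)
      ≤ (1 + R) * (h ^ i * (1 + V x + V y)) + A * h ^ i * ((1 + c) * (1 + V x + V y)) := by
        gcongr
        exact le_mul_of_le_of_one_le (by gcongr) hV
    _ = (1 + R + A * (1 + c)) * (1 + V x + V y) * h ^ i := by ring

end OneStep

/-! ### Propagation along coupled trajectories -/

section OneStepEstimates

variable {X A : Type*} [MeasurableSpace X] [MeasurableSpace A] {κ : Kernel X X} {V : X → ℝ≥0∞}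
  {a b : ℝ≥0∞}

lemma HasDrift.lintegral_add_le_of_isSubcoupling (h : HasDrift κ V a b) (hV : Measurable V)
    {x y : X} {ρ : Measure A} {ξ η : A → X} (hρ : IsSubcoupling ρ ξ η (κ x) (κ y)) :
    ∫⁻ ω, (V (ξ ω) + V (η ω)) ∂ρ ≤ a * (V x + V y) + 2 * b := by
  have hm : Measurable fun ω => V (ξ ω) := hV.comp hρ.measurable_left
  rw [lintegral_add_left hm]
  calc ∫⁻ ω, V (ξ ω) ∂ρ + ∫⁻ ω, V (η ω) ∂ρ ≤ (a * V x + b) + (a * V y + b) :=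
        add_le_add ((hρ.lintegral_left_le hV).trans (h x)) ((hρ.lintegral_right_le hV).trans (h y))
    _ = _ := by ring

lemma lintegral_one_add_sqrt_le {σ : Measure X} (hV : Measurable V) {t m v : ℝ≥0∞} (ht0 : t ≠ 0)
    (ht1 : t ≤ 1) (hσ : σ Set.univ ≤ m * t ^ 2) (hσV : ∫⁻ z, V z ∂σ ≤ v) :
    ∫⁻ z, (1 + V z ^ (1 / 2 : ℝ)) ∂σ ≤ (2 * m + v) * t := by
  have ht : t ≠ ⊤ := ne_top_of_le_ne_top ENNReal.one_ne_top ht1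
  calc ∫⁻ z, (1 + V z ^ (1 / 2 : ℝ)) ∂σ ≤ ∫⁻ z, (2 * t⁻¹ + t * V z) ∂σ := by
        refine lintegral_mono fun z => ?_
        calc 1 + V z ^ (1 / 2 : ℝ) ≤ t⁻¹ + (t⁻¹ + t * V z) :=
              add_le_add (ENNReal.one_le_inv.2 ht1) (sqrt_le_inv_add_mul ht0 ht _)
          _ = _ := by ring
    _ = 2 * t⁻¹ * σ Set.univ + t * ∫⁻ z, V z ∂σ := by
        rw [lintegral_add_left measurable_const, lintegral_const, lintegral_const_mul _ hV]
    _ ≤ 2 * t⁻¹ * (m * t ^ 2) + t * v := by gcongr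
    _ = 2 * m * t * (t⁻¹ * t) + t * v := by ring
    _ = (2 * m + v) * t := by rw [ENNReal.inv_mul_cancel ht0 ht]; ring

end OneStepEstimates

section Propagation

variable {X Ω : Type*} [MeasurableSpace X] [MeasurableSpace Ω]

/-- Pairs in `G i` are taken to `G (i + 1)` by a coupled step, except on an event of probability
at most `M (1 + V x + V y) h⁴ⁱ`. The constant `B` is chosen so that `V x + V y + B` grows at most
by the factor `h⁻¹` in one step. -/
structure LyapunovCoupling (P : Measure Ω) [IsProbabilityMeasure P] (Φ : X × Ω → X)
    (ψ : X → X → Ω → Ω) (V : X → ℝ≥0∞) (a b B h M : ℝ≥0∞) (G : ℕ → X → X → Prop) : Prop where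
  measurable_rds : Measurable Φ
  measurable_bind : Measurable fun p : (X × X) × Ω => ψ p.1.1 p.1.2 p.2
  measurable_lyapunov : Measurable V
  hasDrift : HasDrift (stepKernel P Φ) V a b
  rate_le_one : a ≤ 1
  one_le_offset : 1 ≤ B
  const_le_offset : b ≤ B
  mul_offset_le : h * (2 * b + B) ≤ B
  ne_zero : h ≠ 0
  le_one : h ≤ 1
  exists_step : ∀ i x y, G i x y → ∃ ρ, IsSubcoupling ρ id (ψ x y) P P ∧
    (∀ᵐ ω ∂ρ, G (i + 1) (Φ (x, ω)) (Φ (y, ψ x y ω))) ∧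
    1 ≤ ρ Set.univ + M * (1 + V x + V y) * h ^ (4 * i)

namespace LyapunovCoupling

variable {P : Measure Ω} [IsProbabilityMeasure P] {Φ : X × Ω → X} {ψ : X → X → Ω → Ω}
  {V : X → ℝ≥0∞} {a b B h M : ℝ≥0∞} {G : ℕ → X → X → Prop}

lemma one_le_offset_add (S : LyapunovCoupling P Φ ψ V a b B h M G) (x y : X) :
    1 + V x + V y ≤ V x + V y + B := by
  rw [add_assoc, add_comm]
  gcongr
  exact S.one_le_offset

lemma isSubcoupling_stepKernel (S : LyapunovCoupling P Φ ψ V a b B h M G) {x y : X}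
    {ρ : Measure Ω} (hρ : IsSubcoupling ρ id (ψ x y) P P) :
    IsSubcoupling ρ (fun ω => Φ (x, ω)) (fun ω => Φ (y, ψ x y ω)) (stepKernel P Φ x)
      (stepKernel P Φ y) := by
  rw [stepKernel_apply S.measurable_rds, stepKernel_apply S.measurable_rds]
  exact hρ.comp (S.measurable_rds.comp measurable_prodMk_left)
    (S.measurable_rds.comp measurable_prodMk_left)

lemma measurable_add_comp (S : LyapunovCoupling P Φ ψ V a b B h M G) {x y : X}
    {ρ : Measure Ω} (hρ : IsSubcoupling ρ id (ψ x y) P P) :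
    Measurable fun ω => V (Φ (x, ω)) + V (Φ (y, ψ x y ω)) :=
  (S.measurable_lyapunov.comp (S.isSubcoupling_stepKernel hρ).measurable_left).add
    (S.measurable_lyapunov.comp (S.isSubcoupling_stepKernel hρ).measurable_right)

lemma mul_lintegral_add_offset_le (S : LyapunovCoupling P Φ ψ V a b B h M G) {x y : X}
    {ρ : Measure Ω} (hρ : IsSubcoupling ρ id (ψ x y) P P) :
    h * ∫⁻ ω, (V (Φ (x, ω)) + V (Φ (y, ψ x y ω)) + B) ∂ρ ≤ V x + V y + B := by
  have hm : ρ Set.univ ≤ 1 := hρ.univ_le.trans_eq measure_univ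
  rw [lintegral_add_right _ measurable_const, lintegral_const]
  calc h * (∫⁻ ω, (V (Φ (x, ω)) + V (Φ (y, ψ x y ω))) ∂ρ + B * ρ Set.univ)
      ≤ h * ((1 * (V x + V y) + 2 * b) + B * 1) := by
        gcongr
        refine (S.hasDrift.lintegral_add_le_of_isSubcoupling S.measurable_lyapunov
          (S.isSubcoupling_stepKernel hρ)).trans ?_
        gcongr
        exact S.rate_le_one
    _ = h * (V x + V y) + h * (2 * b + B) := by ring
    _ ≤ V x + V y + B :=
        add_le_add (mul_le_of_le_one_left' S.le_one) S.mul_offset_le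

lemma pow_mul_lintegral_add_offset_le (S : LyapunovCoupling P Φ ψ V a b B h M G) {x y : X}
    {ρ : Measure Ω} (hρ : IsSubcoupling ρ id (ψ x y) P P) (E : ℝ≥0∞) (i : ℕ) :
    E * h ^ (2 * (i + 1)) * ∫⁻ ω, (V (Φ (x, ω)) + V (Φ (y, ψ x y ω)) + B) ∂ρ ≤
      E * h * h ^ (2 * i) * (V x + V y + B) :=
  calc E * h ^ (2 * (i + 1)) * ∫⁻ ω, (V (Φ (x, ω)) + V (Φ (y, ψ x y ω)) + B) ∂ρ
      = E * h * h ^ (2 * i) * (h * ∫⁻ ω, (V (Φ (x, ω)) + V (Φ (y, ψ x y ω)) + B) ∂ρ) := by ring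
    _ ≤ E * h * h ^ (2 * i) * (V x + V y + B) :=
        mul_le_mul' le_rfl (S.mul_lintegral_add_offset_le hρ)

/-- The mass `O(h⁴ⁱ)` of a failed coupling is traded against the unboundedness of `√V`, at the
price of half of the exponent. -/
lemma lintegral_one_add_sqrt_sub_le (S : LyapunovCoupling P Φ ψ V a b B h M G) {x y z : X}
    (hz : V z ≤ V x + V y) {i : ℕ} {σ : Measure X} [IsFiniteMeasure σ]
    (hσ : σ ≤ stepKernel P Φ z)
    (hm : 1 ≤ σ Set.univ + M * (1 + V x + V y) * h ^ (4 * i)) :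
    ∫⁻ z', (1 + V z' ^ (1 / 2 : ℝ)) ∂(stepKernel P Φ z - σ) ≤
      (2 * M + 1) * h ^ (2 * i) * (V x + V y + B) := by
  have := isMarkovKernel_stepKernel (P := P) S.measurable_rds
  have hmass : (stepKernel P Φ z - σ) Set.univ ≤ M * (V x + V y + B) * (h ^ (2 * i)) ^ 2 := by
    refine (sub_univ_le hσ (measure_univ.trans_le hm)).trans ?_
    rw [← pow_mul, show 2 * i * 2 = 4 * i by ring]
    gcongr ?_ * _
    gcongr M * ?_
    exact S.one_le_offset_add x y
  have hV : ∫⁻ z', V z' ∂(stepKernel P Φ z - σ) ≤ V x + V y + B :=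
    calc ∫⁻ z', V z' ∂(stepKernel P Φ z - σ) ≤ a * V z + b :=
          (lintegral_mono' Measure.sub_le le_rfl).trans (S.hasDrift z)
      _ ≤ V x + V y + B :=
          add_le_add ((mul_le_of_le_one_left' S.rate_le_one).trans hz) S.const_le_offset
  refine (lintegral_one_add_sqrt_le S.measurable_lyapunov (pow_ne_zero _ S.ne_zero)
    (pow_le_one₀ zero_le S.le_one) hmass hV).trans_eq ?_
  ring

lemma lintegral_affine_le (S : LyapunovCoupling P Φ ψ V a b B h M G) {x y : X} {ρ : Measure Ω}
    (hρ : IsSubcoupling ρ id (ψ x y) P P) (E α τ : ℝ≥0∞) :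
    ∫⁻ ω, (E * (V (Φ (x, ω)) + V (Φ (y, ψ x y ω)) + B) +
        (α * (V (Φ (x, ω)) + V (Φ (y, ψ x y ω))) + τ)) ∂ρ ≤
      E * ∫⁻ ω, (V (Φ (x, ω)) + V (Φ (y, ψ x y ω)) + B) ∂ρ +
        (α * (a * (V x + V y) + 2 * b) + τ) := by
  have hρX := S.isSubcoupling_stepKernel hρ
  have hm0 := S.measurable_add_comp hρ
  rw [lintegral_add_left ((hm0.add_const B).const_mul _), lintegral_const_mul _ (hm0.add_const B),
    lintegral_add_left (hm0.const_mul α), lintegral_const_mul _ hm0, lintegral_const]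
  gcongr
  · exact S.hasDrift.lintegral_add_le_of_isSubcoupling S.measurable_lyapunov hρX
  · exact mul_le_of_le_one_right' (hρ.univ_le.trans_eq measure_univ)

lemma enorm_iterMean_succ_sub_le (S : LyapunovCoupling P Φ ψ V a b B h M G) {g : X → ℝ}
    (hg : Measurable g) (hgb : ∀ z, |g z| ≤ 1) {k : ℕ} {A E α τ : ℝ≥0∞}
    (hcen : ∃ c : ℝ, ∀ z, ‖iterMean (stepKernel P Φ) g k z - c‖ₑ ≤ A * (1 + V z ^ (1 / 2 : ℝ)))
    {i : ℕ} {x y : X} (hG : G i x y)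
    (hnext : ∀ x' y', G (i + 1) x' y' →
      ‖iterMean (stepKernel P Φ) g k x' - iterMean (stepKernel P Φ) g k y'‖ₑ ≤
        E * h ^ (2 * (i + 1)) * (V x' + V y' + B) + (α * (V x' + V y') + τ)) :
    ‖iterMean (stepKernel P Φ) g (k + 1) x - iterMean (stepKernel P Φ) g (k + 1) y‖ₑ ≤
      (E * h + 2 * A * (2 * M + 1)) * h ^ (2 * i) * (V x + V y + B) +
        (α * (a * (V x + V y) + 2 * b) + τ) := by
  have := isMarkovKernel_stepKernel (P := P) S.measurable_rds
  obtain ⟨c, hc⟩ := hcen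
  obtain ⟨ρ, hρ, hρG, hρm⟩ := S.exists_step i x y hG
  have hρX := S.isSubcoupling_stepKernel hρ
  have := hρX.isFiniteMeasure
  set u := iterMean (stepKernel P Φ) g k
  have hcoupled : ∫⁻ ω, ‖u (Φ (x, ω)) - u (Φ (y, ψ x y ω))‖ₑ ∂ρ ≤
      E * h * h ^ (2 * i) * (V x + V y + B) + (α * (a * (V x + V y) + 2 * b) + τ) := by
    refine (lintegral_mono_ae (hρG.mono fun ω hω => hnext _ _ hω)).trans
      ((S.lintegral_affine_le hρ _ α τ).trans (add_le_add ?_ le_rfl))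
    exact S.pow_mul_lintegral_add_offset_le hρ E i
  have hfailed (σ : Measure X) (z : X) [IsFiniteMeasure σ] (hz : V z ≤ V x + V y)
      (hσ : σ ≤ stepKernel P Φ z) (hσρ : σ Set.univ = ρ Set.univ) :
      ∫⁻ z', A * (1 + V z' ^ (1 / 2 : ℝ)) ∂(stepKernel P Φ z - σ) ≤
        A * ((2 * M + 1) * h ^ (2 * i) * (V x + V y + B)) := by
    rw [lintegral_const_mul _ ((S.measurable_lyapunov.pow_const _).const_add 1)]
    gcongr
    exact S.lintegral_one_add_sqrt_sub_le hz hσ (hσρ ▸ hρm)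
  have hint (z : X) : Integrable u (stepKernel P Φ z) :=
    .of_bound (measurable_iterMean hg k).aestronglyMeasurable 1
      (ae_of_all _ (abs_iterMean_le hgb k))
  rw [iterMean_succ hg hgb, iterMean_succ hg hgb]
  refine (hρX.enorm_integral_sub_integral_le (hint x) (hint y) hc).trans
    ((add_le_add hcoupled (add_le_add (hfailed _ x le_self_add hρX.map_left_le ?_)
      (hfailed _ y le_add_self hρX.map_right_le ?_))).trans_eq (by ring))
  · rw [Measure.map_apply hρX.measurable_left .univ, Set.preimage_univ]
  · rw [Measure.map_apply hρX.measurable_right .univ, Set.preimage_univ]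

lemma mul_pow_le_mul_add_offset (S : LyapunovCoupling P Φ ψ V a b B h M G) (x y : X) (i : ℕ) :
    M * (1 + V x + V y) * h ^ (4 * i) ≤ M * h ^ (2 * i) * (V x + V y + B) :=
  (mul_le_mul' (mul_le_mul' le_rfl (S.one_le_offset_add x y))
    (pow_le_pow_right_of_le_one' S.le_one (by lia))).trans_eq (mul_right_comm _ _ _)

lemma lintegral_noiseLaw_le_XiInf_of_tail (S : LyapunovCoupling P Φ ψ V a b B h M G)
    {M₅ : ℝ≥0∞} (hM₅ : M₅ * h + M ≤ M₅) {i : ℕ} {x y : X} {ρ : Measure Ω}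
    (hρ : IsSubcoupling ρ id (ψ x y) P P)
    (hρm : 1 ≤ ρ Set.univ + M * (1 + V x + V y) * h ^ (4 * i)) {F : (ℕ → Ω) → ℝ≥0∞}
    (hF : Measurable F) (hF1 : ∀ ω, F ω ≤ 1)
    (htail : ∀ᵐ w ∂ρ, ∫⁻ ω, F (consSeq (ψ x y w) ω) ∂noiseLaw P ≤
      ∫⁻ ω, F (XiInf Φ ψ x y (consSeq w ω)) ∂noiseLaw P +
        M₅ * h ^ (2 * (i + 1)) * (V (Φ (x, w)) + V (Φ (y, ψ x y w)) + B)) :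
    ∫⁻ ω, F ω ∂noiseLaw P ≤ ∫⁻ ω, F (XiInf Φ ψ x y ω) ∂noiseLaw P +
      M₅ * h ^ (2 * i) * (V x + V y + B) := by
  have := hρ.isFiniteMeasure
  have hρm' : P Set.univ ≤ (ρ.map (ψ x y)) Set.univ + M * (1 + V x + V y) * h ^ (4 * i) := by
    rwa [Measure.map_apply hρ.measurable_right .univ, Set.preimage_univ, measure_univ]
  have hFi : Measurable fun w => ∫⁻ ω, F (consSeq w ω) ∂noiseLaw P :=
    (hF.comp measurable_consSeq).lintegral_prod_right'
  have hFΞ : Measurable fun ω => F (XiInf Φ ψ x y ω) :=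
    hF.comp (measurable_XiInf S.measurable_rds S.measurable_bind x y)
  have hm : Measurable fun w => V (Φ (x, w)) + V (Φ (y, ψ x y w)) + B :=
    (S.measurable_add_comp hρ).add_const B
  rw [lintegral_noiseLaw P hF, lintegral_noiseLaw P hFΞ]
  set I : Ω → ℝ≥0∞ := fun w => ∫⁻ ω, F (XiInf Φ ψ x y (consSeq w ω)) ∂noiseLaw P
  have hcoupled : ∫⁻ w, ∫⁻ ω, F (consSeq (ψ x y w) ω) ∂noiseLaw P ∂ρ ≤
      ∫⁻ w, I w ∂P + M₅ * h * h ^ (2 * i) * (V x + V y + B) := by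
    refine (lintegral_mono_ae htail).trans ?_
    rw [lintegral_add_right _ (hm.const_mul _), lintegral_const_mul _ hm]
    exact add_le_add (lintegral_mono' (Measure.map_id (μ := ρ) ▸ hρ.map_left_le) le_rfl)
      (S.pow_mul_lintegral_add_offset_le hρ M₅ i)
  calc ∫⁻ w, ∫⁻ ω, F (consSeq w ω) ∂noiseLaw P ∂P
      ≤ ∫⁻ w, ∫⁻ ω, F (consSeq (ψ x y w) ω) ∂noiseLaw P ∂ρ +
          M * (1 + V x + V y) * h ^ (4 * i) := by
        rw [← lintegral_map hFi hρ.measurable_right]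
        exact lintegral_le_add_of_le_one hρ.map_right_le hρm' fun w =>
          (lintegral_mono fun ω => hF1 _).trans (by simp)
    _ ≤ ∫⁻ w, I w ∂P + M₅ * h * h ^ (2 * i) * (V x + V y + B) +
          M * h ^ (2 * i) * (V x + V y + B) :=
        add_le_add hcoupled (S.mul_pow_le_mul_add_offset x y i)
    _ = ∫⁻ w, I w ∂P + (M₅ * h + M) * h ^ (2 * i) * (V x + V y + B) := by ring
    _ ≤ ∫⁻ w, I w ∂P + M₅ * h ^ (2 * i) * (V x + V y + B) := by gcongr

lemma lintegral_noiseLaw_le_XiInf (S : LyapunovCoupling P Φ ψ V a b B h M G) {M₅ : ℝ≥0∞}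
    (hM₅ : M₅ * h + M ≤ M₅) (k : ℕ) {i : ℕ} {x y : X} {F : (ℕ → Ω) → ℝ≥0∞} (hG : G i x y)
    (hF : Measurable F) (hF1 : ∀ ω, F ω ≤ 1) (hFk : ∀ ω ω', (∀ j < k, ω j = ω' j) → F ω = F ω') :
    ∫⁻ ω, F ω ∂noiseLaw P ≤ ∫⁻ ω, F (XiInf Φ ψ x y ω) ∂noiseLaw P +
      M₅ * h ^ (2 * i) * (V x + V y + B) := by
  induction k generalizing i x y F with
  | zero =>
    rw [lintegral_congr fun ω => hFk ω (XiInf Φ ψ x y ω) fun j hj => absurd hj j.not_lt_zero]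
    exact le_self_add
  | succ k ih =>
    obtain ⟨ρ, hρ, hρG, hρm⟩ := S.exists_step i x y hG
    refine S.lintegral_noiseLaw_le_XiInf_of_tail hM₅ hρ hρm hF hF1 ?_
    filter_upwards [hρG] with w hw
    simp only [XiInf_consSeq]
    refine ih hw (hF.comp (measurable_consSeq.comp measurable_prodMk_left)) (fun _ => hF1 _)
      fun ω ω' hω => hFk _ _ fun j hj => ?_
    cases j with
    | zero => rfl
    | succ j => exact hω j (Nat.lt_of_succ_lt_succ hj)

lemma one_le_inf_map_XiInf_univ_add (S : LyapunovCoupling P Φ ψ V a b B h M G) {M₅ : ℝ≥0∞}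
    (hM₅ : M₅ * h + M ≤ M₅) {i : ℕ} {x y : X} (hG : G i x y) :
    1 ≤ (noiseLaw P ⊓ (noiseLaw P).map fun ω => XiInf Φ ψ x y ω) Set.univ +
      M₅ * h ^ (2 * i) * (V x + V y + B) := by
  classical
  have hΞ := measurable_XiInf S.measurable_rds S.measurable_bind x y
  have : IsProbabilityMeasure ((noiseLaw P).map fun ω => XiInf Φ ψ x y ω) :=
    Measure.isProbabilityMeasure_map hΞ.aemeasurable
  rw [← measure_univ (μ := noiseLaw P)]
  refine univ_le_inf_univ_add fun E hE => measure_le_add_of_isSetRing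
    isSetRing_measurableCylinders (univ_mem_measurableCylinders _)
    generateFrom_measurableCylinders.symm (fun t ht => ?_) hE
  obtain ⟨s, S', -, rfl⟩ := (mem_measurableCylinders t).1 ht
  have ht := MeasurableSet.of_mem_measurableCylinders ht
  have hdep (ω ω' : ℕ → Ω) (hω : ∀ j < s.sup id + 1, ω j = ω' j) :
      (cylinder s S').indicator (1 : (ℕ → Ω) → ℝ≥0∞) ω = (cylinder s S').indicator 1 ω' := by
    have hrestrict : s.restrict ω = s.restrict ω' :=
      funext fun j => hω j (Nat.lt_succ_of_le (Finset.le_sup (f := id) j.2))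
    simp only [Set.indicator, mem_cylinder, hrestrict]
    rfl
  have := S.lintegral_noiseLaw_le_XiInf hM₅ (s.sup id + 1) hG (measurable_one.indicator ht)
    (fun ω => Set.indicator_le_self' (fun _ _ => zero_le_one) ω) hdep
  rwa [lintegral_indicator_one ht, ← lintegral_map (measurable_one.indicator ht) hΞ,
    lintegral_indicator_one ht] at this

end LyapunovCoupling

end Propagation

/-! ### Transferring the binding estimate to transition probabilities -/

section AlmostInvariant

variable {A : Type*} [MeasurableSpace A] {μ : Measure A} [IsProbabilityMeasure μ] {T : A → A}
  {d : ℝ≥0∞}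

lemma enorm_integral_sub_integral_le_of_univ_inf_map (hT : Measurable T)
    (hd : 1 ≤ (μ ⊓ μ.map T) Set.univ + d) {f f' : A → ℝ} (hf : Measurable f)
    (hf' : Measurable f') (hfb : ∀ ω, |f ω| ≤ 1) (hfb' : ∀ ω, |f' ω| ≤ 1) :
    ‖∫ ω, f ω ∂μ - ∫ ω, f' ω ∂μ‖ₑ ≤
      ‖∫ ω, f ω ∂(μ ⊓ μ.map T) - ∫ ω, f' (T ω) ∂(μ ⊓ μ.map T)‖ₑ + 4 * d := by
  have : IsProbabilityMeasure (μ.map T) := Measure.isProbabilityMeasure_map hT.aemeasurable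
  have hdμ : μ Set.univ ≤ (μ ⊓ μ.map T) Set.univ + d := measure_univ.trans_le hd
  have hdT : μ.map T Set.univ ≤ (μ ⊓ μ.map T) Set.univ + d := measure_univ.trans_le hd
  set σ := μ ⊓ μ.map T
  have hσ : σ ≤ μ := inf_le_left
  have hσT : σ ≤ μ.map T := inf_le_right
  have hfσ := enorm_integral_sub_integral_le_of_le hσ hdμ hf hfb
  have hfTσ := enorm_integral_sub_integral_le_of_le hσ hdμ (hf'.comp hT) fun _ => hfb' _
  have hf'T := enorm_integral_sub_integral_le_of_le hσT hdT hf' hfb'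
  have hf'σ := enorm_integral_sub_integral_le_of_le hσ hdμ hf' hfb'
  rw [integral_map hT.aemeasurable hf'.aestronglyMeasurable] at hf'T
  simp only [Function.comp_apply] at hfTσ
  simp only [← edist_eq_enorm_sub] at *
  calc edist (∫ ω, f ω ∂μ) (∫ ω, f' ω ∂μ)
      ≤ d + (edist (∫ ω, f ω ∂σ) (∫ ω, f' (T ω) ∂σ) + (d + (d + d))) :=
        (edist_triangle _ _ _).trans (add_le_add hfσ
          ((edist_triangle _ _ _).trans (add_le_add le_rfl
            ((edist_triangle_left _ _ _).trans (add_le_add hfTσ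
              ((edist_triangle _ _ _).trans (add_le_add hf'T ((edist_comm _ _).trans_le hf'σ))))))))
    _ = _ := by ring

end AlmostInvariant

section Binding

variable {X Ω : Type*} [MeasurableSpace X] [MeasurableSpace Ω] {Φ : X × Ω → X}
  {ψ : X → X → Ω → Ω}

lemma integral_map_fst_QInf (μ : Measure (ℕ → Ω)) (hΦ : Measurable Φ)
    (hψ : Measurable fun p : (X × X) × Ω => ψ p.1.1 p.1.2 p.2) {g : X → ℝ} (hg : Measurable g)
    (x y : X) (n : ℕ) :
    ∫ z, g z ∂((QInf μ Φ ψ x y).map fun q : (ℕ → X) × (ℕ → X) => q.1 n) =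
      ∫ ω, g (traj Φ x ω n) ∂(μ ⊓ μ.map fun ω => XiInf Φ ψ x y ω) := by
  have hn : Measurable fun q : (ℕ → X) × (ℕ → X) => q.1 n :=
    (measurable_pi_apply n).comp measurable_fst
  have hpair := measurable_traj2_paths hΦ hψ x y
  rw [QInf, Measure.map_map hn hpair,
    integral_map (hn.comp hpair).aemeasurable hg.aestronglyMeasurable]
  simp only [Function.comp_apply, traj2_fst]

lemma integral_map_snd_QInf (μ : Measure (ℕ → Ω)) (hΦ : Measurable Φ)
    (hψ : Measurable fun p : (X × X) × Ω => ψ p.1.1 p.1.2 p.2) {g : X → ℝ} (hg : Measurable g)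
    (x y : X) (n : ℕ) :
    ∫ z, g z ∂((QInf μ Φ ψ x y).map fun q : (ℕ → X) × (ℕ → X) => q.2 n) =
      ∫ ω, g (traj Φ y (XiInf Φ ψ x y ω) n) ∂(μ ⊓ μ.map fun ω => XiInf Φ ψ x y ω) := by
  have hn : Measurable fun q : (ℕ → X) × (ℕ → X) => q.2 n :=
    (measurable_pi_apply n).comp measurable_snd
  have hpair := measurable_traj2_paths hΦ hψ x y
  rw [QInf, Measure.map_map hn hpair,
    integral_map (hn.comp hpair).aemeasurable hg.aestronglyMeasurable]
  simp only [Function.comp_apply, traj2_snd]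

variable {P : Measure Ω} [IsProbabilityMeasure P] {V : X → ℝ≥0∞} {a b B h M : ℝ≥0∞}
  {G : ℕ → X → X → Prop}

lemma LyapunovCoupling.enorm_iterMean_sub_le_of_QInf (S : LyapunovCoupling P Φ ψ V a b B h M G)
    {M₅ : ℝ≥0∞} (hM₅ : M₅ * h + M ≤ M₅) {g : X → ℝ} (hg : Measurable g) (hgb : ∀ z, |g z| ≤ 1)
    {i : ℕ} {x y : X} (hG : G i x y) {n : ℕ} {R : ℝ}
    (hR : |(∫ z, g z ∂((QInf (noiseLaw P) Φ ψ x y).map fun q : (ℕ → X) × (ℕ → X) => q.1 n)) -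
      ∫ z, g z ∂((QInf (noiseLaw P) Φ ψ x y).map fun q : (ℕ → X) × (ℕ → X) => q.2 n)| ≤ R) :
    ‖iterMean (stepKernel P Φ) g n x - iterMean (stepKernel P Φ) g n y‖ₑ ≤
      ENNReal.ofReal R + 4 * (M₅ * h ^ (2 * i) * (V x + V y + B)) := by
  have htraj (z : X) := measurable_traj S.measurable_rds z n
  have hmean (z : X) :
      iterMean (stepKernel P Φ) g n z = ∫ ω, g (traj Φ z ω n) ∂noiseLaw P := by
    rw [iterMean, ← map_traj_noiseLaw S.measurable_rds,
      integral_map (htraj z).aemeasurable hg.aestronglyMeasurable]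
  rw [integral_map_fst_QInf _ S.measurable_rds S.measurable_bind hg,
    integral_map_snd_QInf _ S.measurable_rds S.measurable_bind hg] at hR
  rw [hmean, hmean]
  refine (enorm_integral_sub_integral_le_of_univ_inf_map
    (measurable_XiInf S.measurable_rds S.measurable_bind x y)
    (S.one_le_inf_map_XiInf_univ_add hM₅ hG) (hg.comp (htraj x)) (hg.comp (htraj y))
    (fun _ => hgb _) fun _ => hgb _).trans (add_le_add ?_ le_rfl)
  rw [← ofReal_norm]
  exact ENNReal.ofReal_le_ofReal hR

end Binding

/-! ### Decay along well-coupled trajectories -/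

section Decay

variable {X Ω : Type*} [MeasurableSpace X] [MeasurableSpace Ω]

lemma enorm_iterMean_sub_le_two {κ : Kernel X X} [IsMarkovKernel κ] {g : X → ℝ}
    (hgb : ∀ z, |g z| ≤ 1) (n : ℕ) (x y : X) :
    ‖iterMean κ g n x - iterMean κ g n y‖ₑ ≤ 2 := by
  rw [← ofReal_norm, ← ENNReal.ofReal_ofNat 2]
  refine ENNReal.ofReal_le_ofReal ((norm_sub_le _ _).trans ?_)
  linarith [abs_iterMean_le (κ := κ) hgb n x, abs_iterMean_le (κ := κ) hgb n y,
    Real.norm_eq_abs (iterMean κ g n x), Real.norm_eq_abs (iterMean κ g n y)]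

namespace LyapunovCoupling

variable {P : Measure Ω} [IsProbabilityMeasure P] {Φ : X × Ω → X} {ψ : X → X → Ω → Ω}
  {V : X → ℝ≥0∞} {a b B h M : ℝ≥0∞} {G : ℕ → X → X → Prop} {g : X → ℝ} {A M₃ q : ℝ≥0∞}

lemma enorm_iterMean_succ_sub_le_of_rate (S : LyapunovCoupling P Φ ψ V a b B h M G)
    (hg : Measurable g) (hgb : ∀ z, |g z| ≤ 1) (hM₃ : M₃ * h + 2 * (2 * M + 1) ≤ M₃ * q)
    {k : ℕ} {α τ : ℝ≥0∞}
    (hcen : ∃ c : ℝ, ∀ z,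
      ‖iterMean (stepKernel P Φ) g k z - c‖ₑ ≤ A * q ^ k * (1 + V z ^ (1 / 2 : ℝ)))
    {i : ℕ} {x y : X} (hG : G i x y)
    (hnext : ∀ x' y', G (i + 1) x' y' →
      ‖iterMean (stepKernel P Φ) g k x' - iterMean (stepKernel P Φ) g k y'‖ₑ ≤
        A * M₃ * q ^ k * h ^ (2 * (i + 1)) * (V x' + V y' + B) + (α * (V x' + V y') + τ)) :
    ‖iterMean (stepKernel P Φ) g (k + 1) x - iterMean (stepKernel P Φ) g (k + 1) y‖ₑ ≤
      A * M₃ * q ^ (k + 1) * h ^ (2 * i) * (V x + V y + B) +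
        (α * (a * (V x + V y) + 2 * b) + τ) := by
  refine (S.enorm_iterMean_succ_sub_le hg hgb hcen hG hnext).trans (add_le_add ?_ le_rfl)
  calc (A * M₃ * q ^ k * h + 2 * (A * q ^ k) * (2 * M + 1)) * h ^ (2 * i) * (V x + V y + B)
      = A * q ^ k * (M₃ * h + 2 * (2 * M + 1)) * h ^ (2 * i) * (V x + V y + B) := by ring
    _ ≤ A * q ^ k * (M₃ * q) * h ^ (2 * i) * (V x + V y + B) := by gcongr
    _ = _ := by ring

variable {k₀ τ : ℝ≥0∞} {n s : ℕ}

/-- Within `k` steps the pair either visits the sublevel set `{V x + V y ≤ k₀}`, where the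
difference is at most `τ`, or `V x + V y` shrinks in the mean by `h²` in every step. -/
lemma enorm_iterMean_sub_le_of_returns (S : LyapunovCoupling P Φ ψ V a b B h M G)
    (hg : Measurable g) (hgb : ∀ z, |g z| ≤ 1) (hM₃ : M₃ * h + 2 * (2 * M + 1) ≤ M₃ * q)
    (hcen : ∀ k < n, ∃ c : ℝ, ∀ z,
      ‖iterMean (stepKernel P Φ) g k z - c‖ₑ ≤ A * q ^ k * (1 + V z ^ (1 / 2 : ℝ)))
    (hk₀ : 1 ≤ k₀) (hdrift : ∀ v, k₀ < v → a * v + 2 * b ≤ h ^ 2 * v)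
    (hsmall : ∀ i j x y, s ≤ i → s ≤ j → G i x y → V x + V y ≤ k₀ →
      ‖iterMean (stepKernel P Φ) g j x - iterMean (stepKernel P Φ) g j y‖ₑ ≤ τ)
    {i j k : ℕ} (hi : s ≤ i) (hkj : s + k ≤ j) (hjn : j ≤ n) {x y : X} (hG : G i x y) :
    ‖iterMean (stepKernel P Φ) g j x - iterMean (stepKernel P Φ) g j y‖ₑ ≤
      A * M₃ * q ^ j * h ^ (2 * i) * (V x + V y + B) + (2 * h ^ (2 * k) * (V x + V y) + τ) := by
  have := isMarkovKernel_stepKernel (P := P) S.measurable_rds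
  induction k generalizing i j x y with
  | zero =>
    refine le_trans ?_ le_add_self
    rcases le_or_gt (V x + V y) k₀ with hv | hv
    · exact (hsmall i j x y hi hkj hG hv).trans le_add_self
    · refine (enorm_iterMean_sub_le_two hgb j x y).trans (le_trans ?_ le_self_add)
      rw [mul_zero, pow_zero, mul_one]
      exact le_mul_of_one_le_right' (hk₀.trans hv.le)
  | succ k ih =>
    obtain ⟨j, rfl⟩ : ∃ j', j = j' + 1 := ⟨j - 1, by lia⟩
    rcases le_or_gt (V x + V y) k₀ with hv | hv
    · exact (hsmall i _ x y hi (by lia) hG hv).trans (le_add_self.trans le_add_self)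
    refine (S.enorm_iterMean_succ_sub_le_of_rate hg hgb hM₃ (hcen j hjn) hG fun x' y' hG' =>
      ih (by lia) (by lia) (by lia) hG').trans (add_le_add le_rfl (add_le_add ?_ le_rfl))
    calc 2 * h ^ (2 * k) * (a * (V x + V y) + 2 * b)
        ≤ 2 * h ^ (2 * k) * (h ^ 2 * (V x + V y)) := mul_le_mul' le_rfl (hdrift _ hv)
      _ = 2 * h ^ (2 * (k + 1)) * (V x + V y) := by ring

lemma mul_mean_add_offset_le (S : LyapunovCoupling P Φ ψ V a b B h M G) (x y : X) :
    a * (V x + V y) + 2 * b + B ≤ h⁻¹ * (V x + V y + B) := by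
  rw [mul_comm h⁻¹, ← div_eq_mul_inv, ENNReal.le_div_iff_mul_le (.inl S.ne_zero)
    (.inl (ne_top_of_le_ne_top ENNReal.one_ne_top S.le_one))]
  calc (a * (V x + V y) + 2 * b + B) * h
      ≤ (V x + V y + 2 * b + B) * h := by
        gcongr
        exact mul_le_of_le_one_left' S.rate_le_one
    _ = (V x + V y) * h + h * (2 * b + B) := by ring
    _ ≤ V x + V y + B := add_le_add (mul_le_of_le_one_right' S.le_one) S.mul_offset_le

/-- During `k` preliminary steps the index `i` of `G` grows to at least `s`, at the price of a
factor `h⁻¹` per step. -/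
lemma enorm_iterMean_sub_le_of_matures (S : LyapunovCoupling P Φ ψ V a b B h M G)
    (hg : Measurable g) (hgb : ∀ z, |g z| ≤ 1) (hM₃ : M₃ * h + 2 * (2 * M + 1) ≤ M₃ * q)
    (hcen : ∀ k < n, ∃ c : ℝ, ∀ z,
      ‖iterMean (stepKernel P Φ) g k z - c‖ₑ ≤ A * q ^ k * (1 + V z ^ (1 / 2 : ℝ)))
    (hk₀ : 1 ≤ k₀) (hdrift : ∀ v, k₀ < v → a * v + 2 * b ≤ h ^ 2 * v)
    (hsmall : ∀ i j x y, s ≤ i → s ≤ j → G i x y → V x + V y ≤ k₀ →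
      ‖iterMean (stepKernel P Φ) g j x - iterMean (stepKernel P Φ) g j y‖ₑ ≤ τ)
    {i j k : ℕ} (hik : s ≤ i + k) (hkj : 2 * s + k ≤ j) (hjn : j ≤ n) {x y : X}
    (hG : G i x y) :
    ‖iterMean (stepKernel P Φ) g j x - iterMean (stepKernel P Φ) g j y‖ₑ ≤
      A * M₃ * q ^ j * h ^ (2 * i) * (V x + V y + B) +
        (2 * h ^ (2 * s) * h⁻¹ ^ k * (V x + V y + B) + τ) := by
  induction k generalizing i j x y with
  | zero =>
    refine (S.enorm_iterMean_sub_le_of_returns hg hgb hM₃ hcen hk₀ hdrift hsmall (k := s) hik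
      (by lia) hjn hG).trans ?_
    rw [pow_zero, mul_one]
    exact add_le_add le_rfl (add_le_add (mul_le_mul' le_rfl le_self_add) le_rfl)
  | succ k ih =>
    obtain ⟨j, rfl⟩ : ∃ j', j = j' + 1 := ⟨j - 1, by lia⟩
    set α := 2 * h ^ (2 * s) * h⁻¹ ^ k with hα
    refine (S.enorm_iterMean_succ_sub_le_of_rate hg hgb hM₃ (α := α) (τ := α * B + τ)
      (hcen j hjn) hG fun x' y' hG' => (ih (by lia) (by lia) (by lia) hG').trans_eq ?_).trans
      (add_le_add le_rfl ?_)
    · ring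
    · calc α * (a * (V x + V y) + 2 * b) + (α * B + τ)
          = α * (a * (V x + V y) + 2 * b + B) + τ := by ring
        _ ≤ α * (h⁻¹ * (V x + V y + B)) + τ := by
          gcongr α * ?_ + _
          exact S.mul_mean_add_offset_le x y
        _ = _ := by rw [hα]; ring

lemma enorm_iterMean_sub_le_of_binding (S : LyapunovCoupling P Φ ψ V a b B h M G)
    (hg : Measurable g) (hgb : ∀ z, |g z| ≤ 1) (hM₃ : M₃ * h + 2 * (2 * M + 1) ≤ M₃ * q)
    (hcen : ∀ k < n, ∃ c : ℝ, ∀ z,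
      ‖iterMean (stepKernel P Φ) g k z - c‖ₑ ≤ A * q ^ k * (1 + V z ^ (1 / 2 : ℝ)))
    (hk₀ : 1 ≤ k₀) (hdrift : ∀ v, k₀ < v → a * v + 2 * b ≤ h ^ 2 * v) {R : ℝ≥0∞}
    (hR : ∀ i j x y, G i x y → V x + V y ≤ k₀ →
      ‖iterMean (stepKernel P Φ) g j x - iterMean (stepKernel P Φ) g j y‖ₑ ≤
        R * (h ^ (2 * j) + h ^ (2 * i)))
    {N : ℕ} (hs : 3 * s ≤ n) (hN : N ≤ s) {x y : X} (hG : G N x y) :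
    ‖iterMean (stepKernel P Φ) g (n - N) x - iterMean (stepKernel P Φ) g (n - N) y‖ₑ ≤
      A * M₃ * q ^ (n - N) * h ^ (2 * N) * (V x + V y + B) +
        (2 + 2 * R) * h ^ s * (V x + V y + B) := by
  have hpow {i j : ℕ} (hij : i ≤ j) : h ^ j ≤ h ^ i := pow_le_pow_right_of_le_one' S.le_one hij
  have hsmall (i j : ℕ) (x y : X) (hi : s ≤ i) (hj : s ≤ j) (hG : G i x y)
      (hv : V x + V y ≤ k₀) :
      ‖iterMean (stepKernel P Φ) g j x - iterMean (stepKernel P Φ) g j y‖ₑ ≤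
        2 * R * h ^ (2 * s) := by
    calc _ ≤ R * (h ^ (2 * j) + h ^ (2 * i)) := hR i j x y hG hv
      _ ≤ R * (h ^ (2 * s) + h ^ (2 * s)) :=
        mul_le_mul' le_rfl (add_le_add (hpow (by lia)) (hpow (by lia)))
      _ = 2 * R * h ^ (2 * s) := by ring
  refine (S.enorm_iterMean_sub_le_of_matures hg hgb hM₃ hcen hk₀ hdrift hsmall (k := s - N)
    (by lia) (by lia) (by lia) hG).trans (add_le_add le_rfl ?_)
  rw [add_mul, add_mul]
  refine add_le_add (mul_le_mul' ?_ le_rfl) ?_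
  · calc 2 * h ^ (2 * s) * h⁻¹ ^ (s - N) ≤ 2 * h ^ (2 * s) * h⁻¹ ^ s := by
          gcongr
          · exact ENNReal.one_le_inv.2 S.le_one
          · lia
      _ = 2 * h ^ s * (h * h⁻¹) ^ s := by ring
      _ = 2 * h ^ s := by
          rw [ENNReal.mul_inv_cancel S.ne_zero (ne_top_of_le_ne_top ENNReal.one_ne_top S.le_one),
            one_pow, mul_one]
  · calc 2 * R * h ^ (2 * s) ≤ 2 * R * h ^ s := mul_le_mul' le_rfl (hpow (by lia))
      _ ≤ 2 * R * h ^ s * (V x + V y + B) :=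
        le_mul_of_one_le_right' (S.one_le_offset.trans le_add_self)

end LyapunovCoupling

end Decay

/-! ### Coupling a block of steps with positive probability -/

section Block

variable {X Ω : Type*} {Φ : X × Ω → X} {ψ : X → X → Ω → Ω} {W : X → Ω → ℝ≥0∞}

/-- The cost `W(x_j, ω_j) + W(y_j, ω'_j)` of step `j` of the coupled trajectory driven by the noises
`ω` and `ω' = Ξ^∞_{x,y}(ω)`. -/
def coupledCost (Φ : X × Ω → X) (ψ : X → X → Ω → Ω) (W : X → Ω → ℝ≥0∞) (x y : X) (ω : ℕ → Ω)
    (j : ℕ) : ℝ≥0∞ :=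
  W (traj2 Φ ψ x y ω j).1 (ω j) + W (traj2 Φ ψ x y ω j).2 (XiInf Φ ψ x y ω j)

lemma traj2_mem_QSetIter {K : ℝ≥0∞} {x y : X} {ω : ℕ → Ω} {n : ℕ}
    (h : ∀ j < n, coupledCost Φ ψ W x y ω j ≤ K) :
    traj2 Φ ψ x y ω n ∈ QSetIter Φ ψ W K x y n := by
  induction n with
  | zero => exact rfl
  | succ n ih => exact mem_QSetIter_succ (ih fun j hj => h j (by lia)) (h n n.lt_add_one)

lemma traj2_extSeq_snd [Nonempty Ω] (x y : X) {n j : ℕ} (f : Fin n → Ω) (hj : j ≤ n) :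
    (traj2 Φ ψ x y (extSeq f) j).2 = traj Φ y (extSeq (XiFin Φ ψ n x y f)) j := by
  rw [traj2_snd]
  refine traj_congr Φ y j fun l hl => ?_
  rw [extSeq_of_lt _ (hl.trans_le hj)]
  rfl

variable [MeasurableSpace X] [MeasurableSpace Ω]

lemma measurable_coupledCost (hΦ : Measurable Φ)
    (hψ : Measurable fun p : (X × X) × Ω => ψ p.1.1 p.1.2 p.2)
    (hW : Measurable fun p : X × Ω => W p.1 p.2) (x y : X) (j : ℕ) :
    Measurable fun ω => coupledCost Φ ψ W x y ω j :=
  (hW.comp ((measurable_traj2 hΦ hψ x y j).fst.prodMk (measurable_pi_apply j))).add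
    (hW.comp ((measurable_traj2 hΦ hψ x y j).snd.prodMk
      ((measurable_pi_apply j).comp (measurable_XiInf hΦ hψ x y))))

variable {P : Measure Ω} {ψinv : X → X → Ω → Ω} {V : X → ℝ≥0∞} {a b c C : ℝ≥0∞} {δ : ℝ}

lemma tendsto_natCast_mul_pow_nhds_zero {r : ℝ} (hr : 0 ≤ r) (hr1 : r < 1) :
    Filter.Tendsto (fun n : ℕ => (n : ℝ≥0∞) * ENNReal.ofReal r ^ n) Filter.atTop (nhds 0) := by
  have := ENNReal.tendsto_ofReal (tendsto_self_mul_const_pow_of_lt_one hr hr1)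
  simpa only [ENNReal.ofReal_zero, ENNReal.ofReal_mul (Nat.cast_nonneg _),
    ENNReal.ofReal_natCast, ENNReal.ofReal_pow hr] using this

lemma IsNoiseCost.eventually_mul_rpow_le (hW : IsNoiseCost P ψ ψinv V W c C δ) {K ε : ℝ}
    (hK : 0 < K) (hε : 0 < ε) {Z p : ℝ≥0∞} (hZ : Z ≠ ⊤) (hp : p ≠ 0) :
    ∀ᶠ n : ℕ in Filter.atTop,
      n * ((C / ENNReal.ofReal (K * Real.exp (ε * n))) ^ (1 / δ) * Z) ≤ p := by
  have hR : (C / ENNReal.ofReal K) ^ (1 / δ) * Z ≠ ⊤ :=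
    ENNReal.mul_ne_top (ENNReal.rpow_ne_top_of_nonneg (one_div_nonneg.2 hW.exponent_pos.le)
      (ENNReal.div_ne_top hW.growth_const_ne_top (by simpa using hK))) hZ
  have hr : Real.exp (-ε / δ) < 1 :=
    Real.exp_lt_one_iff.2 (div_neg_of_neg_of_pos (neg_neg_of_pos hε) hW.exponent_pos)
  have hlim := ENNReal.Tendsto.const_mul
    (tendsto_natCast_mul_pow_nhds_zero (Real.exp_pos _).le hr) (.inr hR)
  rw [mul_zero] at hlim
  filter_upwards [hlim.eventually_lt_const (pos_iff_ne_zero.2 hp)] with n hn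
  rw [div_mul_exp_rpow C hK hW.exponent_pos]
  refine le_trans (le_of_eq ?_) hn.le
  ring

variable [Nonempty Ω]

lemma measurableSet_exists_lt_coupledCost (hΦ : Measurable Φ)
    (hψ : Measurable fun p : (X × X) × Ω => ψ p.1.1 p.1.2 p.2)
    (hW : Measurable fun p : X × Ω => W p.1 p.2) (κ : ℝ≥0∞) (n : ℕ) (x y : X) :
    MeasurableSet {f : Fin n → Ω | ∃ j < n, κ < coupledCost Φ ψ W x y (extSeq f) j} := by
  simp only [Set.ofPred_exists, ← exists_prop]
  exact .iUnion fun j => .iUnion fun _ => measurableSet_lt measurable_const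
    ((measurable_coupledCost hΦ hψ hW x y j).comp (measurable_extSeq n))

variable [IsProbabilityMeasure P]

lemma lintegral_extSeq_pi {n : ℕ} {F : (ℕ → Ω) → ℝ≥0∞} (hF : Measurable F)
    (hn : ∀ ω ω' : ℕ → Ω, (∀ j < n, ω j = ω' j) → F ω = F ω') :
    ∫⁻ f, F (extSeq f) ∂(Measure.pi fun _ : Fin n => P) = ∫⁻ ω, F ω ∂noiseLaw P := by
  have hm : Measurable fun f : Fin n → Ω => F (extSeq f) := hF.comp (measurable_extSeq n)
  rw [← map_finRestrict_noiseLaw P n, lintegral_map hm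
    (measurable_pi_lambda _ fun i => measurable_pi_apply _)]
  exact lintegral_congr fun ω => hn _ _ fun j hj => extSeq_of_lt _ hj

lemma map_traj_extSeq_pi (hΦ : Measurable Φ) {n j : ℕ} (hj : j ≤ n) (x : X) :
    (Measure.pi fun _ : Fin n => P).map (fun f => traj Φ x (extSeq f) j) =
      (stepKernel P Φ ^ j) x := by
  rw [← map_traj_noiseLaw hΦ]
  refine Measure.ext_of_lintegral _ fun F hF => ?_
  have hm := measurable_traj hΦ x j
  have hmn : Measurable fun f : Fin n → Ω => traj Φ x (extSeq f) j := hm.comp (measurable_extSeq n)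
  rw [lintegral_map hF hmn, lintegral_map hF hm]
  exact lintegral_extSeq_pi (hF.comp hm) fun ω ω' hω =>
    congrArg F (traj_congr Φ x j fun l hl => hω l (hl.trans_le hj))

lemma isSubcoupling_traj2 (hΦ : Measurable Φ) {n : ℕ} {x y : X} {ρ : Measure (Fin n → Ω)}
    (hρ : IsSubcoupling ρ id (XiFin Φ ψ n x y) (Measure.pi fun _ => P) (Measure.pi fun _ => P))
    {j : ℕ} (hj : j ≤ n) :
    IsSubcoupling ρ (fun f => (traj2 Φ ψ x y (extSeq f) j).1)
      (fun f => (traj2 Φ ψ x y (extSeq f) j).2) ((stepKernel P Φ ^ j) x)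
      ((stepKernel P Φ ^ j) y) := by
  have hm (z : X) : Measurable fun f : Fin n → Ω => traj Φ z (extSeq f) j :=
    (measurable_traj hΦ z j).comp (measurable_extSeq n)
  simp only [traj2_fst, traj2_extSeq_snd x y _ hj]
  simpa only [map_traj_extSeq_pi hΦ hj, Function.comp_apply, id_eq] using
    hρ.comp (hm x) (hm y)

lemma IsNoiseCost.measure_lt_coupledCost_le (hW : IsNoiseCost P ψ ψinv V W c C δ)
    (hB : IsBinding Φ ψ ψinv) (hV : Measurable V) (hL : HasDrift (stepKernel P Φ) V a b)
    (ha : a ≤ 1) {κ : ℝ≥0∞} (hκ0 : κ ≠ 0) (hκ : κ ≠ ⊤) {n : ℕ} {x y : X}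
    {ρ : Measure (Fin n → Ω)}
    (hρ : IsSubcoupling ρ id (XiFin Φ ψ n x y) (Measure.pi fun _ => P) (Measure.pi fun _ => P))
    {j : ℕ} (hj : j < n) :
    ρ {f | κ < coupledCost Φ ψ W x y (extSeq f) j} ≤
      (C / κ) ^ (1 / δ) * (1 + (V y + b * (1 - a)⁻¹) + c * (V x + b * (1 - a)⁻¹)) := by
  have := isMarkovKernel_stepKernel (P := P) hB.measurable_rds
  have hρj := isSubcoupling_traj2 hB.measurable_rds hρ hj.le
  have hmV : Measurable fun f => V (traj2 Φ ψ x y (extSeq f) j).2 := hV.comp hρj.measurable_right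
  have hmW : Measurable fun ω : ℕ → Ω => W (traj Φ x ω j) (ω j) :=
    hW.measurable.comp ((measurable_traj hB.measurable_rds x j).prodMk (measurable_pi_apply j))
  have hVy : ∫⁻ f, V (traj2 Φ ψ x y (extSeq f) j).2 ∂ρ ≤ V y + b * (1 - a)⁻¹ :=
    (hρj.lintegral_right_le hV).trans (hL.lintegral_pow_le hV ha j y)
  have hWx : ∫⁻ f, W (traj Φ x (extSeq f) j) (extSeq f j) ∂ρ ≤ c * (V x + b * (1 - a)⁻¹) :=
    calc ∫⁻ f, W (traj Φ x (extSeq f) j) (extSeq f j) ∂ρ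
        ≤ ∫⁻ f, W (traj Φ x (extSeq f) j) (extSeq f j) ∂(Measure.pi fun _ : Fin n => P) :=
          hρ.lintegral_left_le (hmW.comp (measurable_extSeq n))
      _ = ∫⁻ ω, W (traj Φ x ω j) (ω j) ∂noiseLaw P :=
          lintegral_extSeq_pi hmW fun ω ω' hω => by
            rw [traj_congr Φ x j fun l hl => hω l (hl.trans hj), hω j hj]
      _ ≤ c * ∫⁻ z, V z ∂(stepKernel P Φ ^ j) x :=
          lintegral_noise_along_traj_le hB.measurable_rds hV hW.measurable hW.lintegral_le j x
      _ ≤ c * (V x + b * (1 - a)⁻¹) := mul_le_mul' le_rfl (hL.lintegral_pow_le hV ha j x)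
  refine (measure_le_lintegral_of_le_mul_rpow (F := fun f => 1 +
    V (traj2 Φ ψ x y (extSeq f) j).2 + W (traj Φ x (extSeq f) j) (extSeq f j))
    ((hmV.const_add 1).add (hmW.comp (measurable_extSeq n))) hκ0 hκ hW.exponent_pos
    fun f hf => ?_).trans (mul_le_mul' le_rfl ?_)
  · rw [← traj2_fst Φ ψ x y]
    exact hf.le.trans (hW.bind_le _ _ _)
  · rw [lintegral_add_left (hmV.const_add 1), lintegral_add_left measurable_const, lintegral_one]
    exact add_le_add (add_le_add (hρ.univ_le.trans_eq measure_univ) hVy) hWx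

lemma IsNoiseCost.measure_exists_lt_coupledCost_le (hW : IsNoiseCost P ψ ψinv V W c C δ)
    (hB : IsBinding Φ ψ ψinv) (hV : Measurable V) (hL : HasDrift (stepKernel P Φ) V a b)
    (ha : a ≤ 1) {κ : ℝ≥0∞} (hκ0 : κ ≠ 0) (hκ : κ ≠ ⊤) {n : ℕ} {x y : X}
    {ρ : Measure (Fin n → Ω)}
    (hρ : IsSubcoupling ρ id (XiFin Φ ψ n x y) (Measure.pi fun _ => P) (Measure.pi fun _ => P))
    {k₀ : ℝ≥0∞} (hxy : V x + V y ≤ k₀) :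
    ρ {f | ∃ j < n, κ < coupledCost Φ ψ W x y (extSeq f) j} ≤
      n * ((C / κ) ^ (1 / δ) * (1 + (1 + c) * (k₀ + b * (1 - a)⁻¹))) := by
  have hstep (j : ℕ) (hj : j ∈ Finset.range n) :
      ρ {f | κ < coupledCost Φ ψ W x y (extSeq f) j} ≤
        (C / κ) ^ (1 / δ) * (1 + (1 + c) * (k₀ + b * (1 - a)⁻¹)) := by
    refine (hW.measure_lt_coupledCost_le hB hV hL ha hκ0 hκ hρ
      (Finset.mem_range.1 hj)).trans (mul_le_mul' le_rfl ?_)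
    rw [add_mul 1 c, one_mul, add_assoc 1]
    have hle {v : ℝ≥0∞} (hv : v ≤ V x + V y) := add_le_add_left (hv.trans hxy) (b * (1 - a)⁻¹)
    exact add_le_add le_rfl (add_le_add (hle le_add_self) (mul_le_mul' le_rfl (hle le_self_add)))
  have hunion : {f : Fin n → Ω | ∃ j < n, κ < coupledCost Φ ψ W x y (extSeq f) j} ⊆
      ⋃ j ∈ Finset.range n, {f | κ < coupledCost Φ ψ W x y (extSeq f) j} := by
    rintro f ⟨j, hj, hf⟩
    simp only [Set.mem_iUnion, Finset.mem_range]
    exact ⟨j, hj, hf⟩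
  refine (measure_mono hunion).trans ((measure_biUnion_finset_le _ _).trans
    ((Finset.sum_le_sum hstep).trans_eq ?_))
  rw [Finset.sum_const, Finset.card_range, nsmul_eq_mul]

lemma HasInverseDensityBound.exists_isSubcoupling_XiFin (h : HasInverseDensityBound P Φ ψ V)
    (hB : IsBinding Φ ψ ψinv) {K : ℝ} (hK : 0 < K) :
    ∃ p : ℝ≥0∞, p ≠ 0 ∧ ∀ (n : ℕ) (x y : X), V x + V y ≤ ENNReal.ofReal K →
      ∃ ρ, IsSubcoupling ρ id (XiFin Φ ψ n x y) (Measure.pi fun _ => P)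
        (Measure.pi fun _ => P) ∧ p ≤ ρ Set.univ := by
  obtain ⟨c₁, c₂, hc₁, hc₂, hΓ⟩ := h K hK
  refine ⟨c₁ / 2 * (1 + c₂)⁻¹ * (c₁ / 2), by simp [hc₁, hc₂], fun n x y hxy => ?_⟩
  obtain ⟨Γ, hΓ₁, hΓ₂⟩ := hΓ x y hxy
  have hΞ := measurable_XiFin hB.measurable_rds hB.measurable_bind n x y
  obtain ⟨ρ, hρ, hρmap⟩ := exists_isSubcoupling_graph (Measure.pi fun _ : Fin n => P)
    (Measure.pi fun _ : Fin n => P) hΞ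
  refine ⟨ρ, hρ, ?_⟩
  rw [← Set.preimage_univ (f := XiFin Φ ψ n x y), ← Measure.map_apply hΞ .univ, hρmap,
    withDensity_apply _ .univ, Measure.restrict_univ]
  refine le_lintegral_min_one_of_lintegral_inv_sq_le (Measure.measurable_rnDeriv _ _) hc₁ hc₂
    (hΓ₁.trans ?_) (hΓ₂ n)
  rw [← map_finRestrict_noiseLaw P n]
  exact (measure_mono (Set.subset_preimage_image _ _)).trans (Measure.le_map_apply
    (measurable_pi_lambda _ fun i => measurable_pi_apply _).aemeasurable _)

lemma eventually_exists_isSubcoupling_goodPair (hB : IsBinding Φ ψ ψinv) (hV : Measurable V)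
    (hL : HasDrift (stepKernel P Φ) V a b) (ha : a < 1) (hb : b ≠ ⊤)
    (hW : IsNoiseCost P ψ ψinv V W c C δ) (hD : HasInverseDensityBound P Φ ψ V) {K ε : ℝ}
    (hK : 0 < K) (hε : 0 < ε) :
    ∃ p : ℝ≥0∞, p ≠ 0 ∧ ∀ᶠ n : ℕ in Filter.atTop, ∀ x y : X, V x + V y ≤ ENNReal.ofReal K →
      ∃ (ρ : Measure (Fin n → Ω)) (ξ η : (Fin n → Ω) → X),
        IsSubcoupling ρ ξ η ((stepKernel P Φ ^ n) x) ((stepKernel P Φ ^ n) y) ∧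
        (∀ᵐ f ∂ρ, GoodPair Φ ψ V W K ε n n (ξ f) (η f)) ∧ p ≤ ρ Set.univ := by
  obtain ⟨p, hp, hρ⟩ := hD.exists_isSubcoupling_XiFin hB hK
  have hZ : 1 + (1 + c) * (ENNReal.ofReal K + b * (1 - a)⁻¹) ≠ ⊤ := by
    have hinv : (1 - a)⁻¹ ≠ ⊤ := ENNReal.inv_ne_top.2 (tsub_pos_of_lt ha).ne'
    have hc := hW.integral_const_ne_top
    finiteness
  have hpt : p / 2 ≠ 0 := (ENNReal.half_pos hp).ne'
  refine ⟨p / 2, hpt, (hW.eventually_mul_rpow_le hK hε hZ hpt).mono fun n hn x y hxy => ?_⟩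
  obtain ⟨ρ, hρ, hpρ⟩ := hρ n x y hxy
  have := hρ.isFiniteMeasure
  set κ := ENNReal.ofReal (K * Real.exp (ε * n))
  have hκ0 : κ ≠ 0 := (ENNReal.ofReal_pos.2 (mul_pos hK (Real.exp_pos _))).ne'
  set bad := {f : Fin n → Ω | ∃ j < n, κ < coupledCost Φ ψ W x y (extSeq f) j}
  have hbad : MeasurableSet bad := measurableSet_exists_lt_coupledCost hB.measurable_rds
    hB.measurable_bind hW.measurable κ n x y
  have hρbad : ρ bad ≤ p / 2 := (hW.measure_exists_lt_coupledCost_le hB hV hL ha.le hκ0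
    ENNReal.ofReal_ne_top hρ hxy).trans hn
  refine ⟨ρ.restrict badᶜ, _, _, (isSubcoupling_traj2 hB.measurable_rds hρ le_rfl).mono
    Measure.restrict_le_self, ?_, ?_⟩
  · filter_upwards [ae_restrict_mem hbad.compl] with f hf
    refine ⟨le_rfl, x, y, hxy, traj2_mem_QSetIter fun j hj => ?_⟩
    exact not_lt.1 fun hlt => hf ⟨j, hj, hlt⟩
  · have hpT : p ≠ ⊤ := ne_top_of_le_ne_top (measure_ne_top ρ _) hpρ
    rw [Measure.restrict_apply_univ, ← ENNReal.sub_half hpT,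
      measure_compl hbad (measure_ne_top _ _)]
    exact tsub_le_tsub hpρ hρbad

end Block

/-! ### Contraction in a weighted distance -/

section WeightedComparison

variable {S A : Type*} [MeasurableSpace S] [MeasurableSpace A] {V : S → ℝ≥0∞}

lemma sqrt_le_one_add (v : ℝ≥0∞) : v ^ (1 / 2 : ℝ) ≤ 1 + v := by
  simpa using sqrt_le_inv_add_mul one_ne_zero ENNReal.one_ne_top v

lemma lintegral_half_add_sqrt {σ : Measure S} (hV : Measurable V) (β : ℝ≥0∞) :
    ∫⁻ z, (2⁻¹ + β * V z ^ (1 / 2 : ℝ)) ∂σ =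
      2⁻¹ * σ Set.univ + β * ∫⁻ z, V z ^ (1 / 2 : ℝ) ∂σ := by
  rw [lintegral_add_left measurable_const, lintegral_const, lintegral_const_mul _ (hV.pow_const _)]

lemma lintegral_half_add_sqrt_sub_le {μ σ : Measure S} [IsProbabilityMeasure μ]
    [IsFiniteMeasure σ] (hσ : σ ≤ μ) (hV : Measurable V) {p v : ℝ≥0∞} (hp : p ≤ σ Set.univ)
    (hv : ∫⁻ z, V z ∂μ ≤ v) (β : ℝ≥0∞) :
    ∫⁻ z, (2⁻¹ + β * V z ^ (1 / 2 : ℝ)) ∂(μ - σ) ≤ 2⁻¹ * (1 - p) + β * (1 + v) := by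
  rw [lintegral_half_add_sqrt hV]
  refine add_le_add (mul_le_mul' le_rfl (sub_univ_le hσ ?_)) (mul_le_mul' le_rfl ?_)
  · exact measure_univ.trans_le (le_add_tsub.trans (add_le_add hp le_rfl))
  · calc ∫⁻ z, V z ^ (1 / 2 : ℝ) ∂(μ - σ) ≤ ∫⁻ z, (1 + V z) ∂μ :=
          lintegral_mono' Measure.sub_le fun z => sqrt_le_one_add _
      _ = 1 + ∫⁻ z, V z ∂μ := by
          rw [lintegral_add_left measurable_const, lintegral_one, measure_univ]
      _ ≤ 1 + v := add_le_add le_rfl hv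

variable {μ ν : Measure S} [IsProbabilityMeasure μ] [IsProbabilityMeasure ν] {f : S → ℝ} {c : ℝ}
  {D β : ℝ≥0∞}

lemma enorm_integral_sub_integral_le_of_centered (hf : Measurable f) (hfb : ∀ z, |f z| ≤ 1)
    (hcen : ∀ z, ‖f z - c‖ₑ ≤ D * (2⁻¹ + β * V z ^ (1 / 2 : ℝ))) (hV : Measurable V) :
    ‖∫ z, f z ∂μ - ∫ z, f z ∂ν‖ₑ ≤
      D * (1 + β * ((∫⁻ z, V z ∂μ) ^ (1 / 2 : ℝ) + (∫⁻ z, V z ∂ν) ^ (1 / 2 : ℝ))) := by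
  have hint (m : Measure S) [IsProbabilityMeasure m] : Integrable f m :=
    .of_bound hf.aestronglyMeasurable 1 (ae_of_all _ hfb)
  have hw : Measurable fun z => 2⁻¹ + β * V z ^ (1 / 2 : ℝ) :=
    ((hV.pow_const _).const_mul β).const_add _
  have h := (isSubcoupling_zero measurable_id measurable_id μ ν).enorm_integral_sub_integral_le
    (hint μ) (hint ν) hcen
  simp only [lintegral_zero_measure, zero_add, Measure.map_zero, Measure.sub_zero] at h
  rw [lintegral_const_mul _ hw, lintegral_const_mul _ hw, lintegral_half_add_sqrt hV,
    lintegral_half_add_sqrt hV, measure_univ, measure_univ] at h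
  calc _ ≤ _ := h
    _ ≤ D * (2⁻¹ * 1 + β * (∫⁻ z, V z ∂μ) ^ (1 / 2 : ℝ)) +
        D * (2⁻¹ * 1 + β * (∫⁻ z, V z ∂ν) ^ (1 / 2 : ℝ)) := by
      gcongr <;> exact lintegral_sqrt_le hV
    _ = D * (2⁻¹ + 2⁻¹ + β * ((∫⁻ z, V z ∂μ) ^ (1 / 2 : ℝ) +
        (∫⁻ z, V z ∂ν) ^ (1 / 2 : ℝ))) := by ring
    _ = _ := by rw [ENNReal.inv_two_add_inv_two]

lemma IsSubcoupling.enorm_integral_sub_integral_le_of_centered {ρ : Measure A} {ξ η : A → S}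
    (hρ : IsSubcoupling ρ ξ η μ ν) (hf : Measurable f) (hfb : ∀ z, |f z| ≤ 1)
    (hcen : ∀ z, ‖f z - c‖ₑ ≤ D * (2⁻¹ + β * V z ^ (1 / 2 : ℝ))) (hV : Measurable V)
    {E B p l m : ℝ≥0∞} (hp : p ≤ ρ Set.univ)
    (hgood : ∀ᵐ a ∂ρ, ‖f (ξ a) - f (η a)‖ₑ ≤ E * (V (ξ a) + V (η a) + B))
    (hl : ∫⁻ z, V z ∂μ ≤ l) (hm : ∫⁻ z, V z ∂ν ≤ m) :
    ‖∫ z, f z ∂μ - ∫ z, f z ∂ν‖ₑ ≤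
      E * (l + m + B) + D * (1 - p + β * (2 + (l + m))) := by
  have hint (m : Measure S) [IsProbabilityMeasure m] : Integrable f m :=
    .of_bound hf.aestronglyMeasurable 1 (ae_of_all _ hfb)
  have := hρ.isFiniteMeasure
  have hw : Measurable fun z => 2⁻¹ + β * V z ^ (1 / 2 : ℝ) :=
    ((hV.pow_const _).const_mul β).const_add _
  have hVξ : Measurable fun a => V (ξ a) := hV.comp hρ.measurable_left
  have hVη : Measurable fun a => V (η a) := hV.comp hρ.measurable_right
  have hVadd : Measurable fun a => V (ξ a) + V (η a) := hVξ.add hVη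
  have hmass {ζ : A → S} (hζ : Measurable ζ) : p ≤ ρ.map ζ Set.univ := by
    rwa [Measure.map_apply hζ .univ, Set.preimage_univ]
  have hcoupled : ∫⁻ a, ‖f (ξ a) - f (η a)‖ₑ ∂ρ ≤ E * (l + m + B) :=
    calc _ ≤ ∫⁻ a, E * (V (ξ a) + V (η a) + B) ∂ρ := lintegral_mono_ae hgood
      _ = E * (∫⁻ a, V (ξ a) ∂ρ + ∫⁻ a, V (η a) ∂ρ + B * ρ Set.univ) := by
        rw [lintegral_const_mul _ (hVadd.add_const B), lintegral_add_left hVadd,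
          lintegral_add_left hVξ, lintegral_const]
      _ ≤ E * (l + m + B * 1) := by
        gcongr
        · exact (hρ.lintegral_left_le hV).trans hl
        · exact (hρ.lintegral_right_le hV).trans hm
        · exact hρ.univ_le.trans_eq measure_univ
      _ = _ := by rw [mul_one]
  refine (hρ.enorm_integral_sub_integral_le (hint μ) (hint ν) hcen).trans
    (add_le_add hcoupled ?_)
  rw [lintegral_const_mul _ hw, lintegral_const_mul _ hw]
  calc _ ≤ D * (2⁻¹ * (1 - p) + β * (1 + l)) + D * (2⁻¹ * (1 - p) + β * (1 + m)) := by
        gcongr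
        · exact lintegral_half_add_sqrt_sub_le hρ.map_left_le hV (hmass hρ.measurable_left) hl β
        · exact lintegral_half_add_sqrt_sub_le hρ.map_right_le hV (hmass hρ.measurable_right) hm β
    _ = D * ((2⁻¹ + 2⁻¹) * (1 - p) + β * (2 + (l + m))) := by ring
    _ = _ := by rw [ENNReal.inv_two_add_inv_two, one_mul]

end WeightedComparison

section Contraction

variable {X Ω : Type*} [MeasurableSpace X] [MeasurableSpace Ω] {κ : Kernel X X}
  {V : X → ℝ≥0∞} {g : X → ℝ} {a b A β q : ℝ≥0∞} {n : ℕ}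

/-- The contraction estimate after `n` steps: the oscillation of the `n`-step means of `g` in the
weighted distance `1 + β (√(V x) + √(V y))` is at most `A qⁿ`. -/
def IsContracted (κ : Kernel X X) (V : X → ℝ≥0∞) (g : X → ℝ) (A β q : ℝ≥0∞) (n : ℕ) : Prop :=
  ∀ x y, ‖iterMean κ g n x - iterMean κ g n y‖ₑ ≤
    A * q ^ n * (1 + β * (V x ^ (1 / 2 : ℝ) + V y ^ (1 / 2 : ℝ)))

namespace IsContracted

lemma exists_center (h : IsContracted κ V g A β q n) : ∃ c : ℝ, ∀ z,
    ‖iterMean κ g n z - c‖ₑ ≤ A * q ^ n * (2⁻¹ + β * V z ^ (1 / 2 : ℝ)) := by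
  refine exists_forall_enorm_sub_le _ _ fun x y => (h x y).trans_eq ?_
  rw [← ENNReal.inv_two_add_inv_two]
  ring

lemma exists_center_of_le_one (h : IsContracted κ V g A β q n) (hβ : β ≤ 1) : ∃ c : ℝ, ∀ z,
    ‖iterMean κ g n z - c‖ₑ ≤ A * q ^ n * (1 + V z ^ (1 / 2 : ℝ)) := by
  obtain ⟨c, hc⟩ := h.exists_center
  exact ⟨c, fun z => (hc z).trans (mul_le_mul' le_rfl
    (add_le_add (ENNReal.inv_le_one.2 one_le_two) (mul_le_of_le_one_left' hβ)))⟩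

variable [IsMarkovKernel κ]

lemma enorm_iterMean_succ_sub_le (h : IsContracted κ V g A β q n) (hg : Measurable g)
    (hgb : ∀ z, |g z| ≤ 1) (hV : Measurable V) (hL : HasDrift κ V a b) (x y : X) :
    ‖iterMean κ g (n + 1) x - iterMean κ g (n + 1) y‖ₑ ≤ A * q ^ n *
      (1 + β * (a ^ (1 / 2 : ℝ) * (V x ^ (1 / 2 : ℝ) + V y ^ (1 / 2 : ℝ)) +
        2 * b ^ (1 / 2 : ℝ))) := by
  obtain ⟨c, hc⟩ := h.exists_center
  have hsqrt (z : X) : (∫⁻ z', V z' ∂κ z) ^ (1 / 2 : ℝ) ≤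
      a ^ (1 / 2 : ℝ) * V z ^ (1 / 2 : ℝ) + b ^ (1 / 2 : ℝ) :=
    (ENNReal.rpow_le_rpow (hL z) (by norm_num)).trans (sqrt_mul_add_le a b (V z))
  rw [iterMean_succ hg hgb, iterMean_succ hg hgb]
  refine (enorm_integral_sub_integral_le_of_centered (measurable_iterMean hg n)
    (abs_iterMean_le hgb n) hc hV).trans (mul_le_mul' le_rfl (add_le_add le_rfl
      (mul_le_mul' le_rfl ((add_le_add (hsqrt x) (hsqrt y)).trans_eq ?_))))
  ring

lemma enorm_iterMean_add_sub_le {T : Type*} [MeasurableSpace T] (h : IsContracted κ V g A β q n)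
    (hg : Measurable g) (hgb : ∀ z, |g z| ≤ 1) (hV : Measurable V) (hL : HasDrift κ V a b)
    (ha : a ≤ 1) {N : ℕ} {x y : X} {ρ : Measure T} {ξ η : T → X}
    (hρ : IsSubcoupling ρ ξ η ((κ ^ N) x) ((κ ^ N) y)) {E B p k₀ : ℝ≥0∞} (hp : p ≤ ρ Set.univ)
    (hgood : ∀ᵐ t ∂ρ, ‖iterMean κ g n (ξ t) - iterMean κ g n (η t)‖ₑ ≤
      E * (V (ξ t) + V (η t) + B)) (hxy : V x + V y ≤ k₀) :
    ‖iterMean κ g (N + n) x - iterMean κ g (N + n) y‖ₑ ≤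
      E * (k₀ + 2 * (b * (1 - a)⁻¹) + B) +
        A * q ^ n * (1 - p + β * (2 + (k₀ + 2 * (b * (1 - a)⁻¹)))) := by
  have := isMarkovKernel_pow κ N
  obtain ⟨c, hc⟩ := h.exists_center
  have hmean : V x + b * (1 - a)⁻¹ + (V y + b * (1 - a)⁻¹) ≤ k₀ + 2 * (b * (1 - a)⁻¹) :=
    calc _ = V x + V y + 2 * (b * (1 - a)⁻¹) := by ring
      _ ≤ _ := add_le_add hxy le_rfl
  rw [iterMean_add hg hgb, iterMean_add hg hgb]
  refine (hρ.enorm_integral_sub_integral_le_of_centered (measurable_iterMean hg n)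
    (abs_iterMean_le hgb n) hc hV hp hgood (hL.lintegral_pow_le hV ha N x)
    (hL.lintegral_pow_le hV ha N y)).trans (add_le_add (mul_le_mul' le_rfl
      (add_le_add hmean le_rfl)) (mul_le_mul' le_rfl (add_le_add le_rfl
        (mul_le_mul' le_rfl (add_le_add le_rfl hmean)))))

end IsContracted

/-- The constants of the contraction argument. Outside the sublevel set `{V x + V y ≤ k₀}` the
drift of `√V` lowers the weight `1 + β (√(V x) + √(V y))` by the factor `q` in one step; inside it a
coupled block of `N` steps, successful with probability `p`, gains the factor `q ^ N`. -/
structure RateConditions (a b B h M k₀ p R M₃ A β q : ℝ≥0∞) (N : ℕ) : Prop where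
  weight_le_one : β ≤ 1
  rate_le_one : q ≤ 1
  le_rate_pow : h ≤ q ^ 3
  two_le : 2 ≤ A * q ^ (3 * N)
  mature : M₃ * h + 2 * (2 * M + 1) ≤ M₃ * q
  outside : ∀ u, k₀ ^ (1 / 2 : ℝ) ≤ u →
    1 + β * (a ^ (1 / 2 : ℝ) * u + 2 * b ^ (1 / 2 : ℝ)) ≤ q * (1 + β * u)
  inside : (A * M₃ * h ^ (2 * N) + (2 + 2 * R)) * (k₀ + 2 * (b * (1 - a)⁻¹) + B) +
    A * (1 - p + β * (2 + (k₀ + 2 * (b * (1 - a)⁻¹)))) ≤ A * q ^ N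

variable [IsMarkovKernel κ] {P : Measure Ω} [IsProbabilityMeasure P] {Φ : X × Ω → X}
  {ψ : X → X → Ω → Ω} {B h M k₀ p R M₃ : ℝ≥0∞} {G : ℕ → X → X → Prop} {N : ℕ}

lemma RateConditions.enorm_iterMean_sub_le_of_lt (hr : RateConditions a b B h M k₀ p R M₃ A β q N)
    (hgb : ∀ z, |g z| ≤ 1) (hn : n < 3 * N) (x y : X) :
    ‖iterMean κ g n x - iterMean κ g n y‖ₑ ≤
      A * q ^ n * (1 + β * (V x ^ (1 / 2 : ℝ) + V y ^ (1 / 2 : ℝ))) :=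
  calc _ ≤ (2 : ℝ≥0∞) := enorm_iterMean_sub_le_two hgb n x y
    _ ≤ A * q ^ (3 * N) := hr.two_le
    _ ≤ A * q ^ n := mul_le_mul' le_rfl (pow_le_pow_right_of_le_one' hr.rate_le_one hn.le)
    _ ≤ _ := le_mul_of_one_le_right' le_self_add

lemma RateConditions.enorm_iterMean_succ_sub_le_of_lt_add
    (hr : RateConditions a b B h M k₀ p R M₃ A β q N) (hc : IsContracted κ V g A β q n)
    (hg : Measurable g) (hgb : ∀ z, |g z| ≤ 1) (hV : Measurable V) (hL : HasDrift κ V a b)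
    {x y : X} (hxy : k₀ < V x + V y) :
    ‖iterMean κ g (n + 1) x - iterMean κ g (n + 1) y‖ₑ ≤
      A * q ^ (n + 1) * (1 + β * (V x ^ (1 / 2 : ℝ) + V y ^ (1 / 2 : ℝ))) := by
  have hk₀ : k₀ ^ (1 / 2 : ℝ) ≤ V x ^ (1 / 2 : ℝ) + V y ^ (1 / 2 : ℝ) :=
    (ENNReal.rpow_le_rpow hxy.le (by norm_num)).trans
      (ENNReal.rpow_add_le_add_rpow _ _ (by norm_num) (by norm_num))
  refine (hc.enorm_iterMean_succ_sub_le hg hgb hV hL x y).trans ?_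
  rw [pow_succ, ← mul_assoc, mul_assoc (A * q ^ n)]
  exact mul_le_mul' le_rfl (hr.outside _ hk₀)

lemma LyapunovCoupling.enorm_iterMean_add_sub_le_of_block
    (S : LyapunovCoupling P Φ ψ V a b B h M G) (hr : RateConditions a b B h M k₀ p R M₃ A β q N)
    (hg : Measurable g) (hgb : ∀ z, |g z| ≤ 1)
    (hc : ∀ k < N + n, IsContracted (stepKernel P Φ) V g A β q k) (hk₀ : 1 ≤ k₀)
    (hdrift : ∀ v, k₀ < v → a * v + 2 * b ≤ h ^ 2 * v)
    (hR : ∀ i j x y, G i x y → V x + V y ≤ k₀ →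
      ‖iterMean (stepKernel P Φ) g j x - iterMean (stepKernel P Φ) g j y‖ₑ ≤
        R * (h ^ (2 * j) + h ^ (2 * i)))
    (hN : 2 ≤ N) (hn : 2 * N ≤ n) {T : Type*} [MeasurableSpace T] {x y : X} {ρ : Measure T}
    {ξ η : T → X} (hρ : IsSubcoupling ρ ξ η ((stepKernel P Φ ^ N) x) ((stepKernel P Φ ^ N) y))
    (hG : ∀ᵐ t ∂ρ, G N (ξ t) (η t)) (hp : p ≤ ρ Set.univ) (hxy : V x + V y ≤ k₀) :
    ‖iterMean (stepKernel P Φ) g (N + n) x - iterMean (stepKernel P Φ) g (N + n) y‖ₑ ≤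
      A * q ^ (N + n) := by
  have := isMarkovKernel_stepKernel (P := P) S.measurable_rds
  have hpow : h ^ ((N + n) / 3) ≤ q ^ n :=
    calc h ^ ((N + n) / 3) ≤ (q ^ 3) ^ ((N + n) / 3) := pow_le_pow_left' hr.le_rate_pow _
      _ = q ^ (3 * ((N + n) / 3)) := (pow_mul _ _ _).symm
      _ ≤ q ^ n := pow_le_pow_right_of_le_one' hr.rate_le_one (by lia)
  have hgood : ∀ᵐ t ∂ρ,
      ‖iterMean (stepKernel P Φ) g n (ξ t) - iterMean (stepKernel P Φ) g n (η t)‖ₑ ≤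
        q ^ n * (A * M₃ * h ^ (2 * N) + (2 + 2 * R)) * (V (ξ t) + V (η t) + B) := by
    filter_upwards [hG] with t ht
    have hbind := S.enorm_iterMean_sub_le_of_binding hg hgb hr.mature
      (fun k hk => (hc k hk).exists_center_of_le_one hr.weight_le_one) hk₀ hdrift hR
      (s := (N + n) / 3) (by lia) (by lia) ht
    rw [Nat.add_sub_cancel_left, ← add_mul] at hbind
    refine hbind.trans (mul_le_mul' ?_ le_rfl)
    calc _ ≤ A * M₃ * q ^ n * h ^ (2 * N) + (2 + 2 * R) * q ^ n := by gcongr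
      _ = _ := by ring
  calc _ ≤ _ := (hc n (by lia)).enorm_iterMean_add_sub_le hg hgb S.measurable_lyapunov S.hasDrift
        S.rate_le_one hρ hp hgood hxy
    _ = q ^ n * ((A * M₃ * h ^ (2 * N) + (2 + 2 * R)) * (k₀ + 2 * (b * (1 - a)⁻¹) + B) +
        A * (1 - p + β * (2 + (k₀ + 2 * (b * (1 - a)⁻¹))))) := by ring
    _ ≤ q ^ n * (A * q ^ N) := mul_le_mul' le_rfl hr.inside
    _ = A * q ^ (N + n) := by ring

lemma LyapunovCoupling.isContracted (S : LyapunovCoupling P Φ ψ V a b B h M G)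
    (hr : RateConditions a b B h M k₀ p R M₃ A β q N) (hg : Measurable g) (hgb : ∀ z, |g z| ≤ 1)
    (hk₀ : 1 ≤ k₀) (hdrift : ∀ v, k₀ < v → a * v + 2 * b ≤ h ^ 2 * v)
    (hR : ∀ i j x y, G i x y → V x + V y ≤ k₀ →
      ‖iterMean (stepKernel P Φ) g j x - iterMean (stepKernel P Φ) g j y‖ₑ ≤
        R * (h ^ (2 * j) + h ^ (2 * i)))
    (hN : 2 ≤ N) (hblock : ∀ x y, V x + V y ≤ k₀ →
      ∃ (ρ : Measure (Fin N → Ω)) (ξ η : (Fin N → Ω) → X),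
        IsSubcoupling ρ ξ η ((stepKernel P Φ ^ N) x) ((stepKernel P Φ ^ N) y) ∧
        (∀ᵐ f ∂ρ, G N (ξ f) (η f)) ∧ p ≤ ρ Set.univ) (n : ℕ) :
    IsContracted (stepKernel P Φ) V g A β q n := by
  have := isMarkovKernel_stepKernel (P := P) S.measurable_rds
  induction n using Nat.strong_induction_on with
  | _ n ih =>
  intro x y
  rcases lt_or_ge n (3 * N) with hn | hn
  · exact hr.enorm_iterMean_sub_le_of_lt hgb hn x y
  rcases lt_or_ge k₀ (V x + V y) with hv | hv
  · obtain ⟨k, rfl⟩ : ∃ k, n = k + 1 := ⟨n - 1, by lia⟩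
    exact hr.enorm_iterMean_succ_sub_le_of_lt_add (ih k k.lt_add_one) hg hgb
      S.measurable_lyapunov S.hasDrift hv
  · obtain ⟨k, rfl⟩ : ∃ k, n = N + k := ⟨n - N, by lia⟩
    obtain ⟨ρ, ξ, η, hρ, hρG, hp⟩ := hblock x y hv
    exact (S.enorm_iterMean_add_sub_le_of_block hr hg hgb ih hk₀ hdrift hR hN (by lia) hρ hρG hp
      hv).trans (le_mul_of_one_le_right' le_self_add)

end Contraction

/-! ### Choice of the constants -/

section Constants

open Filter Topology

lemma eventually_nhdsLT_one_le_pow {t : ℝ≥0∞} (ht : t < 1) (n : ℕ) :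
    ∀ᶠ q in 𝓝[<] (1 : ℝ≥0∞), t ≤ q ^ n := by
  have h : Tendsto (fun q : ℝ≥0∞ => q ^ n) (𝓝 1) (𝓝 1) := by
    simpa using (ENNReal.continuous_pow n).tendsto 1
  exact ((h.mono_left nhdsWithin_le_nhds).eventually (lt_mem_nhds ht)).mono fun q hq => hq.le

lemma eventually_nhdsLT_one_one_le_add {u : ℝ≥0∞} (hu : u ≠ 0) :
    ∀ᶠ q in 𝓝[<] (1 : ℝ≥0∞), 1 ≤ q + u := by
  have h : 1 - u < 1 := ENNReal.sub_lt_self ENNReal.one_ne_top one_ne_zero hu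
  filter_upwards [eventually_nhdsLT_one_le_pow h 1] with q hq
  rwa [pow_one, tsub_le_iff_right] at hq

lemma exists_add_lt_one {t : ℝ≥0∞} (ht : t < 1) : ∃ d : ℝ≥0∞, d ≠ 0 ∧ d ≠ ⊤ ∧ t + d < 1 := by
  obtain ⟨d, hd, htd⟩ := ENNReal.lt_iff_exists_add_pos_lt.1 ht
  exact ⟨d, by simpa using hd.ne', ENNReal.coe_ne_top, htd⟩

lemma exists_level_mul_add_le {a b r d : ℝ≥0∞} (hb : b ≠ ⊤) (har : a < r) (hr : r ≠ ⊤)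
    (hd₀ : d ≠ 0) (hd : d ≠ ⊤) : ∃ K : ℝ, 1 ≤ K ∧
      (∀ v, ENNReal.ofReal K < v → a * v + 2 * b ≤ r * v) ∧
      2 * b ^ (1 / 2 : ℝ) ≤ d * ENNReal.ofReal K ^ (1 / 2 : ℝ) := by
  have he₀ : r - a ≠ 0 := (tsub_pos_of_lt har).ne'
  have he : r - a ≠ ⊤ := ne_top_of_le_ne_top hr tsub_le_self
  set k₁ := 2 * b / (r - a)
  set k₂ := 2 * b ^ (1 / 2 : ℝ) / d
  have hk₁ : k₁ ≠ ⊤ := ENNReal.div_ne_top (by finiteness) he₀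
  have hk₂ : k₂ ≠ ⊤ := by
    have : b ^ (1 / 2 : ℝ) ≠ ⊤ := ENNReal.rpow_ne_top_of_nonneg (by norm_num) hb
    exact ENNReal.div_ne_top (by finiteness) hd₀
  have hk : 1 + k₁ + k₂ ^ 2 ≠ ⊤ := by finiteness
  refine ⟨(1 + k₁ + k₂ ^ 2).toReal, ?_, fun v hv => ?_, ?_⟩
  · rw [← ENNReal.toReal_one]
    exact ENNReal.toReal_mono hk (by rw [add_assoc]; exact le_self_add)
  · rw [ENNReal.ofReal_toReal hk] at hv
    calc a * v + 2 * b = a * v + (r - a) * k₁ := by rw [ENNReal.mul_div_cancel he₀ he]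
      _ ≤ a * v + (r - a) * v := by
        gcongr
        exact (le_add_self.trans le_self_add).trans hv.le
      _ = r * v := by rw [← add_mul, add_tsub_cancel_of_le har.le]
  · rw [ENNReal.ofReal_toReal hk]
    calc 2 * b ^ (1 / 2 : ℝ) = d * k₂ := (ENNReal.mul_div_cancel hd₀ hd).symm
      _ = d * (k₂ ^ 2) ^ (1 / 2 : ℝ) := by
        rw [← ENNReal.rpow_natCast, ← ENNReal.rpow_mul]
        norm_num
      _ ≤ _ := mul_le_mul' le_rfl (ENNReal.rpow_le_rpow le_add_self (by norm_num))

lemma exists_mul_add_le_self {h m : ℝ≥0∞} (hh : h < 1) (hm : m ≠ ⊤) :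
    ∃ B : ℝ≥0∞, B ≠ ⊤ ∧ 1 + m ≤ B ∧ B * h + m ≤ B := by
  have h₀ : 1 - h ≠ 0 := (tsub_pos_of_lt hh).ne'
  refine ⟨(1 + m) / (1 - h), ENNReal.div_ne_top (by finiteness) h₀, ?_, ?_⟩
  · rw [ENNReal.le_div_iff_mul_le (.inl h₀) (.inl (by finiteness))]
    exact mul_le_of_le_one_right' tsub_le_self
  · calc (1 + m) / (1 - h) * h + m ≤
          (1 + m) / (1 - h) * h + (1 + m) / (1 - h) * (1 - h) := by
          rw [ENNReal.div_mul_cancel h₀ (by finiteness)]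
          exact add_le_add le_rfl le_add_self
      _ = (1 + m) / (1 - h) := by rw [← mul_add, add_tsub_cancel_of_le hh.le, mul_one]

lemma eventually_mul_log_div_lt {K γ ζ : ℝ} (hK : 0 < K) (hγ : 0 < γ) (hζ : 0 < ζ) :
    ∀ᶠ i : ℕ in atTop, ζ * Real.log (1 + K * Real.exp (γ / (2 * ζ) * i)) / γ < i := by
  filter_upwards [eventually_gt_atTop ⌈2 * (ζ * Real.log (1 + K) / γ)⌉₊] with i hi
  have hi' : 2 * (ζ * Real.log (1 + K) / γ) < i := Nat.lt_of_ceil_lt hi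
  have hlog : Real.log (1 + K * Real.exp (γ / (2 * ζ) * i)) ≤
      Real.log (1 + K) + γ / (2 * ζ) * i := by
    have hexp : 1 ≤ Real.exp (γ / (2 * ζ) * i) := Real.one_le_exp (by positivity)
    rw [← Real.log_exp (γ / (2 * ζ) * i), ← Real.log_mul (by positivity) (by positivity),
      Real.log_exp]
    exact Real.log_le_log (by positivity) (by linarith)
  calc _ ≤ ζ * (Real.log (1 + K) + γ / (2 * ζ) * i) / γ := by gcongr
    _ = ζ * Real.log (1 + K) / γ + i / 2 := by field_simp
    _ < i := by linarith

lemma exists_mul_pow_le_ofReal_exp {A q : ℝ≥0∞} (hA : A ≠ ⊤) (hq : q < 1) :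
    ∃ γ C : ℝ, 0 < γ ∧ 0 < C ∧ ∀ n : ℕ, A * q ^ n ≤ ENNReal.ofReal (C * Real.exp (-γ * n)) := by
  obtain ⟨r, hqr, hr⟩ := ENNReal.lt_iff_exists_nnreal_btwn.1 hq
  have hr₀ : 0 < (r : ℝ) := NNReal.coe_pos.2 (by simpa using pos_of_gt hqr)
  have hr₁ : (r : ℝ) < 1 := by exact_mod_cast hr
  refine ⟨-Real.log r, A.toReal + 1, neg_pos.2 (Real.log_neg hr₀ hr₁), by positivity, fun n => ?_⟩
  have hexp : Real.exp (- -Real.log r * n) = (r : ℝ) ^ n := by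
    rw [neg_neg, mul_comm, Real.exp_nat_mul, Real.exp_log hr₀]
  rw [hexp, ENNReal.ofReal_mul (by positivity), ENNReal.ofReal_pow hr₀.le,
    ENNReal.ofReal_coe_nnreal]
  exact mul_le_mul' ((ENNReal.ofReal_toReal hA).symm.trans_le
    (ENNReal.ofReal_le_ofReal (by linarith))) (pow_le_pow_left' hqr.le n)

end Constants

section RateConditions

open Filter Topology

variable {a b d h p q A B β k₀ s M R M₃ : ℝ≥0∞} {N : ℕ}

lemma one_add_mul_sqrt_le_mul (hq : a ^ (1 / 2 : ℝ) + 2 * d ≤ q) (hb : 2 * b ^ (1 / 2 : ℝ) ≤ d * s)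
    (hone : 1 ≤ q + β * (d * s)) {u : ℝ≥0∞} (hu : s ≤ u) :
    1 + β * (a ^ (1 / 2 : ℝ) * u + 2 * b ^ (1 / 2 : ℝ)) ≤ q * (1 + β * u) :=
  have hdu : d * s ≤ d * u := mul_le_mul' le_rfl hu
  calc _ ≤ q + β * (d * u) + β * (a ^ (1 / 2 : ℝ) * u + d * u) :=
        add_le_add (hone.trans (add_le_add le_rfl (mul_le_mul' le_rfl hdu)))
          (mul_le_mul' le_rfl (add_le_add le_rfl (hb.trans hdu)))
    _ = q + (a ^ (1 / 2 : ℝ) + 2 * d) * (β * u) := by ring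
    _ ≤ q + q * (β * u) := add_le_add le_rfl (mul_le_mul' hq le_rfl)
    _ = q * (1 + β * u) := by ring

lemma mul_add_mul_le_mul_of_le {t k m r D L : ℝ≥0∞} (hk : m * L ≤ t) (hA : r * L ≤ A * t)
    (hβ : β * (2 + L) ≤ t) (hD : D ≤ L) (hq : 1 - p + 3 * t ≤ k) :
    (A * m + r) * L + A * (1 - p + β * (2 + D)) ≤ A * k :=
  calc _ = A * (m * L) + r * L + A * (1 - p + β * (2 + D)) := by ring
    _ ≤ A * t + A * t + A * (1 - p + t) := by
      refine add_le_add (add_le_add (mul_le_mul' le_rfl hk) hA) (mul_le_mul' le_rfl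
        (add_le_add le_rfl ((mul_le_mul' le_rfl (add_le_add le_rfl hD)).trans hβ)))
    _ = A * (1 - p + 3 * t) := by ring
    _ ≤ A * k := mul_le_mul' le_rfl hq

lemma tendsto_mul_pow_two_mul_mul (hh : h < 1) (hM₃ : M₃ ≠ ⊤) {L : ℝ≥0∞} (hL : L ≠ ⊤) :
    Tendsto (fun N : ℕ => M₃ * h ^ (2 * N) * L) atTop (𝓝 0) := by
  have hpow : Tendsto (fun N : ℕ => h ^ (2 * N)) atTop (𝓝 0) :=
    (ENNReal.tendsto_pow_atTop_nhds_zero_of_lt_one hh).comp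
      (tendsto_id.const_mul_atTop' two_pos)
  simpa using ENNReal.Tendsto.mul_const (ENNReal.Tendsto.const_mul hpow (.inr hM₃)) (.inr hL)

lemma add_two_mul_mul_inv_add_ne_top (ha : a < 1) (hb : b ≠ ⊤) (hB : B ≠ ⊤) (hk₀ : k₀ ≠ ⊤) :
    k₀ + 2 * (b * (1 - a)⁻¹) + B ≠ ⊤ := by
  have hinv : (1 - a)⁻¹ ≠ ⊤ := ENNReal.inv_ne_top.2 (tsub_pos_of_lt ha).ne'
  finiteness

lemma exists_rate_lt_one {r t u v : ℝ≥0∞} (hh : h < 1) (hr : r < 1) (ht : t < 1) (hu : u ≠ 0)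
    (hv : v < 1) (N : ℕ) : ∃ q : ℝ≥0∞, q ≠ 0 ∧ q < 1 ∧ h ≤ q ^ 3 ∧ r ≤ q ∧ t ≤ q ∧ 1 ≤ q + u ∧
      v ≤ q ^ N := by
  obtain ⟨q, hq₁, hqh, hqr, hqt, hqu, hqv, hq₀⟩ := (eventually_mem_nhdsWithin.and
    ((eventually_nhdsLT_one_le_pow hh 3).and ((eventually_nhdsLT_one_le_pow hr 1).and
    ((eventually_nhdsLT_one_le_pow ht 1).and ((eventually_nhdsLT_one_one_le_add hu).and
    ((eventually_nhdsLT_one_le_pow hv N).and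
    (eventually_nhdsLT_one_le_pow (ENNReal.inv_lt_one.2 ENNReal.one_lt_two) 1))))))).exists
  rw [pow_one] at hqr hqt hq₀
  exact ⟨q, ne_bot_of_le_ne_bot (by simp) hq₀, hq₁, hqh, hqr, hqt, hqu, hqv⟩

lemma RateConditions.exists_of_block_length (ha : a < 1)
    (had : a ^ (1 / 2 : ℝ) + 2 * d < 1) (hd : d ≠ 0)
    (hbd : 2 * b ^ (1 / 2 : ℝ) ≤ d * k₀ ^ (1 / 2 : ℝ)) (hb : b ≠ ⊤) (hB : B ≠ ⊤) (hk₀ : k₀ ≠ 0)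
    (hk₀' : k₀ ≠ ⊤) (hh : h < 1) (hR : R ≠ ⊤) {e t : ℝ≥0∞} (he : h + e < 1)
    (hM₃ : M₃ * e = 2 * (2 * M + 1)) (ht : t ≠ 0) (ht' : t ≠ ⊤) (hpt : 1 - p + 3 * t < 1)
    (hN : M₃ * h ^ (2 * N) * (k₀ + 2 * (b * (1 - a)⁻¹) + B) ≤ t) :
    ∃ A β q, A ≠ ⊤ ∧ q < 1 ∧ RateConditions a b B h M k₀ p R M₃ A β q N := by
  set L := k₀ + 2 * (b * (1 - a)⁻¹) + B with hLdef
  have hL : L ≠ ⊤ := add_two_mul_mul_inv_add_ne_top ha hb hB hk₀'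
  set β := min 1 (t / (2 + L))
  have hβ₀ : β ≠ 0 :=
    (lt_min one_pos (ENNReal.div_pos ht (by finiteness))).ne'
  have hβ : β * (2 + L) ≤ t :=
    (mul_le_mul' (min_le_right _ _) le_rfl).trans_eq
      (ENNReal.div_mul_cancel (by simp) (by finiteness))
  have hs : k₀ ^ (1 / 2 : ℝ) ≠ 0 := (ENNReal.rpow_pos (pos_iff_ne_zero.2 hk₀) hk₀').ne'
  obtain ⟨q, hq₀, hq₁, hqh, hqa, hqe, hqβ, hqt⟩ :=
    exists_rate_lt_one hh had he (mul_ne_zero hβ₀ (mul_ne_zero hd hs)) hpt N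
  have hq₀' : q ^ (3 * N) ≠ 0 := pow_ne_zero _ hq₀
  have hqT : q ^ (3 * N) ≠ ⊤ := ENNReal.pow_ne_top (ne_top_of_lt hq₁)
  refine ⟨2 / q ^ (3 * N) + (2 + 2 * R) * L / t, β, q, ?_, hq₁, ?_⟩
  · exact ENNReal.add_ne_top.2 ⟨ENNReal.div_ne_top (by finiteness) hq₀',
      ENNReal.div_ne_top (by finiteness) ht⟩
  refine ⟨min_le_left _ _, hq₁.le, hqh, ?_, ?_, fun u hu => one_add_mul_sqrt_le_mul hqa hbd hqβ hu,
    ?_⟩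
  · exact (ENNReal.div_mul_cancel hq₀' hqT).symm.trans_le (mul_le_mul' le_self_add le_rfl)
  · rw [← hM₃, ← mul_add]
    exact mul_le_mul' le_rfl hqe
  · rw [mul_assoc]
    refine mul_add_mul_le_mul_of_le (by rwa [← hLdef]) ?_ hβ le_self_add hqt
    exact (ENNReal.div_mul_cancel ht ht').symm.trans_le (mul_le_mul' le_add_self le_rfl)

lemma RateConditions.eventually_exists (ha : a < 1) (had : a ^ (1 / 2 : ℝ) + 2 * d < 1)
    (hd : d ≠ 0) (hbd : 2 * b ^ (1 / 2 : ℝ) ≤ d * k₀ ^ (1 / 2 : ℝ)) (hb : b ≠ ⊤) (hB : B ≠ ⊤)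
    (hk₀ : k₀ ≠ 0) (hk₀' : k₀ ≠ ⊤) (hh : h < 1) (hM : M ≠ ⊤) (hp : p ≠ 0) (hR : R ≠ ⊤) :
    ∀ᶠ N in atTop, ∃ M₃ A β q, A ≠ ⊤ ∧ q < 1 ∧ RateConditions a b B h M k₀ p R M₃ A β q N := by
  obtain ⟨e, he₀, he', he⟩ := exists_add_lt_one hh
  obtain ⟨t, ht₀, ht', ht⟩ :=
    exists_add_lt_one (ENNReal.sub_lt_self ENNReal.one_ne_top one_ne_zero hp)
  have hM₃ : 2 * (2 * M + 1) / e ≠ ⊤ := ENNReal.div_ne_top (by finiteness) he₀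
  have hL : k₀ + 2 * (b * (1 - a)⁻¹) + B ≠ ⊤ :=
    add_two_mul_mul_inv_add_ne_top ha hb hB hk₀'
  have ht₃ : t / 3 ≠ 0 := (ENNReal.div_pos ht₀ (by simp)).ne'
  filter_upwards [(tendsto_mul_pow_two_mul_mul hh hM₃ hL).eventually
    (gt_mem_nhds (pos_iff_ne_zero.2 ht₃))] with N hN
  exact ⟨_, RateConditions.exists_of_block_length ha had hd hbd hb hB hk₀ hk₀' hh hR he
    (ENNReal.div_mul_cancel he₀ he') ht₃ (ENNReal.div_ne_top ht' (by simp))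
    (by rwa [ENNReal.mul_div_cancel (by simp) (by simp)]) hN.le⟩

end RateConditions

/-! ### The general theorem -/

section General

open Filter Topology

variable {X Ω : Type*} [MeasurableSpace X] [MeasurableSpace Ω] {P : Measure Ω}
  [IsProbabilityMeasure P] {Φ : X × Ω → X} {ψ ψinv : X → X → Ω → Ω} {V : X → ℝ≥0∞}
  {W : X → Ω → ℝ≥0∞} {a b B c C h : ℝ≥0∞} {δ γ₁ C₂ γ₂ ζ K : ℝ} {𝒢 : Set (X → ℝ)}

lemma exists_forall_lyapunovCoupling_goodPair (hB : IsBinding Φ ψ ψinv) (hV : Measurable V)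
    (hL : HasDrift (stepKernel P Φ) V a b) (ha : a ≤ 1) (hW : IsNoiseCost P ψ ψinv V W c C δ)
    (hA5 : StaysBound P Φ ψ ψinv V W C₂ γ₂ ζ) (hC₂ : 0 ≤ C₂) (hγ₂ : 0 < γ₂) (hζ : 0 < ζ)
    (hK : 0 < K) (hoff : 1 + 2 * b ≤ B) (hmul : B * h + 2 * b ≤ B) (hh : h ≤ 1)
    (hh₁ : ENNReal.ofReal (Real.exp (-(γ₂ / (2 * ζ)) / δ)) ≤ h ^ 4)
    (hh₂ : ENNReal.ofReal (Real.exp (-γ₂ / 4)) ≤ h ^ 4) :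
    ∃ M : ℝ≥0∞, M ≠ ⊤ ∧ ∀ N : ℕ,
      (∀ i : ℕ, N ≤ i → ζ * Real.log (1 + K * Real.exp (γ₂ / (2 * ζ) * i)) / γ₂ < i) →
      LyapunovCoupling P Φ ψ V a b B h M (GoodPair Φ ψ V W K (γ₂ / (2 * ζ)) N) := by
  refine ⟨1 + ENNReal.ofReal (C₂ * (1 + K) ^ ζ) + (C / ENNReal.ofReal K) ^ (1 / δ) * (1 + c),
    ?_, fun N hN => ?_⟩
  · have hCK : (C / ENNReal.ofReal K) ^ (1 / δ) ≠ ⊤ :=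
      ENNReal.rpow_ne_top_of_nonneg (one_div_nonneg.2 hW.exponent_pos.le)
        (ENNReal.div_ne_top hW.growth_const_ne_top (ENNReal.ofReal_pos.2 hK).ne')
    have hc := hW.integral_const_ne_top
    finiteness
  have hh₀ : h ≠ 0 := by
    rintro rfl
    simp [Real.exp_pos, not_le.2] at hh₂
  refine ⟨hB.measurable_rds, hB.measurable_bind, hV, hL, ha, le_self_add.trans hoff, ?_, ?_, hh₀,
    hh, fun i x y hG => ?_⟩
  · exact (le_mul_of_one_le_left' one_le_two).trans (le_add_self.trans hoff)
  · calc h * (2 * b + B) = B * h + h * (2 * b) := by ring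
      _ ≤ B * h + 2 * b := add_le_add le_rfl (mul_le_of_le_one_left' hh)
      _ ≤ B := hmul
  · rw [pow_mul]
    exact exists_isSubcoupling_of_goodPair hB hW hA5 hC₂ hγ₂ hζ hK hh₁ hh₂ hN hG

lemma LyapunovCoupling.enorm_iterMean_sub_le_of_exp_bound {M M₅ : ℝ≥0∞} {G : ℕ → X → X → Prop}
    (S : LyapunovCoupling P Φ ψ V a b B h M G) (hM₅ : M₅ * h + M ≤ M₅) {CK : ℝ}
    (hγ₁ : ENNReal.ofReal (Real.exp (-γ₁)) ≤ h ^ 2) {g : X → ℝ} (hg : Measurable g)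
    (hgb : ∀ z, |g z| ≤ 1) {i n : ℕ} {x y : X} {k₀ : ℝ≥0∞}
    (hCK : |∫ z, g z ∂((QInf (noiseLaw P) Φ ψ x y).map fun q => q.1 n) -
      ∫ z, g z ∂((QInf (noiseLaw P) Φ ψ x y).map fun q => q.2 n)| ≤ CK * Real.exp (-γ₁ * n))
    (hG : G i x y) (hxy : V x + V y ≤ k₀) :
    ‖iterMean (stepKernel P Φ) g n x - iterMean (stepKernel P Φ) g n y‖ₑ ≤
      (ENNReal.ofReal CK + 4 * M₅ * (k₀ + B)) * (h ^ (2 * n) + h ^ (2 * i)) := by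
  have hexp : ENNReal.ofReal (CK * Real.exp (-γ₁ * n)) ≤ ENNReal.ofReal CK * h ^ (2 * n) := by
    rw [ENNReal.ofReal_mul' (Real.exp_pos _).le, mul_comm (-γ₁), Real.exp_nat_mul,
      ENNReal.ofReal_pow (Real.exp_pos _).le, pow_mul]
    exact mul_le_mul' le_rfl (pow_le_pow_left' hγ₁ n)
  calc _ ≤ _ := S.enorm_iterMean_sub_le_of_QInf hM₅ hg hgb hG hCK
    _ ≤ ENNReal.ofReal CK * h ^ (2 * n) + 4 * (M₅ * h ^ (2 * i) * (k₀ + B)) :=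
      add_le_add hexp (mul_le_mul' le_rfl (mul_le_mul' le_rfl (add_le_add hxy le_rfl)))
    _ = ENNReal.ofReal CK * h ^ (2 * n) + 4 * M₅ * (k₀ + B) * h ^ (2 * i) := by ring
    _ ≤ (ENNReal.ofReal CK + 4 * M₅ * (k₀ + B)) * h ^ (2 * n) +
        (ENNReal.ofReal CK + 4 * M₅ * (k₀ + B)) * h ^ (2 * i) :=
      add_le_add (mul_le_mul' le_self_add le_rfl) (mul_le_mul' le_add_self le_rfl)
    _ = _ := (mul_add _ _ _).symm

lemma exists_step_rate (ha : a < 1) (hδ : 0 < δ) (hγ₁ : 0 < γ₁) (hγ₂ : 0 < γ₂) (hζ : 0 < ζ) :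
    ∃ h : ℝ≥0∞, h < 1 ∧ a < h ^ 2 ∧ ENNReal.ofReal (Real.exp (-γ₁)) ≤ h ^ 2 ∧
      ENNReal.ofReal (Real.exp (-(γ₂ / (2 * ζ)) / δ)) ≤ h ^ 4 ∧
      ENNReal.ofReal (Real.exp (-γ₂ / 4)) ≤ h ^ 4 := by
  have hexp {u : ℝ} (hu : u < 0) : ENNReal.ofReal (Real.exp u) < 1 := by simpa using hu
  have hε : -(γ₂ / (2 * ζ)) / δ < 0 := div_neg_of_neg_of_pos (neg_lt_zero.2 (by positivity)) hδ
  obtain ⟨r, har, hr⟩ := exists_between ha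
  obtain ⟨h, hh, hhr, hh₁, hh₂, hh₃⟩ := (eventually_mem_nhdsWithin.and
    ((eventually_nhdsLT_one_le_pow hr 2).and
    ((eventually_nhdsLT_one_le_pow (hexp (neg_lt_zero.2 hγ₁)) 2).and
    ((eventually_nhdsLT_one_le_pow (hexp hε) 4).and
    (eventually_nhdsLT_one_le_pow (hexp (u := -γ₂ / 4) (by linarith)) 4))))).exists
  exact ⟨h, hh, har.trans_le hhr, hh₁, hh₂, hh₃⟩

theorem exists_forall_isContracted [Nonempty Ω] (hB : IsBinding Φ ψ ψinv) (hV : Measurable V)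
    (hL : HasDrift (stepKernel P Φ) V a b) (ha : a < 1) (hb : b ≠ ⊤)
    (hW : IsNoiseCost P ψ ψinv V W c C δ) (h𝒢 : ∀ g ∈ 𝒢, Measurable g ∧ ∀ z, |g z| ≤ 1)
    (hγ₁ : 0 < γ₁) (hA3 : BindsExponentially P Φ ψ V 𝒢 γ₁)
    (hA4 : HasInverseDensityBound P Φ ψ V) (hC₂ : 0 ≤ C₂) (hγ₂ : 0 < γ₂) (hζ : 0 < ζ)
    (hA5 : StaysBound P Φ ψ ψinv V W C₂ γ₂ ζ) :
    ∃ A β q : ℝ≥0∞, A ≠ ⊤ ∧ β ≤ 1 ∧ q < 1 ∧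
      ∀ g ∈ 𝒢, ∀ n, IsContracted (stepKernel P Φ) V g A β q n := by
  obtain ⟨h, hh, hah, hhγ₁, hhε, hhγ₂⟩ := exists_step_rate ha hW.exponent_pos hγ₁ hγ₂ hζ
  obtain ⟨d₂, hd₂, hd₂T, had⟩ := exists_add_lt_one (ENNReal.rpow_lt_one ha (one_half_pos (α := ℝ)))
  have hdd : 2 * (d₂ / 2) = d₂ := ENNReal.mul_div_cancel two_ne_zero ENNReal.ofNat_ne_top
  have hd : d₂ / 2 ≠ 0 := (ENNReal.half_pos hd₂).ne'
  obtain ⟨K, hK₁, hdrift, hbd⟩ := exists_level_mul_add_le hb hah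
    (ENNReal.pow_ne_top (ne_top_of_lt hh)) hd
    (ENNReal.div_ne_top hd₂T two_ne_zero)
  have hK : 0 < K := one_pos.trans_le hK₁
  obtain ⟨B, hBT, hoff, hmul⟩ := exists_mul_add_le_self hh (m := 2 * b) (by finiteness)
  obtain ⟨M, hM, S⟩ := exists_forall_lyapunovCoupling_goodPair hB hV hL ha.le hW hA5 hC₂ hγ₂ hζ hK
    hoff hmul hh.le hhε hhγ₂
  obtain ⟨M₅, hM₅T, -, hM₅⟩ := exists_mul_add_le_self hh hM
  obtain ⟨CK, hCK⟩ := hA3 K hK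
  obtain ⟨p, hp, hblock⟩ := eventually_exists_isSubcoupling_goodPair hB hV hL ha hb hW hA4 hK
    (ε := γ₂ / (2 * ζ)) (by positivity)
  obtain ⟨N, hNblock, hNtime, hN, M₃, A, β, q, hA, hq, hr⟩ := (hblock.and
    ((eventually_forall_ge_atTop.2 (eventually_mul_log_div_lt hK hγ₂ hζ)).and
    ((eventually_ge_atTop 2).and (RateConditions.eventually_exists ha (hdd.symm ▸ had) hd hbd hb
      hBT (ENNReal.ofReal_pos.2 hK).ne' ENNReal.ofReal_ne_top hh hM hp
      (R := ENNReal.ofReal CK + 4 * M₅ * (ENNReal.ofReal K + B)) (by finiteness))))).exists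
  refine ⟨A, β, q, hA, hr.weight_le_one, hq, fun g hg => ?_⟩
  obtain ⟨hgm, hgb⟩ := h𝒢 g hg
  exact (S N hNtime).isContracted hr hgm hgb (ENNReal.one_le_ofReal.2 hK₁) hdrift
    (fun i n x y hG hxy => (S N hNtime).enorm_iterMean_sub_le_of_exp_bound hM₅ hhγ₁ hgm hgb
      (hCK x y hxy n g hg) hG hxy) hN hNblock

lemma IsContracted.enorm_iterMean_sub_le {κ : Kernel X X} {g : X → ℝ} {A β q : ℝ≥0∞} {n : ℕ}
    (hc : IsContracted κ V g A β q n) (hβ : β ≤ 1) (x y : X) :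
    ‖iterMean κ g n x - iterMean κ g n y‖ₑ ≤ 3 * A * q ^ n * (1 + V x + V y) :=
  calc _ ≤ A * q ^ n * (1 + 1 * ((1 + V x) + (1 + V y))) :=
        (hc x y).trans (mul_le_mul' le_rfl (add_le_add le_rfl (mul_le_mul' hβ
          (add_le_add (sqrt_le_one_add _) (sqrt_le_one_add _)))))
    _ = A * q ^ n * (3 + 1 * (V x + V y)) := by ring
    _ ≤ A * q ^ n * (3 + 3 * (V x + V y)) :=
        mul_le_mul' le_rfl (add_le_add le_rfl (mul_le_mul' (by norm_num) le_rfl))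
    _ = _ := by ring

theorem stmt0_general [Nonempty Ω] (hB : IsBinding Φ ψ ψinv) (hV : Measurable V)
    (hL : HasDrift (stepKernel P Φ) V a b) (ha : a < 1) (hb : b ≠ ⊤)
    (hW : IsNoiseCost P ψ ψinv V W c C δ) (h𝒢 : ∀ g ∈ 𝒢, Measurable g ∧ ∀ z, |g z| ≤ 1)
    (hγ₁ : 0 < γ₁) (hA3 : BindsExponentially P Φ ψ V 𝒢 γ₁)
    (hA4 : HasInverseDensityBound P Φ ψ V) (hC₂ : 0 ≤ C₂) (hγ₂ : 0 < γ₂) (hζ : 0 < ζ)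
    (hA5 : StaysBound P Φ ψ ψinv V W C₂ γ₂ ζ) :
    ∃ γ D : ℝ, 0 < γ ∧ 0 < D ∧ ∀ g ∈ 𝒢, ∀ (n : ℕ) (x y : X),
      ‖∫ z, g z ∂((noiseLaw P).map fun ω => traj Φ x ω n) -
        ∫ z, g z ∂((noiseLaw P).map fun ω => traj Φ y ω n)‖ₑ ≤
          ENNReal.ofReal (D * Real.exp (-γ * n)) * (1 + V x + V y) := by
  obtain ⟨A, β, q, hA, hβ, hq, hcon⟩ := exists_forall_isContracted hB hV hL ha hb hW h𝒢 hγ₁ hA3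
    hA4 hC₂ hγ₂ hζ hA5
  obtain ⟨γ, D, hγ, hD, hAq⟩ := exists_mul_pow_le_ofReal_exp (A := 3 * A) (by finiteness) hq
  refine ⟨γ, D, hγ, hD, fun g hg n x y => ?_⟩
  rw [map_traj_noiseLaw hB.measurable_rds, map_traj_noiseLaw hB.measurable_rds]
  exact ((hcon g hg n).enorm_iterMean_sub_le hβ x y).trans (mul_le_mul' (hAq n) le_rfl)

end General

/-! ### Bounded Lipschitz test functions -/

section BoundedLipschitz

variable {X Ω : Type*} [MeasurableSpace Ω] {P : Measure Ω}
  [IsProbabilityMeasure P] {Φ : X × Ω → X} {ψ : X → X → Ω → Ω} {V : X → ℝ≥0∞} {g : X → ℝ}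

lemma eq_noiseLaw {Q : Measure (ℕ → Ω)}
    (hQ : ∀ (s : Finset ℕ) (t : ℕ → Set Ω), (∀ i ∈ s, MeasurableSet (t i)) →
      Q {ω | ∀ i ∈ s, ω i ∈ t i} = ∏ i ∈ s, P (t i)) : Q = noiseLaw P :=
  Measure.eq_infinitePi _ fun s t ht => hQ s t fun i _ => ht i

lemma hasDrift_stepKernel_of_lt_top [MeasurableSpace X] {a b : ℝ≥0∞} (hΦ : Measurable Φ)
    (hV : Measurable V) (ha : a ≠ 0) (h : ∀ x, V x < ⊤ → ∫⁻ ω, V (Φ (x, ω)) ∂P ≤ a * V x + b) :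
    HasDrift (stepKernel P Φ) V a b := by
  intro x
  rw [lintegral_stepKernel hΦ hV]
  rcases eq_or_ne (V x) ⊤ with hx | hx
  · simp [hx, ENNReal.mul_top ha]
  · exact h x hx.lt_top

lemma hasInverseDensityBound_of_real [Nonempty Ω]
    (h : ∀ K : ℝ, 0 < K → ∃ (c₁ c₂ : ℝ) (Γ : X → X → Set (ℕ → Ω)), 0 < c₁ ∧ 0 < c₂ ∧
      ∀ x y : X, V x + V y ≤ ENNReal.ofReal K →
        MeasurableSet (Γ x y) ∧ ENNReal.ofReal c₁ < noiseLaw P (Γ x y) ∧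
        ∀ n : ℕ, (∫⁻ f in (fun ω : ℕ → Ω => fun i : Fin n => ω (i : ℕ)) '' Γ x y,
            (Dfin P Φ ψ n x y f)⁻¹ ^ 2 ∂(Measure.pi fun _ : Fin n => P)) <
          ENNReal.ofReal c₂) : HasInverseDensityBound P Φ ψ V := by
  intro K hK
  obtain ⟨c₁, c₂, Γ, hc₁, -, hΓ⟩ := h K hK
  refine ⟨ENNReal.ofReal c₁, ENNReal.ofReal c₂, (ENNReal.ofReal_pos.2 hc₁).ne',
    ENNReal.ofReal_ne_top, fun x y hxy => ?_⟩
  obtain ⟨-, hc₁Γ, hc₂Γ⟩ := hΓ x y hxy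
  exact ⟨Γ x y, hc₁Γ.le, fun n => (hc₂Γ n).le⟩

/-- The unit ball of the bounded Lipschitz norm `‖g‖_L`, over which the dual Lipschitz norm of a
signed measure is a supremum. The sup norm and the Lipschitz constant are represented by upper
bounds `cb` and `cl`. -/
def lipBall (X : Type*) [PseudoMetricSpace X] : Set (X → ℝ) :=
  {g | ∃ (cb : ℝ) (cl : ℝ≥0), (∀ z, |g z| ≤ cb) ∧ LipschitzWith cl g ∧ cb + cl ≤ 1}

lemma neg_mem_lipBall [PseudoMetricSpace X] (hg : g ∈ lipBall X) :
    (fun z => -g z) ∈ lipBall X := by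
  obtain ⟨cb, cl, hb, hl, h⟩ := hg
  exact ⟨cb, cl, fun z => (abs_neg (g z)).trans_le (hb z), hl.neg, h⟩

lemma abs_le_one_of_mem_lipBall [PseudoMetricSpace X] (hg : g ∈ lipBall X) (z : X) :
    |g z| ≤ 1 := by
  obtain ⟨cb, cl, hb, -, h⟩ := hg
  exact (hb z).trans (le_of_add_le_of_nonneg_left h cl.2)

lemma measurable_of_mem_lipBall [PseudoMetricSpace X] [MeasurableSpace X] [OpensMeasurableSpace X]
    (hg : g ∈ lipBall X) : Measurable g := by
  obtain ⟨cb, cl, -, hl, -⟩ := hg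
  exact hl.continuous.measurable

lemma mem_lipBall_of_ne [MetricSpace X] {x y : X} (hxy : x ≠ y) {cb cl : ℝ}
    (hb : ∀ z, |g z| ≤ cb) (hl : ∀ z w, |g z - g w| ≤ cl * dist z w) (h : cb + cl ≤ 1) :
    g ∈ lipBall X := by
  have hcl : 0 ≤ cl :=
    nonneg_of_mul_nonneg_left ((abs_nonneg _).trans (hl x y)) (dist_pos.2 hxy)
  exact ⟨cb, ⟨cl, hcl⟩, hb, LipschitzWith.of_dist_le_mul hl, h⟩

lemma bindsExponentially_lipBall [PseudoMetricSpace X] [MeasurableSpace X] {γ : ℝ}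
    (h : ∀ K : ℝ, 0 < K → ∃ CK : ℝ, ∀ x y : X, V x + V y ≤ ENNReal.ofReal K →
      ∀ n : ℕ, ∀ (g : X → ℝ) (cb cl : ℝ), (∀ z, |g z| ≤ cb) →
        (∀ z w, |g z - g w| ≤ cl * dist z w) → cb + cl ≤ 1 →
        (∫ z, g z ∂((QInf (noiseLaw P) Φ ψ x y).map fun q => q.1 n)) -
            (∫ z, g z ∂((QInf (noiseLaw P) Φ ψ x y).map fun q => q.2 n)) ≤
          CK * Real.exp (-γ * n)) :
    BindsExponentially P Φ ψ V (lipBall X) γ := by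
  intro K hK
  obtain ⟨CK, hCK⟩ := h K hK
  have hle (x y : X) (hxy : V x + V y ≤ ENNReal.ofReal K) (n : ℕ) (g : X → ℝ)
      (hg : g ∈ lipBall X) : _ ≤ CK * Real.exp (-γ * n) :=
    let ⟨cb, cl, hb, hl, hs⟩ := hg
    hCK x y hxy n g cb cl hb hl.dist_le_mul hs
  refine ⟨CK, fun x y hxy n g hg => abs_sub_le_iff.2 ⟨hle x y hxy n g hg, ?_⟩⟩
  have hneg := hle x y hxy n _ (neg_mem_lipBall hg)
  rw [integral_neg, integral_neg] at hneg
  linarith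

end BoundedLipschitz

/-- Under Assumptions A1–A5 on the random dynamical system `Φ` with
binding maps `ψ_{x,y}`, there are `γ, C > 0` such that for all `x, y` and all `n > 0`,
`‖Pⁿ_x − Pⁿ_y‖_L ≤ C (1 + V(x) + V(y)) e^{−γn}` in the dual Lipschitz norm (expressed by
testing against all `g` with `sup|g| + Lip(g) ≤ 1`). -/
theorem stmt0
    -- X is a Polish space
    {X Ω : Type*} [MetricSpace X] [CompleteSpace X] [TopologicalSpace.SeparableSpace X]
    [MeasurableSpace X] [BorelSpace X]
    [MeasurableSpace Ω] [Nonempty Ω]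
    -- one-step noise space and infinite product noise
    (P : Measure Ω) [IsProbabilityMeasure P]
    (Pinf : Measure (ℕ → Ω)) [IsProbabilityMeasure Pinf]
    (hPinf : ∀ (s : Finset ℕ) (t : ℕ → Set Ω), (∀ i ∈ s, MeasurableSet (t i)) →
      Pinf {ω | ∀ i ∈ s, ω i ∈ t i} = ∏ i ∈ s, P (t i))
    -- the RDS
    (Φ : X × Ω → X) (hΦ : Measurable Φ)
    -- the binding maps, their inverses, and equivalence of the transported noise
    (ψ ψinv : X → X → Ω → Ω)
    (hψ : Measurable fun p : (X × X) × Ω => ψ p.1.1 p.1.2 p.2)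
    (hψinv : Measurable fun p : (X × X) × Ω => ψinv p.1.1 p.1.2 p.2)
    (hinv₁ : ∀ x y ω, ψinv x y (ψ x y ω) = ω)
    (hinv₂ : ∀ x y ω, ψ x y (ψinv x y ω) = ω)
    (hequiv : ∀ x y, P.map (ψ x y) ≪ P ∧ P ≪ P.map (ψ x y))
    -- Assumption A1 (Lyapunov structure)
    (V : X → ℝ≥0∞) (hV : Measurable V)
    (a b : ℝ≥0∞) (ha0 : 0 < a) (ha1 : a < 1) (hb0 : 0 < b) (hbfin : b < ⊤)
    (hLyap : ∀ x, V x < ⊤ → ∫⁻ ω, V (Φ (x, ω)) ∂P ≤ a * V x + b)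
    (hfin : ∀ x, P {ω | V (Φ (x, ω)) < ⊤} = 1)
    -- Assumption A2 (the function W)
    (W : X → Ω → ℝ≥0∞) (hW : Measurable fun p : X × Ω => W p.1 p.2)
    (hessInf : ∀ x, essInf (fun ω => W x ω) P = V x)
    (c : ℝ) (hc : 0 < c)
    (hWint : ∀ x, ∫⁻ ω, W x ω ∂P ≤ ENNReal.ofReal c * V x)
    (CW δ : ℝ) (hCW : 0 < CW) (hδ : 1 ≤ δ)
    (hWψ : ∀ x y ω, W x ω + W y (ψ x y ω) ≤
      ENNReal.ofReal CW * (1 + V y + W x ω) ^ δ)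
    (hWψinv : ∀ x y ω, W x (ψinv x y ω) + W y ω ≤
      ENNReal.ofReal CW * (1 + V x + W y ω) ^ δ)
    -- Assumption A3 (exponential binding, in the dual Lipschitz norm)
    (γ₁ : ℝ) (hγ₁ : 0 < γ₁)
    (hA3 : ∀ K : ℝ, 0 < K → ∃ CK : ℝ, ∀ x y : X, V x + V y ≤ ENNReal.ofReal K →
      ∀ n : ℕ, ∀ (g : X → ℝ) (cb cl : ℝ), (∀ z, |g z| ≤ cb) →
        (∀ z w, |g z - g w| ≤ cl * dist z w) → cb + cl ≤ 1 →
        (∫ z, g z ∂((QInf Pinf Φ ψ x y).map fun q : (ℕ → X) × (ℕ → X) => q.1 n)) -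
            (∫ z, g z ∂((QInf Pinf Φ ψ x y).map fun q : (ℕ → X) × (ℕ → X) => q.2 n)) ≤
          CK * Real.exp (-γ₁ * n))
    -- Assumption A4 (second-moment control of the inverse densities)
    (hA4 : ∀ K : ℝ, 0 < K → ∃ (c₁ c₂ : ℝ) (Γ : X → X → Set (ℕ → Ω)), 0 < c₁ ∧ 0 < c₂ ∧
      ∀ x y : X, V x + V y ≤ ENNReal.ofReal K →
        MeasurableSet (Γ x y) ∧ ENNReal.ofReal c₁ < Pinf (Γ x y) ∧
        ∀ n : ℕ, (∫⁻ f in (fun ω : ℕ → Ω => fun i : Fin n => ω (i : ℕ)) '' Γ x y,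
            (Dfin P Φ ψ n x y f)⁻¹ ^ 2 ∂(Measure.pi fun _ : Fin n => P)) <
          ENNReal.ofReal c₂)
    -- Assumption A5 (coupled trajectories tend to stay coupled)
    (C₂ γ₂ ζ : ℝ) (hC₂ : 0 < C₂) (hγ₂ : 0 < γ₂) (hζ : 0 < ζ)
    (hA5 : ∀ K : ℝ, 0 < K → ∀ x₀ y₀ : X, V x₀ + V y₀ ≤ ENNReal.ofReal K →
      ∀ (n : ℕ) (x y : X), (x, y) ∈ QSetIter Φ ψ W (ENNReal.ofReal K) x₀ y₀ n →
        ζ * Real.log (1 + K) / γ₂ < (n : ℝ) →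
        (∫⁻ ω in {ω | W x (ψinv x y ω) + W y ω ≤ ENNReal.ofReal K},
            ENNReal.ofReal ((1 - ((P.map (ψ x y)).rnDeriv P ω).toReal) ^ 2) ∂P) ≤
          ENNReal.ofReal (C₂ * Real.exp (-γ₂ * n) * (1 + K) ^ ζ)) :
    -- Conclusion: exponential closeness of transition probabilities in the
    -- dual Lipschitz norm
    ∃ γ C : ℝ, 0 < γ ∧ 0 < C ∧
      ∀ x y : X, ∀ n : ℕ, 0 < n →
        ∀ (g : X → ℝ) (cb cl : ℝ), (∀ z, |g z| ≤ cb) →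
          (∀ z w, |g z - g w| ≤ cl * dist z w) → cb + cl ≤ 1 →
          ENNReal.ofReal ((∫ z, g z ∂(Pinf.map fun ω => traj Φ x ω n)) -
              ∫ z, g z ∂(Pinf.map fun ω => traj Φ y ω n)) ≤
            ENNReal.ofReal (C * Real.exp (-γ * n)) * (1 + V x + V y) := by
  obtain rfl : Pinf = noiseLaw P := eq_noiseLaw hPinf
  obtain ⟨γ, C, hγ, hC, hclose⟩ := stmt0_general
    ⟨hΦ, hψ, hψinv, hinv₁⟩ hV (hasDrift_stepKernel_of_lt_top hΦ hV ha0.ne' hLyap) ha1 hbfin.ne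
    ⟨hW, hWint, hWψ, hWψinv, ENNReal.ofReal_ne_top, ENNReal.ofReal_ne_top, one_pos.trans_le hδ⟩
    (fun g hg => ⟨measurable_of_mem_lipBall hg, abs_le_one_of_mem_lipBall hg⟩) hγ₁
    (bindsExponentially_lipBall hA3) (hasInverseDensityBound_of_real hA4) hC₂.le hγ₂ hζ hA5
  refine ⟨γ, C, hγ, hC, fun x y n _ g cb cl hb hl hcl => ?_⟩
  rcases eq_or_ne x y with rfl | hxy
  · simp
  · exact (Real.ofReal_le_enorm _).trans (hclose g (mem_lipBall_of_ne hxy hb hl hcl) n x y)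

end
end

section
/- Suppose the random dynamical system Φ with binding maps ψ_{x,y} satisfies Assumption A1 (Lyapunov function V with constants a ∈ (0,1), b > 0) and Assumption A4 (second-moment control of the inverse densities on large sets Γᴷ_{x,y}). Then for every K > 0 there exists a constant C_K > 0 such that, whenever V(x) + V(y) ≤ K, one has ∫_{Ωⁿ} min(1, Dⁿ_{x,y}(ω)) Pⁿ(dω) ≥ C_K for every n ≥ 0; equivalently, the total mass ‖Q^∞_{x,y}‖ of the coupled part of the asymptotic coupling is at least C_K. -/
/-!
A positive function `f` whose inverse has a bounded `r`-th moment cannot have a small integral: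
Hölder's inequality applied to `1 = f ^ (r / (r + 1)) * f⁻¹ ^ (r / (r + 1))` gives
`μ univ ^ (r + 1) ≤ (∫ f) ^ r * ∫ f⁻¹ ^ r`. Apply this to `f = min 1 Dⁿ` on the projection of `Γ`
to the first `n` coordinates. As `(min 1 Dⁿ)⁻¹ ^ r ≤ 1 + (Dⁿ)⁻¹ ^ r`, the moment is at most
`1 + c₂`, and the projection has outer measure at least `P^∞(Γ) > c₁`, so the integral is at least
`(c₁ ^ (r + 1) / (1 + c₂)) ^ r⁻¹`, whatever `n`, `x`, `y`. Assumption A4 is the case `r = 2`.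
-/

open MeasureTheory
open scoped ENNReal NNReal

noncomputable section

section ReverseHolder

variable {α : Type*} [MeasurableSpace α] {μ : Measure α} {r : ℝ}

theorem lintegral_mul_rpow_le (hr : 0 < r) {f g : α → ℝ≥0∞} (hf : AEMeasurable f μ)
    (hg : AEMeasurable g μ) :
    (∫⁻ x, (f x * g x) ^ (r / (r + 1)) ∂μ) ^ (r + 1) ≤
      (∫⁻ x, f x ∂μ) ^ r * ∫⁻ x, g x ^ r ∂μ := by
  have hr1 : 0 < r + 1 := by positivity
  have hsum : r / (r + 1) + 1 / (r + 1) = 1 := by field_simp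
  have hfg : ∀ x, (f x * g x) ^ (r / (r + 1)) =
      f x ^ (r / (r + 1)) * (g x ^ r) ^ (1 / (r + 1)) := fun x => by
    rw [ENNReal.mul_rpow_of_nonneg _ _ (by positivity), ← ENNReal.rpow_mul, mul_one_div]
  calc (∫⁻ x, (f x * g x) ^ (r / (r + 1)) ∂μ) ^ (r + 1)
      ≤ ((∫⁻ x, f x ∂μ) ^ (r / (r + 1)) * (∫⁻ x, g x ^ r ∂μ) ^ (1 / (r + 1))) ^ (r + 1) := by
        simp only [hfg]
        gcongr
        exact ENNReal.lintegral_mul_norm_pow_le hf (hg.pow_const r) (by positivity)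
          (by positivity) hsum
    _ = (∫⁻ x, f x ∂μ) ^ r * ∫⁻ x, g x ^ r ∂μ := by
        rw [ENNReal.mul_rpow_of_nonneg _ _ hr1.le, ← ENNReal.rpow_mul, ← ENNReal.rpow_mul,
          div_mul_cancel₀ _ hr1.ne', div_mul_cancel₀ _ hr1.ne', ENNReal.rpow_one]

theorem measure_univ_rpow_div_lintegral_inv_rpow_le (hr : 0 < r) {f : α → ℝ≥0∞}
    (hf : AEMeasurable f μ) :
    μ Set.univ ^ (r + 1) / ∫⁻ x, (f x)⁻¹ ^ r ∂μ ≤ (∫⁻ x, f x ∂μ) ^ r := by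
  by_cases hI : ∫⁻ x, (f x)⁻¹ ^ r ∂μ = ⊤
  · simp [hI]
  by_cases hJ : ∫⁻ x, f x ∂μ = ⊤
  · simp [hJ, hr]
  have hone : ∀ᵐ x ∂μ, (f x * (f x)⁻¹) ^ (r / (r + 1)) = 1 := by
    filter_upwards [ae_lt_top' (hf.inv.pow_const r) hI, ae_lt_top' hf hJ] with x hx0 hxtop
    have hx : f x ≠ 0 := fun h => by simp [h, hr] at hx0
    rw [ENNReal.mul_inv_cancel hx hxtop.ne, ENNReal.one_rpow]
  refine ENNReal.div_le_of_le_mul ?_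
  calc μ Set.univ ^ (r + 1)
      = (∫⁻ x, (f x * (f x)⁻¹) ^ (r / (r + 1)) ∂μ) ^ (r + 1) := by
        rw [lintegral_congr_ae hone, lintegral_one]
    _ ≤ (∫⁻ x, f x ∂μ) ^ r * ∫⁻ x, (f x)⁻¹ ^ r ∂μ := lintegral_mul_rpow_le hr hf hf.inv

theorem inv_min_one_rpow_le (r : ℝ) (d : ℝ≥0∞) : (min 1 d)⁻¹ ^ r ≤ 1 + d⁻¹ ^ r := by
  rcases le_total 1 d with h | h <;> simp [h]

theorem measure_rpow_div_le_lintegral_min_one_rpow (hr : 0 < r) {D : α → ℝ≥0∞}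
    (hD : AEMeasurable D μ) (s : Set α) :
    μ s ^ (r + 1) / (μ s + ∫⁻ x in s, (D x)⁻¹ ^ r ∂μ) ≤ (∫⁻ x, min 1 (D x) ∂μ) ^ r := by
  have hmoment : ∫⁻ x in s, (min 1 (D x))⁻¹ ^ r ∂μ ≤ μ s + ∫⁻ x in s, (D x)⁻¹ ^ r ∂μ := by
    calc ∫⁻ x in s, (min 1 (D x))⁻¹ ^ r ∂μ ≤ ∫⁻ x in s, (1 + (D x)⁻¹ ^ r) ∂μ :=
          lintegral_mono fun x => inv_min_one_rpow_le r (D x)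
      _ = μ s + ∫⁻ x in s, (D x)⁻¹ ^ r ∂μ := by
          rw [lintegral_add_left measurable_const, setLIntegral_one]
  calc μ s ^ (r + 1) / (μ s + ∫⁻ x in s, (D x)⁻¹ ^ r ∂μ)
      ≤ μ.restrict s Set.univ ^ (r + 1) / ∫⁻ x in s, (min 1 (D x))⁻¹ ^ r ∂μ := by
        rw [Measure.restrict_apply_univ]
        gcongr
    _ ≤ (∫⁻ x in s, min 1 (D x) ∂μ) ^ r :=
        measure_univ_rpow_div_lintegral_inv_rpow_le hr (aemeasurable_const.min hD.restrict)
    _ ≤ (∫⁻ x, min 1 (D x) ∂μ) ^ r := by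
        gcongr
        exact Measure.restrict_le_self

theorem div_rpow_inv_le_lintegral_min_one [IsProbabilityMeasure μ] (hr : 0 < r) {D : α → ℝ≥0∞}
    (hD : AEMeasurable D μ) {s : Set α} {c₁ c₂ : ℝ≥0∞} (hs : c₁ ≤ μ s)
    (hI : ∫⁻ x in s, (D x)⁻¹ ^ r ∂μ ≤ c₂) :
    (c₁ ^ (r + 1) / (1 + c₂)) ^ r⁻¹ ≤ ∫⁻ x, min 1 (D x) ∂μ := by
  rw [ENNReal.rpow_inv_le_iff hr]
  calc c₁ ^ (r + 1) / (1 + c₂)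
      ≤ μ s ^ (r + 1) / (μ s + ∫⁻ x in s, (D x)⁻¹ ^ r ∂μ) := by
        gcongr
        exact prob_le_one
    _ ≤ (∫⁻ x, min 1 (D x) ∂μ) ^ r := measure_rpow_div_le_lintegral_min_one_rpow hr hD s

end ReverseHolder

theorem infinitePi_map_comp_of_injective {ι κ : Type*} [Fintype κ] {E : ι → Type*}
    [∀ i, MeasurableSpace (E i)] (μ : ∀ i, Measure (E i)) [∀ i, IsProbabilityMeasure (μ i)]
    {e : κ → ι} (he : e.Injective) :
    (Measure.infinitePi μ).map (fun ω k => ω (e k)) = Measure.pi fun k => μ (e k) := by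
  have hindep : ProbabilityTheory.iIndepFun (fun i ω => ω i) (Measure.infinitePi μ) :=
    ProbabilityTheory.iIndepFun_infinitePi fun _ => measurable_id
  have hmap := (ProbabilityTheory.iIndepFun_iff_map_fun_eq_pi_map
    fun k => (measurable_pi_apply (e k)).aemeasurable).1 (hindep.precomp he)
  simpa only [Measure.infinitePi_map_eval] using hmap

theorem infinitePi_le_pi_image_prefix {Ω : Type*} [MeasurableSpace Ω] (P : Measure Ω)
    [IsProbabilityMeasure P] (Γ : Set (ℕ → Ω)) (n : ℕ) :
    Measure.infinitePi (fun _ : ℕ => P) Γ ≤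
      Measure.pi (fun _ : Fin n => P) ((fun ω : ℕ → Ω => fun i : Fin n => ω (i : ℕ)) '' Γ) := by
  rw [← infinitePi_map_comp_of_injective (fun _ : ℕ => P) Fin.val_injective]
  exact Measure.le_map_apply_image (Measurable.aemeasurable (by fun_prop)) Γ

theorem stmt4_general {X Ω : Type*} [MeasurableSpace Ω] (P : Measure Ω) [IsProbabilityMeasure P]
    {D : X → X → (n : ℕ) → (Fin n → Ω) → ℝ≥0∞}
    (hD : ∀ x y n, AEMeasurable (D x y n) (Measure.pi fun _ : Fin n => P))
    (W : X → X → ℝ≥0∞) {r : ℝ} (hr : 0 < r)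
    (hA4 : ∀ K : ℝ, 0 < K → ∃ (c₁ c₂ : ℝ) (Γ : X → X → Set (ℕ → Ω)), 0 < c₁ ∧
      ∀ x y : X, W x y ≤ ENNReal.ofReal K →
        ENNReal.ofReal c₁ ≤ Measure.infinitePi (fun _ : ℕ => P) (Γ x y) ∧
        ∀ n : ℕ, ∫⁻ f in (fun ω : ℕ → Ω => fun i : Fin n => ω (i : ℕ)) '' Γ x y,
            (D x y n f)⁻¹ ^ r ∂(Measure.pi fun _ : Fin n => P) ≤ ENNReal.ofReal c₂) :
    ∀ K : ℝ, 0 < K → ∃ CK : ℝ, 0 < CK ∧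
      ∀ x y : X, W x y ≤ ENNReal.ofReal K →
        (∀ n : ℕ, ENNReal.ofReal CK ≤
          ∫⁻ f, min 1 (D x y n f) ∂(Measure.pi fun _ : Fin n => P)) ∧
        ENNReal.ofReal CK ≤
          ⨅ n : ℕ, ∫⁻ f, min 1 (D x y n f) ∂(Measure.pi fun _ : Fin n => P) := by
  intro K hK
  obtain ⟨c₁, c₂, Γ, hc₁, hΓ⟩ := hA4 K hK
  set C : ℝ≥0∞ := (ENNReal.ofReal c₁ ^ (r + 1) / (1 + ENNReal.ofReal c₂)) ^ r⁻¹
  have hC_pos : 0 < C.toReal := by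
    have hr1 : 0 < r + 1 := by positivity
    refine ENNReal.toReal_pos ?_ ?_ <;> simp [C, ENNReal.div_eq_top, hr, hr.le, hr1, hc₁]
  refine ⟨C.toReal, hC_pos, fun x y hxy => ?_⟩
  obtain ⟨hmass, hmoment⟩ := hΓ x y hxy
  have hle (n : ℕ) : ENNReal.ofReal C.toReal ≤
      ∫⁻ f, min 1 (D x y n f) ∂(Measure.pi fun _ : Fin n => P) :=
    ENNReal.ofReal_toReal_le.trans <| div_rpow_inv_le_lintegral_min_one hr (hD x y n)
      (hmass.trans (infinitePi_le_pi_image_prefix P (Γ x y) n)) (hmoment n)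
  exact ⟨hle, le_iInf hle⟩

/-- Under the Lyapunov assumption A1 and Assumption A4 (second-moment
control of the inverse densities `Dⁿ_{x,y}` on sets `Γᴷ_{x,y}` of large `P^∞`-measure),
for every `K > 0` there is `C_K > 0` such that whenever `V(x) + V(y) ≤ K`,
`∫ min(1, Dⁿ_{x,y}) dPⁿ ≥ C_K` for every `n`; equivalently the total mass
`‖Q^∞_{x,y}‖ = inf_n ∫ min(1, Dⁿ_{x,y}) dPⁿ` (a decreasing limit) is at least `C_K`. -/
theorem stmt4
    {X Ω : Type*} [MeasurableSpace X] [MeasurableSpace Ω] [Nonempty Ω]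
    (P : Measure Ω) [IsProbabilityMeasure P]
    (Pinf : Measure (ℕ → Ω)) [IsProbabilityMeasure Pinf]
    (hPinf : ∀ (s : Finset ℕ) (t : ℕ → Set Ω), (∀ i ∈ s, MeasurableSet (t i)) →
      Pinf {ω | ∀ i ∈ s, ω i ∈ t i} = ∏ i ∈ s, P (t i))
    (Φ : X × Ω → X) (hΦ : Measurable Φ)
    (ψ ψinv : X → X → Ω → Ω)
    (hψ : Measurable fun p : (X × X) × Ω => ψ p.1.1 p.1.2 p.2)
    (hψinv : Measurable fun p : (X × X) × Ω => ψinv p.1.1 p.1.2 p.2)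
    (hinv₁ : ∀ x y ω, ψinv x y (ψ x y ω) = ω)
    (hinv₂ : ∀ x y ω, ψ x y (ψinv x y ω) = ω)
    (hequiv : ∀ x y, P.map (ψ x y) ≪ P ∧ P ≪ P.map (ψ x y))
    -- Assumption A1 (Lyapunov structure)
    (V : X → ℝ≥0∞) (hV : Measurable V)
    (a b : ℝ≥0∞) (ha0 : 0 < a) (ha1 : a < 1) (hb0 : 0 < b) (hbfin : b < ⊤)
    (hLyap : ∀ x, V x < ⊤ → ∫⁻ ω, V (Φ (x, ω)) ∂P ≤ a * V x + b)
    (hfin : ∀ x, P {ω | V (Φ (x, ω)) < ⊤} = 1)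
    -- Assumption A4 (second-moment control of the inverse densities)
    (hA4 : ∀ K : ℝ, 0 < K → ∃ (c₁ c₂ : ℝ) (Γ : X → X → Set (ℕ → Ω)), 0 < c₁ ∧ 0 < c₂ ∧
      ∀ x y : X, V x + V y ≤ ENNReal.ofReal K →
        MeasurableSet (Γ x y) ∧ ENNReal.ofReal c₁ < Pinf (Γ x y) ∧
        ∀ n : ℕ, (∫⁻ f in (fun ω : ℕ → Ω => fun i : Fin n => ω (i : ℕ)) '' Γ x y,
            (Dfin P Φ ψ n x y f)⁻¹ ^ 2 ∂(Measure.pi fun _ : Fin n => P)) <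
          ENNReal.ofReal c₂) :
    ∀ K : ℝ, 0 < K → ∃ CK : ℝ, 0 < CK ∧
      ∀ x y : X, V x + V y ≤ ENNReal.ofReal K →
        (∀ n : ℕ, ENNReal.ofReal CK ≤
          ∫⁻ f, min 1 (Dfin P Φ ψ n x y f) ∂(Measure.pi fun _ : Fin n => P)) ∧
        ENNReal.ofReal CK ≤
          ⨅ n : ℕ, ∫⁻ f, min 1 (Dfin P Φ ψ n x y f) ∂(Measure.pi fun _ : Fin n => P) := by
  obtain rfl := Measure.eq_infinitePi (fun _ => P) fun s t ht => hPinf s t fun i _ => ht i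
  refine stmt4_general P (D := fun x y n => Dfin P Φ ψ n x y)
    (fun x y n => (Measure.measurable_rnDeriv _ _).aemeasurable) (fun x y => V x + V y) two_pos
    fun K hK => ?_
  obtain ⟨c₁, c₂, Γ, hc₁, -, hΓ⟩ := hA4 K hK
  exact ⟨c₁, c₂, Γ, hc₁, fun x y hxy => ⟨(hΓ x y hxy).2.1.le, fun n => by
    simpa only [ENNReal.rpow_two] using ((hΓ x y hxy).2.2 n).le⟩⟩

end
end

section
/- Let μ₁ and μ₂ be two equivalent probability measures on a measurable space X with μ₂ = D·μ₁ for a measurable density D : X → (0,∞). If a measurable set A ⊆ X satisfies μ₁(A) ≥ 1 − ε₁ and ∫_A (1 − D(x))² μ₁(dx) ≤ ε₂, then the lattice infimum of the two measures satisfies (μ₁ ⊓ μ₂)(A) ≥ 1 − ε₁ − ε₂^{1/2}. -/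
open MeasureTheory
open scoped ENNReal NNReal

/-!
For arbitrary densities, `f = (f - g)⁺ + min f g`, and the measure with density `min f g` lies below
the infimum of the measures with densities `f` and `g`. Taking `f = 1` and `g = D`, the mass of `A`
exceeds `(μ₁ ⊓ D·μ₁) A` by at most `∫_A (1 - D)⁺ dμ₁`, and the Cauchy–Schwarz inequality bounds this
integral by `√(∫_A (1 - D)² dμ₁)` because `μ₁ A ≤ 1`.
-/

section

variable {X : Type*} [MeasurableSpace X]

theorem withDensity_inf_le_inf (μ : Measure X) (f g : X → ℝ≥0∞) :
    μ.withDensity (f ⊓ g) ≤ μ.withDensity f ⊓ μ.withDensity g :=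
  le_inf (withDensity_mono (ae_of_all _ fun _ => inf_le_left))
    (withDensity_mono (ae_of_all _ fun _ => inf_le_right))

theorem setLIntegral_le_inf_withDensity_add_setLIntegral_tsub (μ : Measure X) {f g : X → ℝ≥0∞}
    (hf : AEMeasurable f μ) (hg : AEMeasurable g μ) (A : Set X) :
    ∫⁻ x in A, f x ∂μ ≤
      (μ.withDensity f ⊓ μ.withDensity g) A + ∫⁻ x in A, (f x - g x) ∂μ :=
  calc ∫⁻ x in A, f x ∂μ
      = ∫⁻ x in A, ((f ⊓ g) x + (f x - g x)) ∂μ :=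
        lintegral_congr fun _ => ((add_comm _ _).trans tsub_add_min).symm
    _ = ∫⁻ x in A, (f ⊓ g) x ∂μ + ∫⁻ x in A, (f x - g x) ∂μ :=
        lintegral_add_right' _ (hf.sub hg).restrict
    _ ≤ (μ.withDensity f ⊓ μ.withDensity g) A + ∫⁻ x in A, (f x - g x) ∂μ := by
        gcongr
        exact (withDensity_apply_le _ A).trans (withDensity_inf_le_inf μ f g A)

theorem measure_le_inf_withDensity_add_setLIntegral_one_tsub (μ : Measure X) {D : X → ℝ≥0∞}
    (hD : AEMeasurable D μ) (A : Set X) :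
    μ A ≤ (μ ⊓ μ.withDensity D) A + ∫⁻ x in A, (1 - D x) ∂μ := by
  simpa only [Pi.one_apply, setLIntegral_one, withDensity_one] using
    setLIntegral_le_inf_withDensity_add_setLIntegral_tsub μ
      (aemeasurable_const : AEMeasurable 1 μ) hD A

theorem lintegral_le_lintegral_sq_rpow_mul_measure_univ_rpow (μ : Measure X) {f : X → ℝ≥0∞}
    (hf : AEMeasurable f μ) :
    ∫⁻ x, f x ∂μ ≤ (∫⁻ x, f x ^ 2 ∂μ) ^ (1 / 2 : ℝ) * μ Set.univ ^ (1 / 2 : ℝ) := by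
  simpa using ENNReal.lintegral_mul_le_Lp_mul_Lq μ Real.HolderConjugate.two_two hf
    (aemeasurable_const (b := (1 : ℝ≥0∞)))

end

theorem ofReal_sqrt_eq_rpow (x : ℝ) :
    ENNReal.ofReal √x = ENNReal.ofReal x ^ (1 / 2 : ℝ) := by
  rw [Real.sqrt, ENNReal.ofReal_coe_nnreal, NNReal.sqrt_eq_rpow,
    ENNReal.coe_rpow_of_nonneg _ one_half_pos.le, ENNReal.ofReal]

theorem one_tsub_sq_le_ofReal_sq (d : ℝ≥0∞) :
    (1 - d) ^ 2 ≤ ENNReal.ofReal ((1 - d.toReal) ^ 2) := by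
  rcases le_total 1 d with hd | hd
  · simp [tsub_eq_zero_of_le hd]
  · have hd_top : d ≠ ∞ := ne_top_of_le_ne_top ENNReal.one_ne_top hd
    have hd_real : 0 ≤ 1 - d.toReal :=
      sub_nonneg.2 (ENNReal.toReal_le_of_le_ofReal one_pos.le (by simpa))
    rw [ENNReal.ofReal_pow hd_real, ENNReal.ofReal_sub _ ENNReal.toReal_nonneg, ENNReal.ofReal_one,
      ENNReal.ofReal_toReal hd_top]

-- Subtraction in `ℝ≥0∞` is truncated: `h2` only bounds the positive part of `1 - D`.
theorem stmt6_general {X : Type*} [MeasurableSpace X] (μ : Measure X)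
    {D : X → ℝ≥0∞} (hD : AEMeasurable D μ) {A : Set X} (hA : μ A ≤ 1) {ε₁ ε₂ : ℝ}
    (h1 : ENNReal.ofReal (1 - ε₁) ≤ μ A)
    (h2 : ∫⁻ x in A, (1 - D x) ^ 2 ∂μ ≤ ENNReal.ofReal ε₂) :
    ENNReal.ofReal (1 - ε₁ - √ε₂) ≤ (μ ⊓ μ.withDensity D) A := by
  have deficit_le : ∫⁻ x in A, (1 - D x) ∂μ ≤ ENNReal.ofReal √ε₂ :=
    calc ∫⁻ x in A, (1 - D x) ∂μ
        ≤ (∫⁻ x in A, (1 - D x) ^ 2 ∂μ) ^ (1 / 2 : ℝ) * μ A ^ (1 / 2 : ℝ) := by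
          simpa only [Measure.restrict_apply_univ] using
            lintegral_le_lintegral_sq_rpow_mul_measure_univ_rpow (μ.restrict A)
              (hD.restrict.const_sub 1)
      _ ≤ ENNReal.ofReal ε₂ ^ (1 / 2 : ℝ) * 1 := by
          gcongr
          exact ENNReal.rpow_le_one hA one_half_pos.le
      _ = ENNReal.ofReal √ε₂ := by rw [mul_one, ofReal_sqrt_eq_rpow]
  rw [ENNReal.ofReal_sub _ (Real.sqrt_nonneg _), tsub_le_iff_right]
  calc ENNReal.ofReal (1 - ε₁)
      ≤ μ A := h1
    _ ≤ (μ ⊓ μ.withDensity D) A + ∫⁻ x in A, (1 - D x) ∂μ :=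
        measure_le_inf_withDensity_add_setLIntegral_one_tsub μ hD A
    _ ≤ (μ ⊓ μ.withDensity D) A + ENNReal.ofReal √ε₂ := by gcongr

/-- If `μ₂ = D·μ₁` with positive finite density `D`, `μ₁ A ≥ 1 - ε₁` and
`∫_A (1 - D)² dμ₁ ≤ ε₂`, then `(μ₁ ⊓ μ₂) A ≥ 1 - ε₁ - √ε₂`. -/
theorem stmt6 {X : Type*} [MeasurableSpace X]
    (μ₁ : Measure X) [IsProbabilityMeasure μ₁]
    (D : X → ℝ≥0∞) (hD : Measurable D) (hDpos : ∀ x, 0 < D x) (hDfin : ∀ x, D x < ⊤)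
    [IsProbabilityMeasure (μ₁.withDensity D)]
    (A : Set X) (hA : MeasurableSet A) (ε₁ ε₂ : ℝ)
    (h1 : ENNReal.ofReal (1 - ε₁) ≤ μ₁ A)
    (h2 : ∫⁻ x in A, ENNReal.ofReal ((1 - (D x).toReal) ^ 2) ∂μ₁ ≤ ENNReal.ofReal ε₂) :
    ENNReal.ofReal (1 - ε₁ - Real.sqrt ε₂) ≤ (μ₁ ⊓ μ₁.withDensity D) A :=
  stmt6_general μ₁ hD.aemeasurable prob_le_one h1
    ((lintegral_mono fun x => one_tsub_sq_le_ofReal_sq (D x)).trans h2)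
end
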